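/- arXiv:2111.11792 — 14 statements merged into one kernel-verified Lean document; each statement's English description precedes it below -/
import Mathlib

section
/- Let d and ζ be real numbers with 0 < ζ < 1 and max(2ζ−2, −2ζ) < d < 0. Then the series ∑_{n≥0} D_n(d)·(ψ(n + d/2 + ζ) + ψ(n + d/2 − ζ)) converges absolutely, and one half of its sum equals −ζ·(sin(πζ)/sin(πd/2))·Γ(d/2 − ζ)·Γ(d/2 + ζ)/Γ(1 + d). (This is the derivative with respect to ζ of the regularized sphere free energy of a generalized free field.) -/
open Real

/-- The analytically continued degeneracy of spherical harmonics on `S^d`. -/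
noncomputable def sphereDegeneracy (d : ℝ) (n : ℕ) : ℝ :=
  Real.Gamma ((n : ℝ) + d - 1) * (2 * (n : ℝ) + d - 1) /
    (Real.Gamma ((n : ℝ) + 1) * Real.Gamma d)

/-- The digamma function `ψ = Γ′/Γ`. -/
noncomputable def digamma (x : ℝ) : ℝ := deriv Real.Gamma x / Real.Gamma x

open Filter Topology

/-- coefficients of `(1-t)^(-d)` -/
noncomputable def bc (d : ℝ) : ℕ → ℝ
  | 0 => 1
  | (n+1) => ((n:ℝ) + d) / ((n:ℝ) + 1) * bc d n

lemma bc_bound (d : ℝ) (h1 : -1 < d) (h2 : d < 0) (n : ℕ) :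
    |bc d n| ≤ 4 * ((n:ℝ) + 1) ^ (d - 1) := by
  induction n with
  | zero => simp [bc]
  | succ n ih =>
    rcases Nat.eq_zero_or_pos n with rfl | hn
    · simp only [bc]
      have h : (2:ℝ) ^ (-2:ℝ) ≤ (2:ℝ) ^ (d - 1) :=
        Real.rpow_le_rpow_of_exponent_le (by norm_num) (by linarith)
      have h3 : (2:ℝ) ^ (-2:ℝ) = 1/4 := by
        rw [Real.rpow_neg (by norm_num)]; norm_num
      have : |d| ≤ 1 := by rw [abs_le]; constructor <;> linarith
      norm_num
      norm_num at h h3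
      linarith
    · have hn' : (1:ℝ) ≤ n := by exact_mod_cast hn
      simp only [bc]
      rw [abs_mul, abs_of_nonneg (div_nonneg (by linarith) (by linarith))]
      push_cast
      have hB := one_add_mul_self_le_rpow_one_add (s := -(1/((n:ℝ)+2))) (p := 1 - d)
        (by rw [neg_le_neg_iff, div_le_one (by linarith)]; linarith) (by linarith)
      have e : 1 + -(1/((n:ℝ)+2)) = (n+1)/(n+2) := by field_simp; ring
      rw [e, Real.div_rpow (by linarith) (by linarith)] at hB
      have hp1 : 0 < ((n:ℝ)+1)^(1-d) := Real.rpow_pos_of_pos (by linarith) _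
      have hp2 : 0 < ((n:ℝ)+2)^(1-d) := Real.rpow_pos_of_pos (by linarith) _
      have e1 : ((n:ℝ)+1)^(d-1) = 1/((n:ℝ)+1)^(1-d) := by
        rw [← neg_sub, Real.rpow_neg (by linarith), one_div]
      have e2 : ((n:ℝ)+1+1)^(d-1) = 1/((n:ℝ)+2)^(1-d) := by
        rw [← neg_sub, Real.rpow_neg (by linarith), one_div]; norm_num [add_assoc]
      rw [e1] at ih
      rw [e2]
      have h5 : (n + d) / ((n:ℝ)+1) ≤ ((n:ℝ)+1)^(1-d) / ((n:ℝ)+2)^(1-d) := by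
        refine le_trans ?_ hB
        have : (n + d) / ((n:ℝ)+1) = 1 - (1-d)/(n+1) := by field_simp; ring
        rw [this]
        have : (1-d)/((n:ℝ)+2) ≤ (1-d)/((n:ℝ)+1) :=
          div_le_div_of_nonneg_left (by linarith) (by linarith) (by linarith)
        have e6 : (1-d) * -(1/((n:ℝ)+2)) = - ((1-d)/((n:ℝ)+2)) := by ring
        rw [e6]; linarith
      calc (n + d) / ((n:ℝ)+1) * |bc d n|
          ≤ ((n:ℝ)+1)^(1-d) / ((n:ℝ)+2)^(1-d) * (4 * (1/((n:ℝ)+1)^(1-d))) :=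
            mul_le_mul h5 ih (abs_nonneg _) (by positivity)
        _ = _ := by field_simp

lemma bc_choose (d : ℝ) (n : ℕ) : Ring.choose (d + n - 1) n = bc d n := by
  rw [← Ring.multichoose_eq]
  have key : ∀ n : ℕ, ((ascPochhammer ℝ n).eval d) = (n.factorial : ℝ) * bc d n := by
    intro n
    induction n with
    | zero => simp [bc]
    | succ n ih =>
      rw [ascPochhammer_succ_eval, ih, Nat.factorial_succ, bc]
      push_cast
      field_simp
      ring
  have h := Ring.factorial_nsmul_multichoose_eq_ascPochhammer d n
  rw [Polynomial.ascPochhammer_smeval_eq_eval, key, nsmul_eq_mul] at h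
  exact mul_left_cancel₀ (by exact_mod_cast n.factorial_ne_zero) h

lemma bc_hasSum (d t : ℝ) (h0 : 0 < t) (h1 : t < 1) :
    HasSum (fun n => bc d n * t ^ n) ((1 - t) ^ (-d)) := by
  have h := (Real.one_div_one_sub_rpow_hasFPowerSeriesOnBall_zero d).hasSum (y := t)
    (by simp [Metric.mem_eball, edist_eq_enorm_sub, enorm_eq_nnnorm]; rw [← NNReal.coe_lt_coe]; simp [abs_of_pos h0, h1])
  simp only [FormalMultilinearSeries.ofScalars_apply_eq, bc_choose, zero_add, smul_eq_mul] at h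
  rw [Real.rpow_neg (by linarith), ← one_div]
  exact h

lemma digamma_succ (x : ℝ) (hx : ∀ m : ℕ, x ≠ -m) : digamma (x + 1) = digamma x + 1 / x := by
  have hx0 : x ≠ 0 := by simpa using hx 0
  have hG := Real.Gamma_ne_zero hx
  have hd : deriv Real.Gamma (x + 1) = Real.Gamma x + x * deriv Real.Gamma x := by
    have h1 : HasDerivAt (fun y => Real.Gamma (y + 1)) (deriv Real.Gamma (x+1)) x := by
      apply HasDerivAt.comp_add_const
      refine (Real.differentiableAt_Gamma ?_).hasDerivAt
      intro m h
      apply hx (m+1); push_cast; linarith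
    have h2 : HasDerivAt (fun y => y * Real.Gamma y) (1 * Real.Gamma x + x * deriv Real.Gamma x) x :=
      (hasDerivAt_id x).mul (Real.differentiableAt_Gamma hx).hasDerivAt
    have h3 : (fun y => Real.Gamma (y + 1)) =ᶠ[𝓝 x] (fun y => y * Real.Gamma y) := by
      filter_upwards [isOpen_ne.mem_nhds hx0] with y hy
      exact Real.Gamma_add_one hy
    have := (h1.congr_of_eventuallyEq h3.symm).unique h2
    rw [this]; ring
  unfold digamma
  rw [hd, Real.Gamma_add_one hx0]
  field_simp
  ring

lemma degen_zero (d : ℝ) (h1 : -1 < d) (h2 : d < 0) : sphereDegeneracy d 0 = 1 := by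
  unfold sphereDegeneracy
  have hG : Real.Gamma d ≠ 0 := by
    refine Real.Gamma_ne_zero (fun m => ?_)
    rcases m with _ | m
    · simpa using h2.ne
    · push_cast; intro h; have : (0:ℝ) ≤ m := m.cast_nonneg
      linarith
  have h := Real.Gamma_add_one (s := d - 1) (by linarith)
  rw [sub_add_cancel] at h
  simp
  rw [mul_comm, ← h, div_self hG]

lemma degen_succ (d : ℝ) (h1 : -1 < d) (h2 : d < 0) (n : ℕ) :
    sphereDegeneracy d (n+1) = (2 * n + 1 + d) / (n + 1) * bc d n := by
  have hG : Real.Gamma d ≠ 0 := by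
    refine Real.Gamma_ne_zero (fun m => ?_)
    rcases m with _ | m
    · simpa using h2.ne
    · push_cast; intro h; have : (0:ℝ) ≤ m := m.cast_nonneg
      linarith
  have key : ∀ n : ℕ, Real.Gamma (n + d) = n.factorial * Real.Gamma d * bc d n := by
    intro n
    induction n with
    | zero => simp [bc]
    | succ n ih =>
      have hne : (n:ℝ) + d ≠ 0 := by
        rcases n with _ | n
        · simpa using h2.ne
        · push_cast; have : (0:ℝ) ≤ n := n.cast_nonneg
          linarith
      have : ((n+1 : ℕ):ℝ) + d = n + d + 1 := by push_cast; ring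
      rw [this, Real.Gamma_add_one hne, ih, bc, Nat.factorial_succ]
      push_cast
      field_simp
  unfold sphereDegeneracy
  have e : ((n+1 : ℕ):ℝ) + d - 1 = n + d := by push_cast; ring
  rw [e, key, Real.Gamma_nat_eq_factorial, Nat.factorial_succ]
  have := n.factorial_ne_zero
  push_cast
  field_simp
  ring

lemma summable_aux (p : ℝ) (hp : p < -1) : Summable (fun n : ℕ => ((n:ℝ) + 1) ^ p) := by
  have := (summable_nat_add_iff 1).mpr (Real.summable_nat_rpow.mpr hp)
  simpa using this

lemma bc_summable (d : ℝ) (h1 : -1 < d) (h2 : d < 0) : Summable (fun n => |bc d n|) :=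
  Summable.of_nonneg_of_le (fun _ => abs_nonneg _) (bc_bound d h1 h2)
    ((summable_aux (d-1) (by linarith)).mul_left 4)

lemma tendsto_aux (p : ℝ) (hp : p < 0) :
    Tendsto (fun n : ℕ => ((n:ℝ) + 1) ^ p) atTop (𝓝 0) := by
  have h := tendsto_rpow_neg_atTop (y := -p) (by linarith)
  rw [neg_neg] at h
  exact h.comp (tendsto_atTop_add_const_right _ _ tendsto_natCast_atTop_atTop)

lemma bc_sum_zero (d : ℝ) (h1 : -1 < d) (h2 : d < 0) : HasSum (bc d) 0 := by
  rw [(bc_summable d h1 h2).of_abs.hasSum_iff_tendsto_nat]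
  have key : ∀ N : ℕ, ∑ i ∈ Finset.range N, bc d i = N / d * bc d N := by
    intro N
    induction N with
    | zero => simp
    | succ n ih =>
      rw [Finset.sum_range_succ, ih, bc]
      have := h2.ne
      push_cast
      field_simp
  simp_rw [key]
  refine squeeze_zero_norm (a := fun N : ℕ => 4 / |d| * ((N:ℝ)+1)^d) (fun N => ?_) ?_
  · rw [Real.norm_eq_abs, abs_mul, abs_div, Nat.abs_cast]
    have hb := bc_bound d h1 h2 N
    have hN : (0:ℝ) ≤ N := N.cast_nonneg
    have e : ((N:ℝ)+1)^d = (N+1) * ((N:ℝ)+1)^(d-1) := by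
      rw [Real.rpow_sub_one (by linarith)]; field_simp
    have hp : 0 < ((N:ℝ)+1)^(d-1) := Real.rpow_pos_of_pos (by linarith) _
    rw [e]
    have : 0 < |d| := abs_pos.mpr h2.ne
    calc N / |d| * |bc d N| ≤ (N+1) / |d| * (4 * ((N:ℝ)+1)^(d-1)) := by gcongr; linarith
      _ = _ := by ring
  · simpa using (tendsto_aux d h2).const_mul (4/|d|)

/-- closed form of the partial fraction sum -/
noncomputable def TT (d a : ℝ) : ℝ := Real.Gamma a * Real.Gamma (1 - d) / Real.Gamma (a + 1 - d)

lemma beta_real (a b : ℝ) (ha : 0 < a) (hb : 0 < b) :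
    ∫ t in Set.Ioo (0:ℝ) 1, t ^ (a-1) * (1 - t) ^ (b - 1)
      = Real.Gamma a * Real.Gamma b / Real.Gamma (a + b) := by
  have h := Complex.betaIntegral_eq_Gamma_mul_div a b (by simpa) (by simpa)
  rw [Complex.betaIntegral, intervalIntegral.integral_of_le zero_le_one,
    MeasureTheory.integral_Ioc_eq_integral_Ioo] at h
  have h2 : ∫ (t : ℝ) in Set.Ioo (0:ℝ) 1, (t:ℂ) ^ ((a:ℂ) - 1) * (1 - (t:ℂ)) ^ ((b:ℂ) - 1)
      = ∫ (t : ℝ) in Set.Ioo (0:ℝ) 1, ((t ^ (a-1) * (1 - t) ^ (b - 1) : ℝ) : ℂ) := by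
    refine MeasureTheory.setIntegral_congr_fun measurableSet_Ioo (fun t ht => ?_)
    simp only [Complex.ofReal_mul]
    rw [Complex.ofReal_cpow ht.1.le, Complex.ofReal_cpow (by linarith [ht.2])]
    push_cast
    rfl
  rw [h2, integral_complex_ofReal, ← Complex.ofReal_add, Complex.Gamma_ofReal, Complex.Gamma_ofReal, Complex.Gamma_ofReal] at h
  exact_mod_cast h

lemma sum_pos (d a : ℝ) (h1 : -1 < d) (h2 : d < 0) (ha : 0 < a) :
    HasSum (fun n : ℕ => bc d n / (n + a)) (TT d a) := by
  have hint : ∀ n : ℕ, MeasureTheory.IntegrableOn (fun t : ℝ => t ^ ((n:ℝ) + a - 1)) (Set.Ioo 0 1) := by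
    intro n
    have hn : (0:ℝ) ≤ n := n.cast_nonneg
    have := intervalIntegral.intervalIntegrable_rpow' (a := 0) (b := 1) (r := (n:ℝ) + a - 1) (by linarith)
    rw [intervalIntegrable_iff_integrableOn_Ioo_of_le zero_le_one] at this
    exact this
  have hval : ∀ n : ℕ, ∫ t in Set.Ioo (0:ℝ) 1, t ^ ((n:ℝ) + a - 1) = 1 / (n + a) := by
    intro n
    have hn : (0:ℝ) ≤ n := n.cast_nonneg
    rw [← MeasureTheory.integral_Ioc_eq_integral_Ioo, ← intervalIntegral.integral_of_le zero_le_one,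
      integral_rpow (Or.inl (by linarith))]
    rw [sub_add_cancel, Real.one_rpow, Real.zero_rpow (by linarith), sub_zero]
  have hs := MeasureTheory.hasSum_integral_of_summable_integral_norm
    (μ := MeasureTheory.volume.restrict (Set.Ioo (0:ℝ) 1))
    (F := fun (n:ℕ) (t:ℝ) => bc d n * t ^ ((n:ℝ) + a - 1))
    (fun n => (hint n).const_mul _) ?_
  · simp only [MeasureTheory.integral_const_mul, hval] at hs
    have e1 : (fun n : ℕ => bc d n / ((n:ℝ) + a)) = fun n : ℕ => bc d n * (1 / ((n:ℝ) + a)) := by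
      funext n; ring
    have e2 : TT d a = ∫ t in Set.Ioo (0:ℝ) 1, ∑' n : ℕ, bc d n * t ^ ((n:ℝ) + a - 1) := by
      have := beta_real a (1-d) ha (by linarith)
      unfold TT
      rw [add_sub_assoc, ← this]
      refine MeasureTheory.setIntegral_congr_fun measurableSet_Ioo (fun t ht => ?_)
      have h := (bc_hasSum d t ht.1 ht.2).mul_left (t ^ (a-1))
      simp only [sub_sub_cancel_left]
      rw [← h.tsum_eq]
      refine tsum_congr (fun n => ?_)
      rw [add_sub_assoc, Real.rpow_add ht.1, Real.rpow_natCast]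
      ring
    rw [e1, e2]
    exact hs
  · refine Summable.of_nonneg_of_le (f := fun n => 1 / a * |bc d n|) (fun n => by positivity) (fun n => ?_)
      ((bc_summable d h1 h2).mul_left _)
    have : ∫ t in Set.Ioo (0:ℝ) 1, ‖bc d n * t ^ ((n:ℝ) + a - 1)‖
        = ∫ t in Set.Ioo (0:ℝ) 1, |bc d n| * t ^ ((n:ℝ) + a - 1) := by
      refine MeasureTheory.setIntegral_congr_fun measurableSet_Ioo (fun t ht => ?_)
      rw [norm_mul, Real.norm_eq_abs, Real.norm_eq_abs, abs_of_nonneg (Real.rpow_nonneg ht.1.le _)]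
    rw [this, MeasureTheory.integral_const_mul, hval, mul_comm]
    have hn : (0:ℝ) ≤ n := n.cast_nonneg
    gcongr
    linarith

lemma sum_neg (d a : ℝ) (h1 : -1 < d) (h2 : d < 0) (ha : -1 < a) (ha0 : a < 0) :
    HasSum (fun n : ℕ => bc d n / (n + a)) (TT d a) := by
  have hU := sum_pos d (a+1) h1 h2 (by linarith)
  have hc := bc_sum_zero d h1 h2
  have hne : ∀ n : ℕ, (n:ℝ) + a ≠ 0 := by
    intro n
    rcases n with _ | n
    · simpa using ha0.ne
    · have : (0:ℝ) ≤ n := n.cast_nonneg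
      push_cast; linarith
  -- sum of c_n n/(n+a)
  have hA : HasSum (fun n : ℕ => bc d n * (n / (n + a))) (0 - (1 + a - d) * TT d (a+1)) := by
    rw [← hasSum_nat_add_iff' 1]
    simp only [Finset.range_one, Finset.sum_singleton, Nat.cast_zero, zero_div, mul_zero, sub_zero]
    convert hc.sub (hU.mul_left (1 + a - d)) using 1
    ext n
    have := hne (n+1)
    push_cast at this ⊢
    rw [bc]
    have h3 : (n:ℝ) + (a + 1) ≠ 0 := by intro h; apply this; linarith
    have h4 : (n:ℝ) + 1 ≠ 0 := by positivity
    field_simp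
    ring
  have hB := (hc.sub hA).div_const a
  have hT : (0 - (0 - (1 + a - d) * TT d (a+1))) / a = TT d a := by
    unfold TT
    rw [Real.Gamma_add_one ha0.ne]
    have : a + 1 + 1 - d = (a + 1 - d) + 1 := by ring
    rw [this, Real.Gamma_add_one (by linarith)]
    have h5 : Real.Gamma (a + 1 - d) ≠ 0 := (Real.Gamma_pos_of_pos (by linarith)).ne'
    have h6 : a + 1 - d ≠ 0 := by linarith
    have := ha0.ne
    field_simp
    ring
  rw [hT] at hB
  have e : (fun n : ℕ => bc d n / ((n:ℝ) + a))
      = fun n : ℕ => (bc d n - bc d n * ((n:ℝ) / (n + a))) / a := by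
    funext n
    have := hne n
    have := ha0.ne
    field_simp
    ring
  rw [e]
  exact hB

/-- logarithmic growth from increments of size `K/(n+1)` -/
lemma growth (u : ℕ → ℝ) (K ε : ℝ) (hK : 0 ≤ K) (hε : 0 < ε)
    (hu : ∀ n : ℕ, |u (n+1) - u n| ≤ K / (n + 1)) :
    ∃ C : ℝ, 0 ≤ C ∧ ∀ n : ℕ, |u n| ≤ C * ((n:ℝ) + 1) ^ ε := by
  have h1 : ∀ n : ℕ, |u n| ≤ |u 0| + K * (harmonic n : ℝ) := by
    intro n
    induction n with
    | zero => simp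
    | succ n ih =>
      have h := hu n
      rw [harmonic_succ]
      push_cast
      have h2 : |u (n+1)| ≤ |u n| + |u (n+1) - u n| := by
        have := abs_add_le (u n) (u (n+1) - u n)
        rwa [add_sub_cancel] at this
      rw [div_eq_mul_inv] at h
      rw [mul_add]
      linarith
  refine ⟨|u 0| + K * (1 + 1/ε), by positivity, fun n => (h1 n).trans ?_⟩
  have hn : (0:ℝ) ≤ n := n.cast_nonneg
  have h3 := harmonic_le_one_add_log n
  have h4 : Real.log n ≤ (n:ℝ)^ε / ε := Real.log_le_rpow_div hn hε
  have h5 : (n:ℝ)^ε ≤ ((n:ℝ)+1)^ε := Real.rpow_le_rpow hn (by linarith) hε.le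
  have h6 : 1 ≤ ((n:ℝ)+1)^ε := Real.one_le_rpow (by linarith) hε.le
  have h7 : (n:ℝ)^ε / ε ≤ ((n:ℝ)+1)^ε / ε := by gcongr
  have h8 : (harmonic n : ℝ) ≤ (1 + 1/ε) * ((n:ℝ)+1)^ε := by
    have : (1 + 1/ε) * ((n:ℝ)+1)^ε = ((n:ℝ)+1)^ε + ((n:ℝ)+1)^ε / ε := by ring
    linarith
  have h9 := mul_le_mul_of_nonneg_left h8 hK
  have h10 := mul_le_mul_of_nonneg_left h6 (abs_nonneg (u 0))
  calc _ ≤ |u 0| * ((n:ℝ)+1)^ε + K * ((1 + 1/ε) * ((n:ℝ)+1)^ε) := by linarith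
    _ = _ := by ring

lemma inv_bound (a : ℝ) (ha : -1 < a) (ha0 : a ≠ 0) :
    ∃ K : ℝ, 0 ≤ K ∧ ∀ n : ℕ, |1 / ((n:ℝ) + a)| ≤ K / (n + 1) := by
  refine ⟨1/|a| + 2/(1+a) + 1, by have : 0 < 1 + a := by linarith
                                  positivity, fun n => ?_⟩
  have h1 : 0 < 1 + a := by linarith
  rcases n with _ | n
  · simp only [Nat.cast_zero, zero_add, div_one, abs_div, abs_one]
    have : 0 < 2/(1+a) := by positivity
    linarith
  · have hn : (0:ℝ) ≤ n := n.cast_nonneg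
    push_cast
    have h2 : 0 < (n:ℝ) + 1 + a := by linarith
    rw [abs_of_pos (by positivity), div_le_div_iff₀ h2 (by linarith)]
    have h3 : 0 < 1/|a| := by positivity
    have h4 : 2/(1+a) * (n + 1 + a) = 2 + 2/(1+a) * n := by field_simp; ring
    have h5 : 0 ≤ 2/(1+a) * n := by positivity
    have h6 : 0 ≤ 1/|a| * (n + 1 + a) := by positivity
    by_cases h : a ≤ 1
    · have h7 : (n:ℝ) ≤ 2/(1+a) * n := by
        refine le_mul_of_one_le_left hn ?_
        rw [le_div_iff₀ h1]; linarith
      nlinarith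
    · push Not at h
      nlinarith

lemma Gn_bound (d : ℝ) (h1 : -1 < d) (h2 : d < 0) (n : ℕ) :
    |(2 * n + d) / d * bc d n| ≤ 8 / |d| * ((n:ℝ) + 1) ^ d := by
  have hb := bc_bound d h1 h2 n
  have hn : (0:ℝ) ≤ n := n.cast_nonneg
  have e : ((n:ℝ)+1)^d = (n+1) * ((n:ℝ)+1)^(d-1) := by
    rw [Real.rpow_sub_one (by linarith)]; field_simp
  have hp : 0 < ((n:ℝ)+1)^(d-1) := Real.rpow_pos_of_pos (by linarith) _
  have hd : 0 < |d| := abs_pos.mpr h2.ne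
  have h3 : |2 * (n:ℝ) + d| ≤ 2 * (n + 1) := by rw [abs_le]; constructor <;> linarith
  rw [e, abs_mul, abs_div]
  calc |2 * (n:ℝ) + d| / |d| * |bc d n|
      ≤ (2 * (n + 1)) / |d| * (4 * ((n:ℝ)+1)^(d-1)) := by gcongr
    _ = _ := by ring

lemma degen_bound (d : ℝ) (h1 : -1 < d) (h2 : d < 0) (n : ℕ) :
    |sphereDegeneracy d (n+1)| ≤ 8 * ((n:ℝ) + 1) ^ (d-1) := by
  have hb := bc_bound d h1 h2 n
  have hn : (0:ℝ) ≤ n := n.cast_nonneg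
  have hp : 0 < ((n:ℝ)+1)^(d-1) := Real.rpow_pos_of_pos (by linarith) _
  rw [degen_succ d h1 h2, abs_mul]
  have h3 : |(2 * n + 1 + d) / ((n:ℝ)+1)| ≤ 2 := by
    rw [abs_div, abs_of_nonneg (by linarith), abs_of_nonneg (by linarith), div_le_iff₀ (by linarith)]
    linarith
  calc _ ≤ 2 * (4 * ((n:ℝ)+1)^(d-1)) := mul_le_mul h3 hb (abs_nonneg _) (by norm_num)
    _ = _ := by ring

theorem dF_dzeta_GFFT (d ζ : ℝ) (hζ0 : 0 < ζ) (hζ1 : ζ < 1)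
    (hd1 : max (2 * ζ - 2) (-(2 * ζ)) < d) (hd2 : d < 0) :
    Summable (fun n : ℕ =>
      |sphereDegeneracy d n * (digamma ((n : ℝ) + d / 2 + ζ) + digamma ((n : ℝ) + d / 2 - ζ))|) ∧
    (1 / 2) * ∑' n : ℕ,
        sphereDegeneracy d n * (digamma ((n : ℝ) + d / 2 + ζ) + digamma ((n : ℝ) + d / 2 - ζ))
      = -ζ * (Real.sin (π * ζ) / Real.sin (π * d / 2)) *
          Real.Gamma (d / 2 - ζ) * Real.Gamma (d / 2 + ζ) / Real.Gamma (1 + d) := by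
  obtain ⟨hA, hB⟩ := max_lt_iff.mp hd1
  have h1 : -1 < d := by linarith
  have hα : 0 < d/2 + ζ := by linarith
  have hβ : -1 < d/2 - ζ := by linarith
  have hβ0 : d/2 - ζ < 0 := by linarith
  have hne1 : ∀ n : ℕ, (n:ℝ) + (d/2 + ζ) ≠ 0 := fun n => by positivity
  have hne2 : ∀ n : ℕ, (n:ℝ) + (d/2 - ζ) ≠ 0 := by
    intro n
    rcases n with _ | n
    · simpa using hβ0.ne
    · have : (0:ℝ) ≤ n := n.cast_nonneg
      push_cast; linarith
  set u : ℕ → ℝ := fun n => digamma ((n : ℝ) + d / 2 + ζ) + digamma ((n : ℝ) + d / 2 - ζ) with hu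
  set v : ℕ → ℝ := fun n => 1 / ((n:ℝ) + (d/2 + ζ)) + 1 / ((n:ℝ) + (d/2 - ζ)) with hv
  have huv : ∀ n, u (n+1) - u n = v n := by
    intro n
    have e1 := digamma_succ (n + (d/2 + ζ)) (fun m h => hne1 (n+m) (by push_cast; linarith))
    have e2 := digamma_succ (n + (d/2 - ζ)) (fun m h => hne2 (n+m) (by push_cast; linarith))
    simp only [hu, hv]
    push_cast
    have a1 : (n:ℝ) + 1 + d/2 + ζ = n + (d/2+ζ) + 1 := by ring
    have a2 : (n:ℝ) + 1 + d/2 - ζ = n + (d/2-ζ) + 1 := by ring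
    have a3 : (n:ℝ) + d/2 + ζ = n + (d/2+ζ) := by ring
    have a4 : (n:ℝ) + d/2 - ζ = n + (d/2-ζ) := by ring
    rw [a1, a2, a3, a4, e1, e2]
    ring
  obtain ⟨K1, hK1, hK1'⟩ := inv_bound _ (by linarith : -1 < d/2+ζ) hα.ne'
  obtain ⟨K2, hK2, hK2'⟩ := inv_bound _ hβ hβ0.ne
  obtain ⟨C, hC, hCu⟩ := growth u (K1 + K2) (-d/2) (by positivity) (by linarith) (by
    intro n
    rw [huv, add_div]
    exact (abs_add_le _ _).trans (add_le_add (hK1' n) (hK2' n)))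
  have hsum : Summable (fun n : ℕ => |sphereDegeneracy d n * u n|) := by
    rw [← summable_nat_add_iff 1]
    refine Summable.of_nonneg_of_le (fun _ => abs_nonneg _)
      (f := fun n : ℕ => 8 * C * 2 ^ (-d/2) * ((n:ℝ)+1) ^ (d/2 - 1)) (fun n => ?_)
      ((summable_aux _ (by linarith)).mul_left _)
    have hn : (0:ℝ) ≤ n := n.cast_nonneg
    rw [abs_mul]
    have b1 := degen_bound d h1 hd2 n
    have b2 := hCu (n+1)
    have b3 : (((n+1:ℕ):ℝ) + 1)^(-d/2) ≤ 2 ^ (-d/2) * ((n:ℝ)+1)^(-d/2) := by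
      rw [← Real.mul_rpow (by norm_num) (by linarith)]
      refine Real.rpow_le_rpow (by positivity) ?_ (by linarith)
      push_cast; linarith
    have b4 : ((n:ℝ)+1) ^ (d/2 - 1) = ((n:ℝ)+1)^(d-1) * ((n:ℝ)+1)^(-d/2) := by
      rw [← Real.rpow_add (by linarith)]; congr 1; ring
    rw [b4]
    calc _ ≤ (8 * ((n:ℝ) + 1) ^ (d-1)) * (C * (2 ^ (-d/2) * ((n:ℝ)+1)^(-d/2))) := by
          refine mul_le_mul b1 (b2.trans ?_) (abs_nonneg _) (by positivity)
          gcongr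
      _ = _ := by ring
  refine ⟨hsum, ?_⟩
  -- summation by parts
  have hparts : ∀ N : ℕ, ∑ n ∈ Finset.range (N+1), sphereDegeneracy d n * u n
      = (2 * N + d) / d * bc d N * u N
        - ∑ n ∈ Finset.range N, (2 * n + d) / d * bc d n * v n := by
    intro N
    induction N with
    | zero => simp [degen_zero d h1 hd2, bc, hd2.ne]
    | succ N ih =>
      rw [Finset.sum_range_succ, ih, Finset.sum_range_succ _ N, ← huv N, degen_succ d h1 hd2, bc]
      have := hd2.ne
      push_cast
      field_simp
      ring
  have hlim0 : Tendsto (fun N : ℕ => (2 * N + d) / d * bc d N * u N) atTop (𝓝 0) := by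
    refine squeeze_zero_norm (a := fun N : ℕ => 8 / |d| * C * ((N:ℝ)+1)^(d/2)) (fun N => ?_) ?_
    · have hn : (0:ℝ) ≤ N := N.cast_nonneg
      have b4 : ((N:ℝ)+1) ^ (d/2) = ((N:ℝ)+1)^d * ((N:ℝ)+1)^(-d/2) := by
        rw [← Real.rpow_add (by linarith)]; congr 1; ring
      rw [Real.norm_eq_abs, abs_mul, b4]
      calc _ ≤ (8 / |d| * ((N:ℝ) + 1) ^ d) * (C * ((N:ℝ)+1)^(-d/2)) :=
            mul_le_mul (Gn_bound d h1 hd2 N) (hCu N) (abs_nonneg _) (by positivity)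
        _ = _ := by ring
    · simpa using (tendsto_aux (d/2) (by linarith)).const_mul (8/|d| * C)
  have hGv : HasSum (fun n : ℕ => (2 * n + d) / d * bc d n * v n)
      (4 / d * 0 + 2 * ζ / d * (TT d (d/2 - ζ) - TT d (d/2 + ζ))) := by
    have := ((bc_sum_zero d h1 hd2).mul_left (4/d)).add
      (((sum_neg d _ h1 hd2 hβ hβ0).sub (sum_pos d _ h1 hd2 hα)).mul_left (2 * ζ / d))
    refine this.congr_fun ?_
    intro n
    have q1 := hne1 n
    have q2 := hne2 n
    have q3 := hd2.ne
    simp only [hv]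
    have e : (2 * (n:ℝ) + d) = (n + (d/2+ζ)) + (n + (d/2-ζ)) := by ring
    have e2 : 2 * ζ = (n + (d/2+ζ)) - (n + (d/2-ζ)) := by ring
    rw [e, e2]
    generalize (n:ℝ) + (d/2+ζ) = x at *
    generalize (n:ℝ) + (d/2-ζ) = y at *
    field_simp
    ring
  have hS : ∑' n : ℕ, sphereDegeneracy d n * u n
      = 0 - (4 / d * 0 + 2 * ζ / d * (TT d (d/2 - ζ) - TT d (d/2 + ζ))) := by
    have t1 := (tendsto_add_atTop_iff_nat 1).mpr hsum.of_abs.hasSum.tendsto_sum_nat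
    have t2 := hlim0.sub hGv.tendsto_sum_nat
    simp_rw [← hparts] at t2
    exact tendsto_nhds_unique t1 t2
  rw [hS]
  unfold TT
  have r1 := Real.Gamma_mul_Gamma_one_sub (d/2 + ζ)
  have r2 := Real.Gamma_mul_Gamma_one_sub (d/2 - ζ)
  have r3 := Real.Gamma_mul_Gamma_one_sub (1 + d)
  have r4 := Real.Gamma_add_one (s := -d) (by linarith)
  have f1 : 1 - (d/2 + ζ) = d/2 - ζ + 1 - d := by ring
  have f2 : 1 - (d/2 - ζ) = d/2 + ζ + 1 - d := by ring
  have f3 : 1 - (1 + d) = -d := by ring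
  have f4 : -d + 1 = 1 - d := by ring
  rw [f1] at r1
  rw [f2] at r2
  rw [f3] at r3
  rw [f4] at r4
  have g1 : 0 < Real.Gamma (d/2 - ζ + 1 - d) := Real.Gamma_pos_of_pos (by linarith)
  have g2 : 0 < Real.Gamma (d/2 + ζ + 1 - d) := Real.Gamma_pos_of_pos (by linarith)
  have g3 : 0 < Real.Gamma (1 + d) := Real.Gamma_pos_of_pos (by linarith)
  have g4 : 0 < Real.Gamma (d/2 + ζ) := Real.Gamma_pos_of_pos (by linarith)
  have g5 : Real.Gamma (d/2 - ζ) ≠ 0 :=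
    Real.Gamma_ne_zero (fun m h => hne2 m (by rw [h]; ring))
  have s1 : Real.sin (π * (d/2 + ζ)) ≠ 0 := by
    intro h; rw [h, div_zero] at r1; exact (mul_pos g4 g1).ne' r1
  have s2 : Real.sin (π * (d/2 - ζ)) ≠ 0 := by
    intro h; rw [h, div_zero] at r2; exact (mul_ne_zero g5 g2.ne') r2
  have g6 : 0 < Real.Gamma (-d) := Real.Gamma_pos_of_pos (by linarith)
  have s3 : Real.sin (π * (1 + d)) ≠ 0 := by
    intro h; rw [h, div_zero] at r3; exact (mul_pos g3 g6).ne' r3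
  have e3 : Real.sin (π * (1 + d)) = -(2 * Real.sin (π * d / 2) * Real.cos (π * d / 2)) := by
    rw [← Real.sin_two_mul, mul_add, mul_one, add_comm, Real.sin_add_pi]
    congr 2; ring
  have s4 : Real.sin (π * d / 2) ≠ 0 := by
    intro h; apply s3; rw [e3, h]; ring
  have s5 : Real.cos (π * d / 2) ≠ 0 := by
    intro h; apply s3; rw [e3, h]; ring
  have e1 : Real.sin (π * (d/2 + ζ)) = Real.sin (π * d / 2) * Real.cos (π * ζ)
      + Real.cos (π * d / 2) * Real.sin (π * ζ) := by
    rw [← Real.sin_add]; congr 1; ring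
  have e2 : Real.sin (π * (d/2 - ζ)) = Real.sin (π * d / 2) * Real.cos (π * ζ)
      - Real.cos (π * d / 2) * Real.sin (π * ζ) := by
    rw [← Real.sin_sub]; congr 1; ring
  have hpi := Real.pi_pos.ne'
  have i1 : 1 / Real.Gamma (d/2 - ζ + 1 - d)
      = Real.Gamma (d/2 + ζ) * Real.sin (π * (d/2 + ζ)) / π := by
    rw [eq_div_iff s1] at r1
    rw [div_eq_div_iff g1.ne' hpi]
    linarith
  have i2 : 1 / Real.Gamma (d/2 + ζ + 1 - d)
      = Real.Gamma (d/2 - ζ) * Real.sin (π * (d/2 - ζ)) / π := by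
    rw [eq_div_iff s2] at r2
    rw [div_eq_div_iff g2.ne' hpi]
    linarith
  have i3 : Real.Gamma (1 - d) = d * π / (2 * Real.sin (π * d / 2) * Real.cos (π * d / 2) * Real.Gamma (1 + d)) := by
    rw [r4]
    rw [e3, eq_div_iff (by rw [← e3]; exact s3)] at r3
    rw [eq_div_iff (by positivity)]
    linear_combination d * r3
  rw [div_eq_mul_one_div _ (Real.Gamma (d/2 - ζ + 1 - d)),
    div_eq_mul_one_div _ (Real.Gamma (d/2 + ζ + 1 - d)), i1, i2, i3, e1, e2]
  have := hd2.ne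
  have g3' := g3.ne'
  clear_value u v
  clear e1 e2 e3 i1 i2 i3 r1 r2 r3 r4 s1 s2 s3 hS hGv g1 g2 g3 g4 g5 g6
  generalize Real.sin (π * d / 2) = S at *
  generalize Real.cos (π * d / 2) = Co at *
  generalize Real.sin (π * ζ) = S2 at *
  generalize Real.cos (π * ζ) = C2 at *
  generalize Real.Gamma (d/2 + ζ) = X1 at *
  generalize Real.Gamma (d/2 - ζ) = X2 at *
  generalize Real.Gamma (1 + d) = X3 at *
  field_simp
  ring
end

section
/- Let d and ζ be real numbers with 0 < ζ < 1 and max(2ζ−2, −2ζ) < d < 0. Then the function u ↦ u^{d/2−1}·(u^{ζ} + u^{−ζ})·((1−u)^{−d−1}(1+u) − 1) is Lebesgue integrable on (0,1), and −(1/2)·(1/(d/2 + ζ) + 1/(d/2 − ζ)) − (1/2)·∫₀¹ u^{d/2−1}(u^{ζ} + u^{−ζ})((1−u)^{−d−1}(1+u) − 1) du = −ζ·(sin(πζ)/sin(πd/2))·Γ(d/2 − ζ)·Γ(d/2 + ζ)/Γ(1 + d). -/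
open Real MeasureTheory

lemma aux_beta (s b : ℝ) (hs : 0 < s) (hb : 0 < b) :
    IntervalIntegrable (fun u : ℝ => u ^ (s - 1) * (1 - u) ^ (b - 1)) volume 0 1 ∧
    ∫ u in (0:ℝ)..1, u ^ (s - 1) * (1 - u) ^ (b - 1)
      = Real.Gamma s * Real.Gamma b / Real.Gamma (s + b) := by
  have hc := Complex.betaIntegral_convergent (u := (s : ℂ)) (v := (b : ℂ)) (by simpa) (by simpa)
  have key : ∀ u ∈ Set.uIoc (0:ℝ) 1, (u : ℂ) ^ ((s : ℂ) - 1) * (1 - (u : ℂ)) ^ ((b : ℂ) - 1)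
      = ((u ^ (s - 1) * (1 - u) ^ (b - 1) : ℝ) : ℂ) := by
    intro u hu
    rw [Set.uIoc_of_le zero_le_one] at hu
    rw [Complex.ofReal_mul, Complex.ofReal_cpow hu.1.le, Complex.ofReal_cpow (by linarith [hu.2])]
    push_cast
    rfl
  have hc2 : IntervalIntegrable (fun u : ℝ => ((u ^ (s - 1) * (1 - u) ^ (b - 1) : ℝ) : ℂ))
      volume 0 1 := hc.congr key
  constructor
  · rw [intervalIntegrable_iff] at hc2 ⊢
    have := hc2.re
    simp only [RCLike.re_eq_complex_re, Complex.ofReal_re] at this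
    exact this
  · have h1 := Complex.betaIntegral_eq_Gamma_mul_div (s : ℂ) (b : ℂ) (by simpa) (by simpa)
    have hcg : ∫ u in (0:ℝ)..1, (u : ℂ) ^ ((s : ℂ) - 1) * (1 - (u : ℂ)) ^ ((b : ℂ) - 1)
        = ∫ u in (0:ℝ)..1, ((u ^ (s - 1) * (1 - u) ^ (b - 1) : ℝ) : ℂ) :=
      intervalIntegral.integral_congr_ae (Filter.Eventually.of_forall key)
    rw [Complex.betaIntegral, hcg,
      intervalIntegral.integral_ofReal, ← Complex.ofReal_add, Complex.Gamma_ofReal,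
      Complex.Gamma_ofReal, Complex.Gamma_ofReal] at h1
    exact_mod_cast h1

lemma aux_bound (b u : ℝ) (hb : 0 < b) (h0 : 0 < u) (h1 : u < 1) :
    |(1 - u) ^ b - 1| ≤ (b + 1) * u := by
  have h2 : (1 - u) ^ b ≤ 1 := Real.rpow_le_one (by linarith) (by linarith) hb.le
  rw [abs_of_nonpos (by linarith)]
  rcases le_total 1 b with h | h
  · have := one_add_mul_self_le_rpow_one_add (s := -u) (by linarith) h
    rw [← sub_eq_add_neg] at this
    nlinarith
  · have : (1 - u) ^ (1:ℝ) ≤ (1 - u) ^ b :=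
      Real.rpow_le_rpow_of_exponent_ge (by linarith) (by linarith) h
    rw [Real.rpow_one] at this
    nlinarith [mul_pos hb h0]

lemma aux_main (q b : ℝ) (hq : -1 < q) (hq0 : q ≠ 0) (hb : 0 < b) :
    IntervalIntegrable (fun u : ℝ => u ^ (q - 1) * ((1 - u) ^ (b - 1) * (1 + u) - 1)) volume 0 1 ∧
    ∫ u in (0:ℝ)..1, u ^ (q - 1) * ((1 - u) ^ (b - 1) * (1 + u) - 1)
      = -1 / q + (2 + b / q) * (Real.Gamma (q + 1) * Real.Gamma b / Real.Gamma (q + 1 + b)) := by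
  obtain ⟨hB, hBv⟩ := aux_beta (q + 1) b (by linarith) hb
  have hA : IntervalIntegrable (fun u : ℝ => u ^ (q - 1) * ((1 - u) ^ b - 1)) volume 0 1 := by
    have hq' : IntervalIntegrable (fun u : ℝ => (b + 1) * u ^ q) volume 0 1 :=
      (intervalIntegral.intervalIntegrable_rpow' hq).const_mul _
    rw [intervalIntegrable_iff_integrableOn_Ioo_of_le zero_le_one] at hq' ⊢
    refine Integrable.mono' hq' (by fun_prop) ?_
    refine (ae_restrict_iff' measurableSet_Ioo).2 (Filter.Eventually.of_forall ?_)
    rintro u ⟨h0, h1⟩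
    have := aux_bound b u hb h0 h1
    have hp := Real.rpow_pos_of_pos h0 (q - 1)
    rw [norm_mul, Real.norm_of_nonneg hp.le, Real.norm_eq_abs]
    have e : u ^ q = u ^ (q - 1) * u := by
      rw [← Real.rpow_add_one h0.ne']; ring_nf
    rw [e]
    nlinarith
  have hF := intervalIntegral.integral_eq_sub_of_hasDerivAt_of_tendsto
    (f := fun u : ℝ => u ^ q * ((1 - u) ^ b - 1) / q)
    (f' := fun u : ℝ => u ^ (q - 1) * ((1 - u) ^ b - 1)
      - (b / q) * (u ^ (q + 1 - 1) * (1 - u) ^ (b - 1))) (fa := 0) (fb := -1 / q)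
    zero_lt_one ?_ (hA.sub (hB.const_mul _)) ?_ ?_
  · rw [intervalIntegral.integral_sub hA (hB.const_mul _), intervalIntegral.integral_const_mul,
      hBv] at hF
    have key : Set.EqOn (fun u : ℝ => u ^ (q - 1) * ((1 - u) ^ b - 1)
        + 2 * (u ^ (q + 1 - 1) * (1 - u) ^ (b - 1)))
        (fun u : ℝ => u ^ (q - 1) * ((1 - u) ^ (b - 1) * (1 + u) - 1)) (Set.Ioo 0 1) := by
      rintro u ⟨h0, h1⟩
      have e : u ^ (q + 1 - 1) = u ^ (q - 1) * u := by
        rw [← Real.rpow_add_one h0.ne']; ring_nf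
      have e2 : (1 - u) ^ b = (1 - u) ^ (b - 1) * (1 - u) := by
        rw [← Real.rpow_add_one (by linarith)]; ring_nf
      simp only [e, e2]
      ring
    have hI := hA.add (hB.const_mul 2)
    have hV := intervalIntegral.integral_add hA (hB.const_mul 2)
    rw [intervalIntegral.integral_const_mul, hBv] at hV
    constructor
    · rw [intervalIntegrable_iff_integrableOn_Ioo_of_le zero_le_one] at hI ⊢
      exact hI.congr_fun key measurableSet_Ioo
    · rw [intervalIntegral.integral_of_le zero_le_one, integral_Ioc_eq_integral_Ioo,
        ← setIntegral_congr_fun measurableSet_Ioo key, ← integral_Ioc_eq_integral_Ioo,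
        ← intervalIntegral.integral_of_le zero_le_one, hV]
      linear_combination hF
  · rintro u ⟨h0, h1⟩
    have d1 := Real.hasDerivAt_rpow_const (x := u) (p := q) (Or.inl h0.ne')
    have d2 : HasDerivAt (fun u : ℝ => 1 - u) (-1) u := by
      simpa using (hasDerivAt_id u).const_sub 1
    have d3 := (d2.rpow_const (p := b) (Or.inl (by linarith : (1:ℝ) - u ≠ 0))).sub_const 1
    convert! (d1.mul d3).div_const q using 1
    rw [add_sub_cancel_right]
    field_simp
    ring
  · have hz : Filter.Tendsto (fun u : ℝ => (b + 1) / |q| * u ^ (q + 1))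
        (nhdsWithin 0 (Set.Ioi 0)) (nhds 0) := by
      have : ContinuousAt (fun u : ℝ => (b + 1) / |q| * u ^ (q + 1)) 0 :=
        continuousAt_const.mul (Real.continuousAt_rpow_const _ _ (Or.inr (by linarith)))
      have h := this.tendsto
      simp only [Real.zero_rpow (by linarith : q + 1 ≠ 0), mul_zero] at h
      exact h.mono_left nhdsWithin_le_nhds
    refine squeeze_zero_norm' ?_ hz
    filter_upwards [Ioo_mem_nhdsGT (zero_lt_one' ℝ)] with u hu
    have := aux_bound b u hb hu.1 hu.2
    have hp := Real.rpow_pos_of_pos hu.1 q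
    rw [norm_div, norm_mul, Real.norm_of_nonneg hp.le, Real.norm_eq_abs, Real.norm_eq_abs,
      Real.rpow_add_one hu.1.ne', div_mul_eq_mul_div]
    refine div_le_div_of_nonneg_right ?_ (abs_nonneg q)
    nlinarith
  · have hc : ContinuousAt (fun u : ℝ => u ^ q * ((1 - u) ^ b - 1) / q) 1 := by
      refine ContinuousAt.div_const (ContinuousAt.mul
        (Real.continuousAt_rpow_const _ _ (Or.inl one_ne_zero)) (ContinuousAt.sub ?_
          continuousAt_const)) _
      exact ContinuousAt.rpow_const (by fun_prop) (Or.inr hb.le)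
    have h := hc.tendsto
    simp only [sub_self, Real.zero_rpow hb.ne', Real.one_rpow, one_mul, zero_sub] at h
    exact h.mono_left nhdsWithin_le_nhds

lemma aux_gamma (d ζ : ℝ) (hζ0 : 0 < ζ)
    (hp : 0 < d / 2 + ζ) (hp1 : d / 2 + ζ < 1) (hq : -1 < d / 2 - ζ) (hq1 : d / 2 - ζ < 0)
    (hd0 : -2 < d) (hd2 : d < 0) :
    Real.Gamma (-d) * (Real.Gamma (d / 2 + ζ) / Real.Gamma (1 - (d / 2 - ζ))
      - Real.Gamma (d / 2 - ζ) / Real.Gamma (1 - (d / 2 + ζ)))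
    = (Real.sin (π * ζ) / Real.sin (π * d / 2)) *
          Real.Gamma (d / 2 - ζ) * Real.Gamma (d / 2 + ζ) / Real.Gamma (1 + d) := by
  have hpi := Real.pi_pos
  have hs : Real.sin (π * d / 2) ≠ 0 := by
    apply (Real.sin_neg_of_neg_of_neg_pi_lt _ _).ne <;> nlinarith
  have r1 := Real.Gamma_mul_Gamma_one_sub (d / 2 + ζ)
  have r2 := Real.Gamma_mul_Gamma_one_sub (d / 2 - ζ)
  have r3 := Real.Gamma_mul_Gamma_one_sub (-d)
  have g1 : Real.Gamma (1 - (d / 2 + ζ)) ≠ 0 := (Real.Gamma_pos_of_pos (by linarith)).ne'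
  have g2 : Real.Gamma (1 - (d / 2 - ζ)) ≠ 0 := (Real.Gamma_pos_of_pos (by linarith)).ne'
  have s1 : Real.sin (π * (d / 2 + ζ)) ≠ 0 := by
    apply (Real.sin_pos_of_pos_of_lt_pi _ _).ne' <;> nlinarith
  have s2 : Real.sin (π * (d / 2 - ζ)) ≠ 0 := by
    apply (Real.sin_neg_of_neg_of_neg_pi_lt _ _).ne <;> nlinarith
  have i1 : 1 / Real.Gamma (1 - (d / 2 + ζ))
      = Real.Gamma (d / 2 + ζ) * Real.sin (π * (d / 2 + ζ)) / π := by
    rw [eq_div_iff s1] at r1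
    rw [div_eq_div_iff g1 hpi.ne']
    linarith
  have i2 : 1 / Real.Gamma (1 - (d / 2 - ζ))
      = Real.Gamma (d / 2 - ζ) * Real.sin (π * (d / 2 - ζ)) / π := by
    rw [eq_div_iff s2] at r2
    rw [div_eq_div_iff g2 hpi.ne']
    linarith
  have hsum : Real.sin (π * (d / 2 - ζ)) - Real.sin (π * (d / 2 + ζ))
      = -2 * Real.cos (π * d / 2) * Real.sin (π * ζ) := by
    rw [show π * (d / 2 - ζ) = π * d / 2 - π * ζ by ring,
      show π * (d / 2 + ζ) = π * d / 2 + π * ζ by ring, Real.sin_sub, Real.sin_add]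
    ring
  have hL : -2 * Real.cos (π * d / 2) * Real.Gamma (-d) / π
      = 1 / (Real.sin (π * d / 2) * Real.Gamma (1 + d)) := by
    by_cases hd : d = -1
    · subst hd
      have : Real.cos (π * (-1) / 2) = 0 := by
        rw [show π * (-1) / 2 = -(π / 2) by ring, Real.cos_neg, Real.cos_pi_div_two]
      rw [this, show (1:ℝ) + -1 = 0 by norm_num, Real.Gamma_zero]
      simp
    · have g3 : Real.Gamma (1 + d) ≠ 0 := by
        apply Real.Gamma_ne_zero
        intro m hm
        rcases m with _ | m
        · apply hd; push_cast at hm; linarith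
        · push_cast at hm
          have : (0:ℝ) ≤ m := Nat.cast_nonneg m
          linarith
      have g4 : Real.Gamma (-d) ≠ 0 := (Real.Gamma_pos_of_pos (by linarith)).ne'
      have e : Real.sin (π * -d) = -(2 * Real.sin (π * d / 2) * Real.cos (π * d / 2)) := by
        rw [← Real.sin_two_mul, ← Real.sin_neg]; ring_nf
      rw [sub_neg_eq_add, e] at r3
      have hc : Real.cos (π * d / 2) ≠ 0 := by
        intro h
        rw [h] at r3
        simp at r3
        tauto
      rw [eq_div_iff (neg_ne_zero.2 (mul_ne_zero (mul_ne_zero two_ne_zero hs) hc))] at r3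
      rw [div_eq_div_iff hpi.ne' (mul_ne_zero hs g3)]
      linarith
  rw [div_eq_mul_one_div (Real.Gamma (d / 2 + ζ)), div_eq_mul_one_div (Real.Gamma (d / 2 - ζ)),
    i1, i2]
  have hR : Real.sin (π * ζ) / Real.sin (π * d / 2) * Real.Gamma (d / 2 - ζ)
      * Real.Gamma (d / 2 + ζ) / Real.Gamma (1 + d)
      = Real.sin (π * ζ) * Real.Gamma (d / 2 - ζ) * Real.Gamma (d / 2 + ζ)
        * (1 / (Real.sin (π * d / 2) * Real.Gamma (1 + d))) := by
    simp only [div_eq_mul_inv, mul_inv]; ring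
  rw [hR, ← hL]
  linear_combination (Real.Gamma (-d) * Real.Gamma (d / 2 - ζ) * Real.Gamma (d / 2 + ζ) / π) * hsum

theorem dF_dzeta_integral_form (d ζ : ℝ) (hζ0 : 0 < ζ) (hζ1 : ζ < 1)
    (hd1 : max (2 * ζ - 2) (-(2 * ζ)) < d) (hd2 : d < 0) :
    MeasureTheory.IntegrableOn
      (fun u : ℝ => u ^ (d / 2 - 1) * (u ^ ζ + u ^ (-ζ)) *
        ((1 - u) ^ (-d - 1) * (1 + u) - 1)) (Set.Ioo 0 1) ∧
    -(1 / 2) * (1 / (d / 2 + ζ) + 1 / (d / 2 - ζ)) -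
      (1 / 2) * ∫ u in Set.Ioo (0 : ℝ) 1,
        u ^ (d / 2 - 1) * (u ^ ζ + u ^ (-ζ)) * ((1 - u) ^ (-d - 1) * (1 + u) - 1)
      = -ζ * (Real.sin (π * ζ) / Real.sin (π * d / 2)) *
          Real.Gamma (d / 2 - ζ) * Real.Gamma (d / 2 + ζ) / Real.Gamma (1 + d) := by
  obtain ⟨h1, h2⟩ := max_lt_iff.1 hd1
  have hp : 0 < d / 2 + ζ := by linarith
  have hq : d / 2 - ζ < 0 := by linarith
  obtain ⟨I1, V1⟩ := aux_main (d / 2 + ζ) (-d) (by linarith) hp.ne' (by linarith)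
  obtain ⟨I2, V2⟩ := aux_main (d / 2 - ζ) (-d) (by linarith) hq.ne (by linarith)
  have key : Set.EqOn (fun u : ℝ => u ^ (d / 2 + ζ - 1) * ((1 - u) ^ (-d - 1) * (1 + u) - 1)
      + u ^ (d / 2 - ζ - 1) * ((1 - u) ^ (-d - 1) * (1 + u) - 1))
      (fun u : ℝ => u ^ (d / 2 - 1) * (u ^ ζ + u ^ (-ζ)) *
        ((1 - u) ^ (-d - 1) * (1 + u) - 1)) (Set.Ioo 0 1) := by
    rintro u ⟨h0, h1⟩
    have e1 : u ^ (d / 2 + ζ - 1) = u ^ (d / 2 - 1) * u ^ ζ := by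
      rw [← Real.rpow_add h0]; ring_nf
    have e2 : u ^ (d / 2 - ζ - 1) = u ^ (d / 2 - 1) * u ^ (-ζ) := by
      rw [← Real.rpow_add h0]; ring_nf
    simp only [e1, e2]
    ring
  have hI := I1.add I2
  have hV := intervalIntegral.integral_add I1 I2
  constructor
  · rw [intervalIntegrable_iff_integrableOn_Ioo_of_le zero_le_one] at hI
    exact hI.congr_fun key measurableSet_Ioo
  · rw [← setIntegral_congr_fun measurableSet_Ioo key, ← integral_Ioc_eq_integral_Ioo,
      ← intervalIntegral.integral_of_le zero_le_one, hV, V1, V2]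
    have G := aux_gamma d ζ hζ0 hp (by linarith) (by linarith) hq (by linarith) hd2
    have hR : -ζ * (Real.sin (π * ζ) / Real.sin (π * d / 2)) *
          Real.Gamma (d / 2 - ζ) * Real.Gamma (d / 2 + ζ) / Real.Gamma (1 + d)
        = -ζ * ((Real.sin (π * ζ) / Real.sin (π * d / 2)) *
          Real.Gamma (d / 2 - ζ) * Real.Gamma (d / 2 + ζ) / Real.Gamma (1 + d)) := by ring
    rw [hR, ← G, Real.Gamma_add_one hp.ne', Real.Gamma_add_one hq.ne,
      show d / 2 + ζ + 1 + -d = 1 - (d / 2 - ζ) by ring,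
      show d / 2 - ζ + 1 + -d = 1 - (d / 2 + ζ) by ring]
    have hp' := hp.ne'
    have hq' := hq.ne
    have c1 : (2 + -d / (d / 2 + ζ)) * (d / 2 + ζ) = 2 * ζ := by
      rw [add_mul, div_mul_cancel₀ _ hp']; ring
    have c2 : (2 + -d / (d / 2 - ζ)) * (d / 2 - ζ) = -(2 * ζ) := by
      rw [add_mul, div_mul_cancel₀ _ hq']; ring
    linear_combination
      (-(1 / 2) * (Real.Gamma (d / 2 + ζ) * Real.Gamma (-d) / Real.Gamma (1 - (d / 2 - ζ)))) * c1
      + (-(1 / 2) * (Real.Gamma (d / 2 - ζ) * Real.Gamma (-d) / Real.Gamma (1 - (d / 2 + ζ)))) * c2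
end

section
/- The function x ↦ (π/24)·x·(1 − 4x²)·tan(πx) is Lebesgue integrable on (0,1) and ∫₀¹ (π/24)·x·(1 − 4x²)·tan(πx) dx = (ln 4)/16 − 3·ζ(3)/(16π²), where ζ(3) = ∑_{n≥1} 1/n³. (This integral of the derivative of the regularized sphere free energy between ζ = 0 and ζ = 1 reproduces the sphere free energy (1/16)(ln 4 − 3ζ(3)/π²) of a free conformal scalar on S³.) -/
open Real MeasureTheory

lemma aux_tel (θ : ℝ) (N : ℕ) :
    cos θ * ∑ k ∈ Finset.range N, (-1 : ℝ) ^ k * (2 * sin (2 * (k + 1) * θ))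
      = sin θ - (-1) ^ N * sin ((2 * N + 1) * θ) := by
  induction N with
  | zero => simp
  | succ n ih =>
    rw [Finset.sum_range_succ, mul_add, ih]
    have e1 : sin ((2 * ((n + 1 : ℕ) : ℝ) + 1) * θ)
        = sin (2 * (n + 1) * θ) * cos θ + cos (2 * (n + 1) * θ) * sin θ := by
      rw [← sin_add]; congr 1; push_cast; ring
    have e2 : sin ((2 * (n : ℝ) + 1) * θ)
        = sin (2 * (n + 1) * θ) * cos θ - cos (2 * (n + 1) * θ) * sin θ := by
      rw [← sin_sub]; congr 1; ring
    rw [e1, e2, pow_succ]; ring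

lemma aux_int (k : ℕ) :
    ∫ x in (0 : ℝ)..1, (x - 4 * x ^ 3) * sin (2 * (k + 1) * (π * x))
      = 3 / (2 * π * (k + 1)) - 24 / (2 * π * (k + 1)) ^ 3 := by
  have ha : (2 * π * ((k : ℝ) + 1)) ≠ 0 := by positivity
  have hs : sin (2 * π * ((k : ℝ) + 1)) = 0 := by
    have := sin_nat_mul_pi (2 * (k + 1))
    push_cast at this
    rw [← this]; congr 1; ring
  have hc : cos (2 * π * ((k : ℝ) + 1)) = 1 := by
    have := cos_nat_mul_two_pi (k + 1)
    push_cast at this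
    rw [mul_comm]; exact this
  generalize hA : (2 * π * ((k : ℝ) + 1)) = a at *
  have hd : ∀ x ∈ Set.uIcc (0 : ℝ) 1, HasDerivAt (fun x : ℝ =>
      -(x - 4 * x ^ 3) * cos (a * x) / a + (1 - 12 * x ^ 2) * sin (a * x) / a ^ 2
        + (-24 * x) * cos (a * x) / a ^ 3 + 24 * sin (a * x) / a ^ 4)
      ((x - 4 * x ^ 3) * sin (2 * (k + 1) * (π * x))) x := by
    intro x _
    have hx := hasDerivAt_id x
    have hax : HasDerivAt (fun x : ℝ => a * x) a x := by simpa using hx.const_mul a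
    have h1 := hax.sin
    have h2 := hax.cos
    have hq : HasDerivAt (fun x : ℝ => -(x - 4 * x ^ 3)) (-(1 - 12 * x ^ 2)) x := by
      have := (hx.sub ((hasDerivAt_pow 3 x).const_mul 4)).neg
      convert! this using 1
      norm_num; ring
    have hq' : HasDerivAt (fun x : ℝ => (1 - 12 * x ^ 2)) (-24 * x) x := by
      have := ((hasDerivAt_pow 2 x).const_mul 12).const_sub 1
      convert! this using 1
      norm_num; ring
    have hq'' : HasDerivAt (fun x : ℝ => -24 * x) (-24) x := by
      simpa using hx.const_mul (-24)
    have := ((((hq.mul h2).div_const a).add ((hq'.mul h1).div_const (a ^ 2))).add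
      ((hq''.mul h2).div_const (a ^ 3))).add ((h1.const_mul 24).div_const (a ^ 4))
    convert! this using 1
    have : 2 * ((k : ℝ) + 1) * (π * x) = a * x := by rw [← hA]; ring
    rw [this]
    field_simp
    ring
  rw [intervalIntegral.integral_eq_sub_of_hasDerivAt hd
    (Continuous.intervalIntegrable (by fun_prop) _ _)]
  simp [hs, hc]
  ring

lemma aux_log : Filter.Tendsto
    (fun M : ℕ => ∑ k ∈ Finset.range (2 * M), (-1 : ℝ) ^ k * (1 / ((k : ℝ) + 1)))
    Filter.atTop (nhds (log 2)) := by
  have h := Real.tendsto_harmonic_sub_log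
  have h2 : Filter.Tendsto (fun M : ℕ => 2 * M) Filter.atTop Filter.atTop :=
    Filter.tendsto_id.const_mul_atTop' (by norm_num)
  have h3 := ((h.comp h2).sub h).add_const (log 2)
  simp only [sub_self, zero_add] at h3
  refine h3.congr' ?_
  filter_upwards [Filter.eventually_gt_atTop 0] with M hM
  have key : ∀ M : ℕ, ∑ k ∈ Finset.range (2 * M), (-1 : ℝ) ^ k * (1 / ((k : ℝ) + 1))
      = (harmonic (2 * M) : ℝ) - harmonic M := by
    intro M
    induction M with
    | zero => simp
    | succ n ih =>
      rw [show 2 * (n + 1) = 2 * n + 1 + 1 by ring, Finset.sum_range_succ, Finset.sum_range_succ,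
        ih, harmonic_succ, harmonic_succ, harmonic_succ]
      have : (-1 : ℝ) ^ (2 * n) = 1 := by simp
      rw [pow_succ (-1 : ℝ) (2 * n), this]
      push_cast
      field_simp
      ring
  rw [key]
  have : (M : ℝ) ≠ 0 := by positivity
  simp only [Function.comp]
  push_cast
  rw [log_mul (by norm_num) this]
  ring

lemma aux_zeta : Filter.Tendsto
    (fun M : ℕ => ∑ k ∈ Finset.range (2 * M), (-1 : ℝ) ^ k * (1 / ((k : ℝ) + 1) ^ 3))
    Filter.atTop (nhds (3 / 4 * ∑' n : ℕ, 1 / ((n : ℝ) + 1) ^ 3)) := by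
  have hs : Summable (fun n : ℕ => 1 / ((n : ℝ) + 1) ^ 3) := by
    have := (summable_nat_add_iff 1).2 (Real.summable_one_div_nat_pow (p := 3) |>.2 (by norm_num))
    simpa using this
  have h := hs.hasSum.tendsto_sum_nat
  have h2 : Filter.Tendsto (fun M : ℕ => 2 * M) Filter.atTop Filter.atTop :=
    Filter.tendsto_id.const_mul_atTop' (by norm_num)
  have h3 := ((h.comp h2).sub (h.const_mul (1 / 4)))
  have e : ∀ z : ℝ, z - 1 / 4 * z = 3 / 4 * z := fun z => by ring
  rw [e] at h3
  refine h3.congr ?_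
  intro M
  simp only [Function.comp]
  induction M with
  | zero => simp
  | succ n ih =>
    rw [show 2 * (n + 1) = 2 * n + 1 + 1 by ring]
    simp only [Finset.sum_range_succ]
    rw [← ih]
    have : (-1 : ℝ) ^ (2 * n) = 1 := by simp
    rw [pow_succ (-1 : ℝ) (2 * n), this]
    push_cast
    have h8 : 1 / (2 * (n : ℝ) + 1 + 1) ^ 3 = 1 / 8 * (1 / ((n : ℝ) + 1) ^ 3) := by
      rw [show 2 * (n : ℝ) + 1 + 1 = 2 * (n + 1) by ring, mul_pow]
      field_simp
      norm_num
    rw [h8]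
    ring

lemma aux_RL (g : ℝ → ℝ) (hg : IntegrableOn g (Set.Ioo 0 1)) : Filter.Tendsto
    (fun M : ℕ => ∫ x in Set.Ioo (0 : ℝ) 1, g x * sin ((2 * ((2 * M : ℕ) : ℝ) + 1) * (π * x)))
    Filter.atTop (nhds 0) := by
  have h := Real.tendsto_integral_exp_smul_cocompact
    (Set.indicator (Set.Ioo (0 : ℝ) 1) (fun x => (g x : ℂ)))
  have hw : Filter.Tendsto (fun M : ℕ => 2 * (M : ℝ) + 1 / 2) Filter.atTop
      (Filter.cocompact ℝ) := by
    refine Filter.Tendsto.mono_right ?_ atTop_le_cocompact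
    exact Filter.tendsto_atTop_add_const_right _ _
      (tendsto_natCast_atTop_atTop.const_mul_atTop (by norm_num))
  have h1 := (Complex.continuous_im.tendsto _).comp (h.comp hw)
  have h2 := h1.neg
  simp only [Complex.zero_im, neg_zero] at h2
  refine h2.congr ?_
  intro M
  simp only [Function.comp]
  have hgc : Integrable (Set.indicator (Set.Ioo (0 : ℝ) 1) (fun x => (g x : ℂ))) :=
    (integrable_indicator_iff measurableSet_Ioo).2 hg.ofReal
  have hI := (Real.fourierIntegral_convergent_iff (μ := volume) (2 * (M : ℝ) + 1 / 2)).2 hgc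
  have hI' : Integrable (fun v : ℝ => (Real.fourierChar (-(v * (2 * (M : ℝ) + 1 / 2)))) •
      (Set.indicator (Set.Ioo (0 : ℝ) 1) (fun x => (g x : ℂ))) v) := by
    simpa [mul_comm] using hI
  have := Complex.imCLM.integral_comp_comm hI'
  simp only [Complex.imCLM_apply] at this
  rw [← this, ← integral_neg, ← integral_indicator measurableSet_Ioo]
  congr 1
  ext v
  by_cases hv : v ∈ Set.Ioo (0 : ℝ) 1
  · simp only [Set.indicator_of_mem hv, Circle.smul_def, Real.fourierChar_apply, smul_eq_mul]
    rw [Complex.im_mul_ofReal, Complex.exp_ofReal_mul_I_im]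
    rw [show 2 * π * -(v * (2 * (M : ℝ) + 1 / 2)) = -((2 * ((2 * M : ℕ) : ℝ) + 1) * (π * v)) by
      push_cast; ring, sin_neg]
    ring
  · simp [Set.indicator_of_notMem hv]

lemma aux_b (x : ℝ) (h0 : 0 < x) (h1 : x < 1) : |1 - 2 * x| ≤ |cos (π * x)| := by
  have hp := pi_pos
  have := mul_abs_le_abs_sin (x := π / 2 - π * x) (by
    rw [abs_le]; constructor <;> nlinarith)
  rw [sin_pi_div_two_sub] at this
  refine le_trans (le_of_eq ?_) this
  have h2 : |π / 2| = π / 2 := abs_of_pos (by positivity)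
  rw [show π / 2 - π * x = (π / 2) * (1 - 2 * x) by ring, abs_mul, h2]
  field_simp

lemma aux_g : IntegrableOn (fun x : ℝ => (π / 24) * (x - 4 * x ^ 3) / cos (π * x))
    (Set.Ioo 0 1) := by
  refine Measure.integrableOn_of_bounded (M := π / 8) (by simp) ?_ ?_
  · exact (Measurable.aestronglyMeasurable (by fun_prop))
  · refine (ae_restrict_iff' measurableSet_Ioo).2 (Filter.Eventually.of_forall fun x hx => ?_)
    obtain ⟨h0, h1⟩ := hx
    have hp := pi_pos
    have hb := aux_b x h0 h1
    rw [norm_eq_abs, abs_div]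
    refine div_le_of_le_mul₀ (abs_nonneg _) (by positivity) ?_
    rw [show π / 24 * (x - 4 * x ^ 3) = (π / 24 * (x * (1 + 2 * x))) * (1 - 2 * x) by ring, abs_mul]
    refine mul_le_mul ?_ hb (abs_nonneg _) (by positivity)
    rw [abs_of_pos (by positivity)]
    have : x * (1 + 2 * x) ≤ 3 := by nlinarith
    nlinarith

theorem sphere_free_energy_free_scalar_d3 :
    MeasureTheory.IntegrableOn
      (fun x : ℝ => (π / 24) * x * (1 - 4 * x ^ 2) * Real.tan (π * x)) (Set.Ioo 0 1) ∧
    ∫ x in Set.Ioo (0 : ℝ) 1, (π / 24) * x * (1 - 4 * x ^ 2) * Real.tan (π * x)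
      = Real.log 4 / 16 - 3 * (∑' n : ℕ, 1 / ((n : ℝ) + 1) ^ 3) / (16 * π ^ 2) := by
  have hgs : ∀ c : ℝ, IntegrableOn (fun x : ℝ => (π / 24) * (x - 4 * x ^ 3) / cos (π * x) *
      sin (c * (π * x))) (Set.Ioo 0 1) := by
    intro c
    refine Integrable.mul_bdd (c := 1) aux_g
      (Measurable.aestronglyMeasurable (by fun_prop)) ?_
    exact Filter.Eventually.of_forall fun x => abs_sin_le_one _
  have heq : (fun x : ℝ => (π / 24) * x * (1 - 4 * x ^ 2) * Real.tan (π * x)) =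
      (fun x : ℝ => (π / 24) * (x - 4 * x ^ 3) / cos (π * x) * sin (1 * (π * x))) := by
    ext x
    rw [tan_eq_sin_div_cos, one_mul]; ring
  rw [heq]
  refine ⟨hgs 1, ?_⟩
  -- the partial sums
  have hR := aux_RL _ aux_g
  have hL := ((aux_log.const_mul (1 / 8)).sub (aux_zeta.const_mul (1 / (4 * π ^ 2)))).add hR
  refine tendsto_nhds_unique (f := fun _ : ℕ => ∫ x in Set.Ioo (0 : ℝ) 1,
    (π / 24) * (x - 4 * x ^ 3) / cos (π * x) * sin (1 * (π * x))) (l := Filter.atTop)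
    tendsto_const_nhds ?_
  have hlim : Real.log 4 / 16 - 3 * (∑' n : ℕ, 1 / ((n : ℝ) + 1) ^ 3) / (16 * π ^ 2) =
      1 / 8 * log 2 - 1 / (4 * π ^ 2) * (3 / 4 * ∑' n : ℕ, 1 / ((n : ℝ) + 1) ^ 3) + 0 := by
    rw [show (4 : ℝ) = 2 ^ 2 by norm_num, log_pow]
    push_cast
    field_simp
    ring
  rw [hlim]
  refine hL.congr fun M => ?_
  have hcont : ∀ k ∈ Finset.range (2 * M), Integrable (fun x : ℝ => (-1 : ℝ) ^ k * (π / 12) *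
      ((x - 4 * x ^ 3) * sin (2 * (k + 1) * (π * x)))) (volume.restrict (Set.Ioo 0 1)) := by
    intro k _
    have : Continuous (fun x : ℝ => (-1 : ℝ) ^ k * (π / 12) *
      ((x - 4 * x ^ 3) * sin (2 * (k + 1) * (π * x)))) := by fun_prop
    exact (this.integrableOn_Icc (a := 0) (b := 1)).mono_set Set.Ioo_subset_Icc_self
  have hS : 1 / 8 * ∑ k ∈ Finset.range (2 * M), (-1 : ℝ) ^ k * (1 / ((k : ℝ) + 1)) -
        1 / (4 * π ^ 2) * ∑ k ∈ Finset.range (2 * M), (-1 : ℝ) ^ k * (1 / ((k : ℝ) + 1) ^ 3)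
      = ∫ x in Set.Ioo (0 : ℝ) 1, ∑ k ∈ Finset.range (2 * M), (-1 : ℝ) ^ k * (π / 12) *
      ((x - 4 * x ^ 3) * sin (2 * (k + 1) * (π * x))) := by
    rw [integral_finsetSum _ hcont, Finset.mul_sum, Finset.mul_sum, ← Finset.sum_sub_distrib]
    refine Finset.sum_congr rfl fun k _ => ?_
    rw [integral_const_mul, ← integral_Ioc_eq_integral_Ioo,
      ← intervalIntegral.integral_of_le zero_le_one, aux_int]
    field_simp
    ring
  rw [hS, ← integral_add (integrable_finsetSum _ hcont) (hgs _)]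
  refine setIntegral_congr_fun measurableSet_Ioo fun x hx => ?_
  have ht := aux_tel (π * x) (2 * M)
  have hM : (-1 : ℝ) ^ (2 * M) = 1 := by simp
  rw [hM, one_mul] at ht
  have hsum : ∑ k ∈ Finset.range (2 * M), (-1 : ℝ) ^ k * (π / 12) *
      ((x - 4 * x ^ 3) * sin (2 * (k + 1) * (π * x))) = (π / 24 * (x - 4 * x ^ 3)) *
      ∑ k ∈ Finset.range (2 * M), (-1 : ℝ) ^ k * (2 * sin (2 * (k + 1) * (π * x))) := by
    rw [Finset.mul_sum]
    exact Finset.sum_congr rfl fun k _ => by ring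
  simp only [hsum, one_mul]
  generalize ∑ k ∈ Finset.range (2 * M), (-1 : ℝ) ^ k * (2 * sin (2 * (k + 1) * (π * x))) = S at *
  by_cases hc : cos (π * x) = 0
  · have hb := aux_b x hx.1 hx.2
    rw [hc, abs_zero] at hb
    have hx2 : 1 - 2 * x = 0 := abs_nonpos_iff.1 hb
    have : x - 4 * x ^ 3 = 0 := by
      rw [show x - 4 * x ^ 3 = x * (1 + 2 * x) * (1 - 2 * x) by ring, hx2, mul_zero]
    simp [this]
  · have e : sin (π * x) = cos (π * x) * S + sin ((2 * ((2 * M : ℕ) : ℝ) + 1) * (π * x)) := by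
      rw [ht]; ring
    rw [e]
    field_simp
end

section
/- Let d be a real number with d < 0 and d not an integer. Then the series ∑_{n≥0} D_n(d) converges absolutely and ∑_{n≥0} D_n(d) = 0. (In this analytic continuation in d, the total number of Laplacian eigenmodes on the sphere vanishes, so that terms proportional to Tr[1] drop from the regularized free energy.) -/
open Real

open Filter Topology in
theorem aux_prod (s : ℝ) (hs : ∀ m : ℤ, s ≠ (m : ℝ)) (n : ℕ) :
    Real.Gamma (s + n) = Real.Gamma s * ∏ j ∈ Finset.range n, (s + j) := by
  induction n with
  | zero => simp
  | succ n ih =>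
    have h : s + n ≠ 0 := by
      intro h
      apply hs (-(n : ℤ))
      push_cast
      linarith
    rw [Finset.prod_range_succ, ← mul_assoc, ← ih]
    push_cast
    rw [← add_assoc, Real.Gamma_add_one h]
    ring

open Filter Topology in
theorem aux_partial (d : ℝ) (hdint : ∀ m : ℤ, d ≠ (m : ℝ)) (N : ℕ) :
    ∑ n ∈ Finset.range N, sphereDegeneracy d n =
      Real.Gamma (N + d - 1) * (2 * N + d - 2) * N / (Real.Gamma (N + 1) * (d * Real.Gamma d)) := by
  have hd0 : d ≠ 0 := by simpa using hdint 0
  have hG : Real.Gamma d ≠ 0 := by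
    apply Real.Gamma_ne_zero
    intro m h
    apply hdint (-(m : ℤ))
    push_cast
    exact h
  induction N with
  | zero => simp
  | succ N ih =>
    rw [Finset.sum_range_succ, ih, sphereDegeneracy]
    have h : (N : ℝ) + d - 1 ≠ 0 := by
      intro h
      apply hdint (1 - (N : ℤ))
      push_cast
      linarith
    have hN : (N : ℝ) + 1 ≠ 0 := by positivity
    have hGN : Real.Gamma ((N : ℝ) + 1) ≠ 0 := (Real.Gamma_pos_of_pos (by positivity)).ne'
    push_cast
    rw [Real.Gamma_add_one hN, show (N : ℝ) + 1 + d - 1 = (N + d - 1) + 1 by ring,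
      Real.Gamma_add_one h]
    field_simp
    ring

open Filter Topology in
theorem aux_lim (d : ℝ) (hd : d < 0) (hdint : ∀ m : ℤ, d ≠ (m : ℝ)) :
    Tendsto (fun N : ℕ => ∑ n ∈ Finset.range N, sphereDegeneracy d n) atTop (𝓝 0) := by
  have hs : ∀ m : ℤ, d - 1 ≠ (m : ℝ) := by
    intro m h
    apply hdint (m + 1)
    push_cast
    linarith
  have hG : Real.Gamma (d - 1) ≠ 0 := by
    apply Real.Gamma_ne_zero
    intro m h
    apply hs (-(m : ℤ))
    push_cast
    exact h
  have hinv := (Real.GammaSeq_tendsto_Gamma (d - 1)).inv₀ hG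
  have h1 : Tendsto (fun n : ℕ => (n : ℝ) ^ d) atTop (𝓝 0) := by
    have := (tendsto_rpow_neg_atTop (y := -d) (by linarith)).comp (tendsto_natCast_atTop_atTop (R := ℝ))
    simpa [Function.comp_def] using this
  have h2 : Tendsto (fun n : ℕ => 2 + d / (n : ℝ)) atTop (𝓝 (2 + 0)) :=
    tendsto_const_nhds.add (tendsto_const_div_atTop_nhds_zero_nat d)
  have h3 := ((h1.mul h2).mul hinv).mul_const (Real.Gamma (d - 1) / (d * Real.Gamma d))
  rw [← tendsto_add_atTop_iff_nat 1]
  simp only [zero_mul] at h3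
  refine h3.congr' ?_
  filter_upwards [eventually_gt_atTop 0] with n hn
  have hn' : (0 : ℝ) < n := by exact_mod_cast hn
  rw [aux_partial d hdint, Real.GammaSeq]
  have hp := aux_prod (d - 1) hs (n + 1)
  have hP : ∏ j ∈ Finset.range (n + 1), (d - 1 + (j : ℝ)) ≠ 0 := by
    rw [Finset.prod_ne_zero_iff]
    intro j _ h
    apply hs (-(j : ℤ))
    push_cast
    linarith
  rw [show ((n + 1 : ℕ) : ℝ) + d - 1 = d - 1 + ((n + 1 : ℕ) : ℝ) by ring, hp,
    Real.Gamma_nat_eq_factorial, Nat.factorial_succ]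
  have hf : (n.factorial : ℝ) ≠ 0 := by positivity
  have hr : (n : ℝ) ^ d ≠ 0 := (Real.rpow_pos_of_pos hn' _).ne'
  have hd0 : d ≠ 0 := hd.ne
  have hn1 : (n : ℝ) + 1 ≠ 0 := by positivity
  rw [Real.rpow_sub_one hn'.ne']
  push_cast
  generalize ∏ j ∈ Finset.range (n + 1), (d - 1 + (j : ℝ)) = P at *
  field_simp
  ring

open Filter Topology in
theorem sum_multiplicities_vanishes (d : ℝ) (hd : d < 0) (hdint : ∀ m : ℤ, d ≠ (m : ℝ)) :
    Summable (fun n : ℕ => |sphereDegeneracy d n|) ∧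
    ∑' n : ℕ, sphereDegeneracy d n = 0 := by
  have hlim := aux_lim d hd hdint
  have hG : Real.Gamma d ≠ 0 := by
    apply Real.Gamma_ne_zero
    intro m h
    apply hdint (-(m : ℤ))
    push_cast
    exact h
  obtain ⟨K, hK⟩ := exists_nat_gt (1 - d)
  have hsum : Summable (fun n : ℕ => sphereDegeneracy d n) := by
    rw [← summable_nat_add_iff K, ← summable_mul_right_iff hG]
    have hnn : ∀ n : ℕ, 0 ≤ sphereDegeneracy d (n + K) * Real.Gamma d := by
      intro n
      have hn : (0 : ℝ) ≤ n := by positivity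
      have e : sphereDegeneracy d (n + K) * Real.Gamma d =
        Real.Gamma (((n + K : ℕ) : ℝ) + d - 1) * (2 * ((n + K : ℕ) : ℝ) + d - 1) /
          Real.Gamma (((n + K : ℕ) : ℝ) + 1) := by
        rw [sphereDegeneracy]
        field_simp
      rw [e]
      push_cast
      have a1 := Real.Gamma_pos_of_pos (show 0 < (n : ℝ) + K + d - 1 by linarith)
      have a2 := Real.Gamma_pos_of_pos (show 0 < (n : ℝ) + K + 1 by positivity)
      have a3 : 0 < 2 * ((n : ℝ) + K) + d - 1 := by linarith
      positivity
    have ht : Tendsto (fun N : ℕ => ∑ n ∈ Finset.range N, sphereDegeneracy d (n + K) * Real.Gamma d)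
        atTop (𝓝 ((0 - ∑ n ∈ Finset.range K, sphereDegeneracy d n) * Real.Gamma d)) := by
      have := (((tendsto_add_atTop_iff_nat K).2 hlim).sub_const
        (∑ n ∈ Finset.range K, sphereDegeneracy d n)).mul_const (Real.Gamma d)
      refine this.congr fun N => ?_
      rw [← Finset.sum_mul, add_comm N K, Finset.sum_range_add]
      simp [add_comm]
    exact ((hasSum_iff_tendsto_nat_of_nonneg hnn _).2 ht).summable
  exact ⟨hsum.abs, tendsto_nhds_unique hsum.hasSum.tendsto_sum_nat hlim⟩
end

section
/- Let d be a real number which is not an integer ≤ 1, and let u be a real number with |u| < 1. Then the series ∑_{n≥0} D_n(d)·uⁿ converges absolutely and ∑_{n≥0} D_n(d)·uⁿ = (1 + u)·(1 − u)^{−d}. -/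
open Real

lemma choose_aux (d : ℝ) (hd : ∀ k : ℕ, d + k ≠ 0) (n : ℕ) :
    Ring.choose (d + n - 1) n = Real.Gamma (n + d) / (Real.Gamma ((n : ℝ) + 1) * Real.Gamma d) := by
  have hG : Real.Gamma d ≠ 0 := Real.Gamma_ne_zero (fun m h => hd m (by rw [h]; ring))
  have h1 : Ring.choose (d + n - 1) n = Ring.multichoose d n := by
    unfold Ring.choose; congr 1; ring
  have h2 := Ring.factorial_nsmul_multichoose_eq_ascPochhammer d n
  have h3 : (ascPochhammer ℕ n).smeval d = Real.Gamma (n + d) / Real.Gamma d := by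
    rw [Polynomial.ascPochhammer_smeval_eq_eval]
    clear h1 h2
    induction n with
    | zero => simp [hG]
    | succ k ih =>
      rw [ascPochhammer_succ_eval, ih]
      have : ((k + 1 : ℕ) : ℝ) + d = (k + d) + 1 := by push_cast; ring
      rw [this, Real.Gamma_add_one (by rw [add_comm]; exact hd k)]
      ring
  rw [h1, Real.Gamma_nat_eq_factorial]
  rw [h3, nsmul_eq_mul] at h2
  have : (n.factorial : ℝ) ≠ 0 := by positivity
  rw [eq_div_iff hG] at h2
  rw [eq_div_iff (by positivity), ← h2]
  ring

theorem generating_function_of_multiplicities (d : ℝ)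
    (hdint : ∀ m : ℤ, m ≤ 1 → d ≠ (m : ℝ)) (u : ℝ) (hu : |u| < 1) :
    Summable (fun n : ℕ => |sphereDegeneracy d n * u ^ n|) ∧
    ∑' n : ℕ, sphereDegeneracy d n * u ^ n = (1 + u) * (1 - u) ^ (-d) := by
  have hd : ∀ k : ℕ, d + k ≠ 0 := fun k h =>
    hdint (-k) (by omega) (by push_cast; linarith)
  have hd1 : d - 1 ≠ 0 := fun h => hdint 1 le_rfl (by push_cast; linarith)
  have hG : Real.Gamma d ≠ 0 := Real.Gamma_ne_zero (fun m h => hd m (by rw [h]; ring))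
  set c : ℕ → ℝ := fun n => Ring.choose (d + n - 1) n with hc
  have hs : HasSum (fun n => c n * u ^ n) ((1 - u) ^ (-d)) := by
    have := (Real.one_div_one_sub_rpow_hasFPowerSeriesOnBall_zero d).hasSum (y := u)
      (by simpa [Metric.mem_eball, edist_dist, Real.dist_eq] using hu)
    rw [Real.rpow_neg (by linarith [(abs_lt.1 hu).2])]
    simpa [FormalMultilinearSeries.ofScalars_apply_eq, hc, mul_comm] using this
  have h0 : sphereDegeneracy d 0 = c 0 := by
    have h := Real.Gamma_add_one hd1
    rw [sub_add_cancel] at h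
    simp only [hc, choose_aux d hd, sphereDegeneracy]
    simp only [Nat.cast_zero, zero_add, mul_zero]
    rw [h]; ring
  have hS : ∀ k, sphereDegeneracy d (k+1) = c (k+1) + c k := by
    intro k
    simp only [hc, choose_aux d hd, sphereDegeneracy]
    have e1 : ((k + 1 : ℕ) : ℝ) + d = (k + d) + 1 := by push_cast; ring
    have e2 : ((k + 1 : ℕ) : ℝ) + d - 1 = k + d := by push_cast; ring
    have hk : (k : ℝ) + 1 ≠ 0 := by positivity
    rw [e2, e1, Real.Gamma_add_one (s := (k : ℝ) + d) (by rw [add_comm]; exact hd k)]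
    have e3 : Real.Gamma (((k + 1 : ℕ) : ℝ) + 1) = (k + 1) * Real.Gamma ((k : ℝ) + 1) := by
      push_cast; exact Real.Gamma_add_one hk
    rw [e3]
    have : Real.Gamma ((k : ℝ) + 1) ≠ 0 := (Real.Gamma_pos_of_pos (by positivity)).ne'
    push_cast
    field_simp
    ring
  have hs1 : HasSum (fun n => c (n+1) * u ^ (n+1)) ((1 - u) ^ (-d) - c 0) := by
    simpa using (hasSum_nat_add_iff' (f := fun n => c n * u ^ n) 1).2 hs
  have hs2 : HasSum (fun n => sphereDegeneracy d (n+1) * u ^ (n+1))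
      ((1 - u) ^ (-d) - c 0 + u * (1 - u) ^ (-d)) := by
    refine (hs1.add (hs.mul_left u)).congr_fun ?_ 
    intro n; rw [hS]; ring
  have hf : HasSum (fun n => sphereDegeneracy d n * u ^ n) ((1 + u) * (1 - u) ^ (-d)) := by
    have h := (hasSum_nat_add_iff (f := fun n => sphereDegeneracy d n * u ^ n) 1).1 hs2
    have e : (1 - u) ^ (-d) - c 0 + u * (1 - u) ^ (-d) +
        ∑ i ∈ Finset.range 1, sphereDegeneracy d i * u ^ i = (1 + u) * (1 - u) ^ (-d) := by
      rw [Finset.sum_range_one, h0]; ring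
    rwa [e] at h
  exact ⟨hf.summable.abs, hf.tsum_eq⟩
end

section
/- Let d be a real number with 0 < d < 2 and d ≠ 1. Then the series ∑_{n≥0} Γ(n + d − 1)·(2n + d − 1)/(Γ(n+1)·(n + d/2)·(n + d/2 − 1)) converges absolutely and its sum equals 0. (This expresses the vanishing, in dimensional regularization, of the coincident-point propagator C₁(x,x) of a conformally coupled free scalar on the d-sphere.) -/
open Real

lemma tp_prod (s : ℝ) (hs : ∀ n : ℕ, s + n ≠ 0) (n : ℕ) :
    Real.Gamma (s + n) = Real.Gamma s * ∏ j ∈ Finset.range n, (s + j) := by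
  induction n with
  | zero => simp
  | succ k ih =>
    rw [Finset.prod_range_succ, ← mul_assoc, ← ih]
    push_cast
    rw [← add_assoc, Real.Gamma_add_one (hs k), mul_comm]

lemma tp_lim (d : ℝ) (hd0 : 0 < d) (hd2 : d < 2) (hs : ∀ n : ℕ, (d - 1) + n ≠ 0) :
    Filter.Tendsto (fun n : ℕ => Real.Gamma (n + d) / (Real.Gamma (n + 1) * (n + d / 2)))
      Filter.atTop (nhds 0) := by
  have hG : Real.Gamma (d - 1) ≠ 0 := by
    apply Real.Gamma_ne_zero
    intro m hm
    exact hs m (by rw [hm]; ring)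
  have h1 := (Real.GammaSeq_tendsto_Gamma (d - 1)).inv₀ hG
  have h2 : Filter.Tendsto (fun n : ℕ => (n : ℝ) ^ (-(2 - d))) Filter.atTop (nhds 0) :=
    (tendsto_rpow_neg_atTop (by linarith)).comp tendsto_natCast_atTop_atTop
  have h3 : Filter.Tendsto (fun n : ℕ => (n : ℝ) / (n + d / 2)) Filter.atTop (nhds 1) :=
    tendsto_natCast_div_add_atTop (d / 2)
  have h4 := ((h1.const_mul (Real.Gamma (d - 1))).mul h2).mul h3
  rw [mul_zero, zero_mul] at h4
  refine h4.congr' ?_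
  filter_upwards [Filter.eventually_gt_atTop 0] with n hn
  have hn' : (0 : ℝ) < n := by exact_mod_cast hn
  have e1 : (n : ℝ) + d = (d - 1) + ((n + 1 : ℕ) : ℝ) := by push_cast; ring
  rw [e1, tp_prod _ hs, Real.Gamma_nat_eq_factorial, Real.GammaSeq]
  have hP : ∏ j ∈ Finset.range (n + 1), (d - 1 + (j : ℝ)) ≠ 0 :=
    Finset.prod_ne_zero_iff.mpr fun j _ => hs j
  have e2 : (n : ℝ) ^ (d - 1) = (n : ℝ) ^ (-(2 - d)) * n := by
    rw [← Real.rpow_add_one hn'.ne']; congr 1; ring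
  have hp : (n : ℝ) ^ (-(2 - d)) ≠ 0 := (Real.rpow_pos_of_pos hn' _).ne'
  have hf : (n.factorial : ℝ) ≠ 0 := by exact_mod_cast n.factorial_ne_zero
  have hq : (n : ℝ) + d / 2 ≠ 0 := by positivity
  rw [e2]
  generalize (n : ℝ) ^ (-(2 - d)) = p at *
  generalize ∏ j ∈ Finset.range (n + 1), (d - 1 + (j : ℝ)) = P at *
  field_simp

theorem tadpole_vanishes_short_range (d : ℝ) (hd0 : 0 < d) (hd2 : d < 2) (hd1 : d ≠ 1) :
    Summable (fun n : ℕ =>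
      |Real.Gamma ((n : ℝ) + d - 1) * (2 * (n : ℝ) + d - 1) /
        (Real.Gamma ((n : ℝ) + 1) * ((n : ℝ) + d / 2) * ((n : ℝ) + d / 2 - 1))|) ∧
    ∑' n : ℕ,
      Real.Gamma ((n : ℝ) + d - 1) * (2 * (n : ℝ) + d - 1) /
        (Real.Gamma ((n : ℝ) + 1) * ((n : ℝ) + d / 2) * ((n : ℝ) + d / 2 - 1)) = 0 := by
  have hs : ∀ n : ℕ, (d - 1) + (n : ℝ) ≠ 0 := by
    intro n
    rcases Nat.eq_zero_or_pos n with rfl | h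
    · simpa [sub_eq_zero] using hd1
    · have : (1 : ℝ) ≤ n := by exact_mod_cast h
      linarith
  have hlim := tp_lim d hd0 hd2 hs
  set a : ℕ → ℝ := fun n : ℕ => Real.Gamma ((n : ℝ) + d - 1) * (2 * (n : ℝ) + d - 1) /
        (Real.Gamma ((n : ℝ) + 1) * ((n : ℝ) + d / 2) * ((n : ℝ) + d / 2 - 1)) with ha
  have hc : d / 2 - 1 ≠ 0 := by linarith
  have hpart : ∀ n : ℕ, ∑ i ∈ Finset.range (n + 1), a i =
      (d / 2 - 1)⁻¹ * (Real.Gamma (n + d) / (Real.Gamma (n + 1) * (n + d / 2))) := by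
    intro n
    induction n with
    | zero =>
      have : Real.Gamma d = (d - 1) * Real.Gamma (d - 1) := by
        rw [← Real.Gamma_add_one (by simpa using hs 0)]; congr 1; ring
      simp [ha, this]
      field_simp
    | succ k ih =>
      rw [Finset.sum_range_succ, ih]
      simp only [ha]
      push_cast
      have hk : (0 : ℝ) ≤ k := k.cast_nonneg
      have g1 : Real.Gamma ((k : ℝ) + 1 + d) = (k + d) * Real.Gamma (k + d) := by
        rw [← Real.Gamma_add_one (by positivity)]; congr 1; ring
      have g2 : Real.Gamma ((k : ℝ) + 1 + 1) = (k + 1) * Real.Gamma (k + 1) :=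
        Real.Gamma_add_one (by positivity)
      have g3 : (k : ℝ) + 1 + d - 1 = k + d := by ring
      have g4 : (k : ℝ) + 1 + d / 2 - 1 = k + d / 2 := by ring
      have g5 : Real.Gamma ((k : ℝ) + 1) ≠ 0 := (Real.Gamma_pos_of_pos (by positivity)).ne'
      rw [g1, g2, g3, g4]
      generalize Real.Gamma ((k : ℝ) + 1) = A at *
      generalize Real.Gamma ((k : ℝ) + d) = B at *
      have q1 : (k : ℝ) + d / 2 ≠ 0 := by positivity
      have q2 : (k : ℝ) + 1 + d / 2 ≠ 0 := by positivity
      have q3 : (k : ℝ) + 1 ≠ 0 := by positivity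
      generalize hu : d / 2 = u at *
      obtain rfl : d = 2 * u := by linarith
      field_simp
      ring
  have hT : Filter.Tendsto (fun n : ℕ => ∑ i ∈ Finset.range (n + 1), a i) Filter.atTop
      (nhds 0) := by
    simp only [hpart]
    simpa using hlim.const_mul (d / 2 - 1)⁻¹
  have hnn : ∀ n : ℕ, 0 ≤ a (n + 1) := by
    intro n
    have hk : (0 : ℝ) ≤ n := n.cast_nonneg
    simp only [ha]
    push_cast
    have := Real.Gamma_pos_of_pos (show (0 : ℝ) < n + 1 + d - 1 by linarith)
    have := Real.Gamma_pos_of_pos (show (0 : ℝ) < n + 1 + 1 by linarith)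
    have : (0 : ℝ) < 2 * (n + 1) + d - 1 := by linarith
    have : (0 : ℝ) < n + 1 + d / 2 - 1 := by linarith
    positivity
  have hS1 : HasSum (fun n => a (n + 1)) (-a 0) := by
    rw [hasSum_iff_tendsto_nat_of_nonneg hnn]
    have := hT.sub_const (a 0)
    simpa [Finset.sum_range_succ'] using this
  have hS : HasSum a 0 := by
    have := (hasSum_nat_add_iff (f := a) 1).mp hS1
    simpa using this
  exact ⟨hS.summable.abs, hS.tsum_eq⟩
end

section
/- Let ζ and d be real numbers with 0 < ζ < 1, 2ζ − 2 < d < 0 and d ≠ −2ζ. Then the function u ↦ u^{d/2 − ζ − 1}·(1−u)^{2ζ−1}·((1−u)^{−d}(1+u) − 1) is Lebesgue integrable on (0,1) and Γ(d/2 − ζ)/Γ(d/2 + ζ) + (1/Γ(2ζ))·∫₀¹ u^{d/2 − ζ − 1}(1−u)^{2ζ−1}((1−u)^{−d}(1+u) − 1) du = 0. (This expresses the vanishing, in dimensional regularization, of the coincident-point propagator C(x,x) of the long-range generalized free field with exponent ζ on the d-sphere.) -/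
open Real MeasureTheory

lemma tad_beta (α β : ℝ) (hα : 0 < α) (hβ : 0 < β) :
    IntegrableOn (fun u : ℝ => u ^ (α - 1) * (1 - u) ^ (β - 1)) (Set.Ioo 0 1) ∧
    ∫ u in Set.Ioo (0 : ℝ) 1, u ^ (α - 1) * (1 - u) ^ (β - 1) =
      Real.Gamma α * Real.Gamma β / Real.Gamma (α + β) := by
  have hc := Complex.betaIntegral_convergent (u := (α : ℂ)) (v := (β : ℂ)) (by simpa) (by simpa)
  rw [intervalIntegrable_iff_integrableOn_Ioo_of_le zero_le_one] at hc
  have hEq : ∀ x ∈ Set.Ioo (0 : ℝ) 1,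
      (x : ℂ) ^ ((α : ℂ) - 1) * (1 - (x : ℂ)) ^ ((β : ℂ) - 1) =
      ((x ^ (α - 1) * (1 - x) ^ (β - 1) : ℝ) : ℂ) := by
    intro x hx
    rw [Complex.ofReal_mul, Complex.ofReal_cpow hx.1.le,
      Complex.ofReal_cpow (by linarith [hx.2])]
    push_cast
    rfl
  constructor
  · have := (hc.congr_fun hEq measurableSet_Ioo).re
    simp only [IntegrableOn]
    simpa using this
  · have h := Complex.betaIntegral_eq_Gamma_mul_div (α : ℂ) (β : ℂ) (by simpa) (by simpa)
    rw [Complex.betaIntegral, intervalIntegral.integral_of_le zero_le_one,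
      integral_Ioc_eq_integral_Ioo, setIntegral_congr_fun measurableSet_Ioo hEq,
      integral_complex_ofReal, ← Complex.ofReal_add, Complex.Gamma_ofReal, Complex.Gamma_ofReal,
      Complex.Gamma_ofReal] at h
    exact_mod_cast h

lemma tad_bound (e u : ℝ) (h0 : 0 < e) (h2 : e < 2) (hu0 : 0 ≤ u) (hu1 : u ≤ 1) :
    (1 - u) ^ e ≤ 1 ∧ (1 - u) ^ 2 ≤ (1 - u) ^ e := by
  constructor
  · exact Real.rpow_le_one (by linarith) (by linarith) h0.le
  · rw [← Real.rpow_natCast]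
    exact Real.rpow_le_rpow_of_exponent_ge' (by linarith) (by linarith) h0.le (by push_cast; linarith)

theorem tadpole_vanishes_long_range (ζ d : ℝ) (hζ0 : 0 < ζ) (hζ1 : ζ < 1)
    (hd1 : 2 * ζ - 2 < d) (hd2 : d < 0) (hd3 : d ≠ -(2 * ζ)) :
    MeasureTheory.IntegrableOn
      (fun u : ℝ => u ^ (d / 2 - ζ - 1) * (1 - u) ^ (2 * ζ - 1) *
        ((1 - u) ^ (-d) * (1 + u) - 1)) (Set.Ioo 0 1) ∧
    Real.Gamma (d / 2 - ζ) / Real.Gamma (d / 2 + ζ) +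
      (1 / Real.Gamma (2 * ζ)) * ∫ u in Set.Ioo (0 : ℝ) 1,
        u ^ (d / 2 - ζ - 1) * (1 - u) ^ (2 * ζ - 1) * ((1 - u) ^ (-d) * (1 + u) - 1)
      = 0 := by
  obtain ⟨a, ha⟩ : ∃ a, a = d / 2 - ζ := ⟨_, rfl⟩
  have hab : d / 2 + ζ = a + 2 * ζ := by rw [ha]; ring
  rw [← ha, hab]
  have ha1 : -1 < a := by linarith
  have ha0 : a < 0 := by linarith
  have hb : 0 < 2 * ζ := by linarith
  have hs : a + 2 * ζ ≠ 0 := fun h => hd3 (by linarith)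
  obtain ⟨hBi, hB⟩ := tad_beta (a + 1) (2 * ζ) (by linarith) hb
  simp only [add_sub_cancel_right] at hBi hB
  have hpu : ∀ u : ℝ, 0 < u → u ^ a = u ^ (a - 1) * u := fun u hu => by
    rw [← Real.rpow_add_one hu.ne']; congr 1; ring
  have hI : IntegrableOn
      (fun u : ℝ => u ^ (a - 1) * (1 - u) ^ (2 * ζ - 1) *
        ((1 - u) ^ (-d) * (1 + u) - 1)) (Set.Ioo 0 1) := by
    refine Integrable.mono' (hBi.const_mul 2) (by fun_prop) ?_
    refine (ae_restrict_iff' measurableSet_Ioo).2 (ae_of_all _ fun u hu => ?_)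
    obtain ⟨h1, h2⟩ := tad_bound (-d) u (by linarith) (by linarith) hu.1.le hu.2.le
    have hp : 0 < u ^ (a - 1) := Real.rpow_pos_of_pos hu.1 _
    have hq : 0 < (1 - u) ^ (2 * ζ - 1) := Real.rpow_pos_of_pos (by linarith [hu.2]) _
    have hu0 := hu.1
    have hu1 := hu.2
    have key : |(1 - u) ^ (-d) * (1 + u) - 1| ≤ 2 * u := by
      rw [abs_le]
      constructor
      · have := mul_le_mul_of_nonneg_right h2 (by linarith : 0 ≤ 1 + u)
        have h3 : 0 ≤ u * (1 - u) := mul_nonneg hu0.le (by linarith)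
        have h4 : 0 ≤ u * u * u := by positivity
        nlinarith
      · nlinarith
    rw [norm_mul, Real.norm_of_nonneg (mul_pos hp hq).le, Real.norm_eq_abs, hpu u hu0]
    calc _ ≤ u ^ (a - 1) * (1 - u) ^ (2 * ζ - 1) * (2 * u) := by gcongr
      _ = _ := by ring
  refine ⟨hI, ?_⟩
  have hF : ∫ u in (0:ℝ)..1, (a * (u ^ (a - 1) * (1 - u) ^ (2 * ζ - 1) *
        ((1 - u) ^ (-d) * (1 + u) - 1)) + (a + 2 * ζ) * (u ^ a * (1 - u) ^ (2 * ζ - 1))) =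
      (1:ℝ) ^ a * ((1 - 1) ^ (2 * ζ - d) - (1 - 1) ^ (2 * ζ)) -
      (0:ℝ) ^ a * ((1 - 0) ^ (2 * ζ - d) - (1 - 0) ^ (2 * ζ)) := by
    refine intervalIntegral.integral_eq_sub_of_hasDerivAt_of_le
      (f := fun u : ℝ => u ^ a * ((1 - u) ^ (2 * ζ - d) - (1 - u) ^ (2 * ζ))) zero_le_one ?_ ?_ ?_
    · intro u hu
      rcases hu.1.eq_or_lt with h | h
      · subst h
        have hlim : Filter.Tendsto (fun u : ℝ => 2 * |u| ^ (a + 1)) (nhds 0) (nhds 0) := by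
          have : ContinuousAt (fun u : ℝ => 2 * |u| ^ (a + 1)) 0 :=
            continuousAt_const.mul (continuous_abs.continuousAt.rpow_const (Or.inr (by linarith)))
          have h0 := this.tendsto
          simpa [Real.zero_rpow (by linarith : a + 1 ≠ 0)] using h0
        have hf0 : (0:ℝ) ^ a * ((1 - 0) ^ (2 * ζ - d) - (1 - 0) ^ (2 * ζ)) = 0 := by simp
        unfold ContinuousWithinAt
        simp only [hf0]
        refine squeeze_zero_norm' ?_ (hlim.mono_left nhdsWithin_le_nhds)
        filter_upwards [self_mem_nhdsWithin] with u hu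
        rcases hu.1.eq_or_lt with h | h
        · subst h
          rw [hf0, norm_zero]
          positivity
        · have hv : 0 ≤ 1 - u := by linarith [hu.2]
          obtain ⟨h1, h2⟩ := tad_bound (-d) u (by linarith) (by linarith) hu.1 hu.2
          have hq0 : 0 ≤ (1 - u) ^ (2 * ζ) := Real.rpow_nonneg hv _
          have hq1 : (1 - u) ^ (2 * ζ) ≤ 1 := Real.rpow_le_one hv (by linarith) hb.le
          have hsplit : (1 - u) ^ (2 * ζ - d) = (1 - u) ^ (2 * ζ) * (1 - u) ^ (-d) := by
            rw [sub_eq_add_neg (2 * ζ) d, Real.rpow_add_of_nonneg hv hb.le (by linarith)]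
          have hp : 0 ≤ u ^ a := Real.rpow_nonneg h.le _
          have key : |(1 - u) ^ (-d) - 1| ≤ 2 * u := by
            rw [abs_le]
            constructor <;> nlinarith
          rw [hsplit, abs_of_pos h, Real.rpow_add_one h.ne', norm_mul, Real.norm_of_nonneg hp,
            ← mul_sub_one, norm_mul, Real.norm_of_nonneg hq0, Real.norm_eq_abs]
          calc _ ≤ u ^ a * (1 * (2 * u)) := by gcongr
            _ = _ := by ring
      · refine ContinuousAt.continuousWithinAt ?_
        refine (continuousAt_id.rpow_const (Or.inl h.ne')).mul (ContinuousAt.sub ?_ ?_)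
        · exact ContinuousAt.rpow_const (by fun_prop) (Or.inr (by linarith))
        · exact ContinuousAt.rpow_const (by fun_prop) (Or.inr (by linarith))
    · intro u hu
      have hu0 := hu.1
      have hv : 0 < 1 - u := by linarith [hu.2]
      have e1 := Real.hasDerivAt_rpow_const (x := u) (p := a) (Or.inl hu0.ne')
      have ev : HasDerivAt (fun u : ℝ => 1 - u) (-1) u := by
        simpa using (hasDerivAt_id u).const_sub 1
      have e2 := ev.rpow_const (p := 2 * ζ - d) (Or.inl hv.ne')
      have e3 := ev.rpow_const (p := 2 * ζ) (Or.inl hv.ne')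
      have := e1.mul (e2.sub e3)
      refine this.congr_deriv ?_
      have r1 : (1 - u) ^ (2 * ζ) = (1 - u) ^ (2 * ζ - 1) * (1 - u) := by
        rw [← Real.rpow_add_one hv.ne']; congr 1; ring
      have r2 : (1 - u) ^ (2 * ζ - d - 1) = (1 - u) ^ (2 * ζ - 1) * (1 - u) ^ (-d) := by
        rw [← Real.rpow_add hv]; congr 1; ring
      have r3 : (1 - u) ^ (2 * ζ - d) = (1 - u) ^ (2 * ζ - 1) * (1 - u) ^ (-d) * (1 - u) := by
        rw [← r2, ← Real.rpow_add_one hv.ne']; congr 1; ring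
      simp only [Pi.sub_apply]
      rw [r1, r2, r3, hpu u hu0]
      have : d = 2 * a + 2 * ζ := by linarith
      generalize (1 - u) ^ (-d) = r
      rw [this]
      ring
    · rw [intervalIntegrable_iff_integrableOn_Ioo_of_le zero_le_one]
      exact (hI.const_mul a).add (hBi.const_mul _)
  rw [intervalIntegral.integral_of_le zero_le_one, integral_Ioc_eq_integral_Ioo,
    integral_add (hI.const_mul a) (hBi.const_mul _), integral_const_mul, integral_const_mul, hB] at hF
  simp only [sub_self, sub_zero, Real.one_rpow, mul_zero, Real.zero_rpow hb.ne',
    Real.zero_rpow (by linarith : 2 * ζ - d ≠ 0)] at hF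
  generalize (∫ u in Set.Ioo (0 : ℝ) 1, u ^ (a - 1) * (1 - u) ^ (2 * ζ - 1) *
        ((1 - u) ^ (-d) * (1 + u) - 1)) = J at hF ⊢
  rw [Real.Gamma_add_one ha0.ne, show a + 1 + 2 * ζ = (a + 2 * ζ) + 1 by ring,
    Real.Gamma_add_one hs] at hF
  have hG : Real.Gamma (a + 2 * ζ) ≠ 0 := by
    have h1 := Real.Gamma_add_one hs
    have h2 := Real.Gamma_pos_of_pos (by linarith : 0 < a + 2 * ζ + 1)
    intro h
    rw [h, mul_zero] at h1
    linarith
  have hG2 := (Real.Gamma_pos_of_pos hb).ne'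
  field_simp at hF ⊢
  have : a * (Gamma a * Gamma (2 * ζ) + J * Gamma (a + 2 * ζ)) = 0 := by linarith
  have := (mul_eq_zero.1 this).resolve_left ha0.ne
  linarith
end

section
/- Let a, b, c be real numbers with a > −1, a ≠ 0, b > 0 and c > 0. Then the function t ↦ (1−t)^{a−1}·(t^{b−1} − t^{c−1}) is Lebesgue integrable on (0,1) and ∫₀¹ (1−t)^{a−1}(t^{b−1} − t^{c−1}) dt = Γ(a)Γ(b)/Γ(a+b) − Γ(a)Γ(c)/Γ(a+c). (This is the subtracted integral representation of the difference of Beta functions, valid also in the range −1 < a < 0 where each separate Beta integral diverges.) -/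
open Real MeasureTheory

lemma sbr_cplx (a b : ℝ) (t : ℝ) (ht : t ∈ Set.Ioo (0:ℝ) 1) :
    ((t : ℂ) ^ ((b : ℂ) - 1) * (1 - (t : ℂ)) ^ (((a + 1 : ℝ) : ℂ) - 1))
      = (((1 - t) ^ a * t ^ (b - 1) : ℝ) : ℂ) := by
  have h1 : (((a + 1 : ℝ) : ℂ) - 1) = (a : ℂ) := by push_cast; ring
  have h2 : (0:ℝ) ≤ 1 - t := by linarith [ht.2]
  rw [h1, Complex.ofReal_mul, Complex.ofReal_cpow h2, Complex.ofReal_cpow ht.1.le]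
  push_cast
  ring

lemma sbr_int (a b : ℝ) (ha1 : -1 < a) (hb : 0 < b) :
    IntegrableOn (fun t : ℝ => (1 - t) ^ a * t ^ (b - 1)) (Set.Ioo 0 1) := by
  have h := Complex.betaIntegral_convergent (u := (b : ℂ)) (v := ((a + 1 : ℝ) : ℂ))
    (by simpa using hb) (by rw [Complex.ofReal_re]; linarith)
  rw [intervalIntegrable_iff_integrableOn_Ioo_of_le zero_le_one] at h
  have h' := h.re
  refine IntegrableOn.congr_fun (f := fun t : ℝ => RCLike.re ((t : ℂ) ^ ((b : ℂ) - 1) * (1 - (t : ℂ)) ^ (((a + 1 : ℝ) : ℂ) - 1))) h' ?_ measurableSet_Ioo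
  intro t ht
  simp only []
  rw [sbr_cplx a b t ht]
  exact Complex.ofReal_re _

lemma sbr_val (a b : ℝ) (ha1 : -1 < a) (hb : 0 < b) :
    ∫ t in Set.Ioo (0:ℝ) 1, (1 - t) ^ a * t ^ (b - 1)
      = Real.Gamma (a + 1) * Real.Gamma b / Real.Gamma (a + b + 1) := by
  have h := Complex.betaIntegral_eq_Gamma_mul_div (b : ℂ) ((a + 1 : ℝ) : ℂ)
    (by simpa using hb) (by rw [Complex.ofReal_re]; linarith)
  rw [Complex.betaIntegral, intervalIntegral.integral_of_le zero_le_one,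
    integral_Ioc_eq_integral_Ioo,
    setIntegral_congr_fun measurableSet_Ioo (fun t ht => sbr_cplx a b t ht),
    integral_complex_ofReal, ← Complex.ofReal_add, Complex.Gamma_ofReal, Complex.Gamma_ofReal,
    Complex.Gamma_ofReal] at h
  have h' : ∫ t in Set.Ioo (0:ℝ) 1, (1 - t) ^ a * t ^ (b - 1)
      = Real.Gamma b * Real.Gamma (a + 1) / Real.Gamma (b + (a + 1)) := by
    exact_mod_cast h
  rw [h', mul_comm, show b + (a + 1) = a + b + 1 by ring]

lemma sbr_bound (d : ℝ) (hd : 0 ≤ d) (t : ℝ) (ht : t ∈ Set.Ioo (0:ℝ) 1) :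
    0 ≤ 1 - t ^ d ∧ 1 - t ^ d ≤ (max d 1) * (1 - t) := by
  refine ⟨by linarith [Real.rpow_le_one ht.1.le ht.2.le hd], ?_⟩
  have h1 := one_add_mul_self_le_rpow_one_add (s := t - 1) (by linarith [ht.1]) (le_max_right d 1)
  have h2 := Real.rpow_le_rpow_of_exponent_ge ht.1 ht.2.le (le_max_left d 1)
  rw [show 1 + (t - 1) = t by ring] at h1
  nlinarith

lemma sbr_gamma (a b : ℝ) (ha0 : a ≠ 0) :
    (1 + b / a) * (Real.Gamma (a + 1) * Real.Gamma b / Real.Gamma (a + b + 1))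
      = Real.Gamma a * Real.Gamma b / Real.Gamma (a + b) := by
  rw [Real.Gamma_add_one ha0]
  by_cases h : a + b = 0
  · have : 1 + b / a = 0 := by field_simp; linarith
    rw [this, h]; simp
  · rw [Real.Gamma_add_one h]
    by_cases h' : Real.Gamma (a + b) = 0
    · simp [h']
    · field_simp

lemma sbr_aux (a b c : ℝ) (ha1 : -1 < a) (ha0 : a ≠ 0)
    (hb : 0 < b) (hc : 0 < c) (hbc : b ≤ c) :
    MeasureTheory.IntegrableOn
      (fun t : ℝ => (1 - t) ^ (a - 1) * (t ^ (b - 1) - t ^ (c - 1))) (Set.Ioo 0 1) ∧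
    ∫ t in Set.Ioo (0 : ℝ) 1, (1 - t) ^ (a - 1) * (t ^ (b - 1) - t ^ (c - 1))
      = Real.Gamma a * Real.Gamma b / Real.Gamma (a + b) -
        Real.Gamma a * Real.Gamma c / Real.Gamma (a + c) := by
  set D := max (c - b) 1 with hD
  have key : ∀ t ∈ Set.Ioo (0:ℝ) 1, ∀ s p : ℝ,
      ‖(1 - t) ^ s * (t ^ p - t ^ (p + (c - b)))‖ ≤ D * ((1 - t) ^ (s + 1) * t ^ p) := by
    intro t ht s p
    obtain ⟨h1, h2⟩ := sbr_bound (c - b) (by linarith) t ht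
    have h3 : (0:ℝ) < 1 - t := by linarith [ht.2]
    have hs := Real.rpow_pos_of_pos h3 s
    have hp := Real.rpow_pos_of_pos ht.1 p
    rw [Real.rpow_add ht.1, Real.rpow_add_one h3.ne',
      show (1 - t) ^ s * (t ^ p - t ^ p * t ^ (c - b)) = ((1 - t) ^ s * t ^ p) * (1 - t ^ (c - b)) by ring,
      Real.norm_of_nonneg (by positivity)]
    calc _ ≤ ((1 - t) ^ s * t ^ p) * (D * (1 - t)) := by gcongr
      _ = _ := by ring
  have hint : IntegrableOn
      (fun t : ℝ => (1 - t) ^ (a - 1) * (t ^ (b - 1) - t ^ (c - 1))) (Set.Ioo 0 1) := by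
    refine Integrable.mono' ((sbr_int a b ha1 hb).const_mul D)
      (Measurable.aestronglyMeasurable (by fun_prop)) ?_
    refine ae_restrict_of_forall_mem measurableSet_Ioo (fun t ht => ?_)
    have := key t ht (a - 1) (b - 1)
    rwa [show b - 1 + (c - b) = c - 1 by ring, show a - 1 + 1 = a by ring] at this
  refine ⟨hint, ?_⟩
  have ib := (sbr_int a b ha1 hb).const_mul (a + b)
  have ic := (sbr_int a c ha1 hc).const_mul (a + c)
  have ibc : Integrable (fun t : ℝ => (a + b) * ((1 - t) ^ a * t ^ (b - 1))
      - (a + c) * ((1 - t) ^ a * t ^ (c - 1))) (volume.restrict (Set.Ioo 0 1)) := ib.sub ic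
  have ig := (ib.sub ic).sub (hint.const_mul a)
  have hF := intervalIntegral.integral_eq_sub_of_hasDerivAt_of_tendsto (a := (0:ℝ)) (b := 1)
    (f := fun t : ℝ => (1 - t) ^ a * (t ^ b - t ^ c)) (fa := 0) (fb := 0)
    (f' := fun t : ℝ => (a + b) * ((1 - t) ^ a * t ^ (b - 1)) - (a + c) * ((1 - t) ^ a * t ^ (c - 1))
      - a * ((1 - t) ^ (a - 1) * (t ^ (b - 1) - t ^ (c - 1)))) zero_lt_one ?_ ?_ ?_ ?_
  · rw [intervalIntegral.integral_of_le zero_le_one, integral_Ioc_eq_integral_Ioo,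
      integral_sub ibc (hint.const_mul a), integral_sub ib ic, integral_const_mul,
      integral_const_mul, integral_const_mul, sbr_val a b ha1 hb, sbr_val a c ha1 hc] at hF
    rw [← sbr_gamma a b ha0, ← sbr_gamma a c ha0]
    set I := ∫ t in Set.Ioo (0 : ℝ) 1, (1 - t) ^ (a - 1) * (t ^ (b - 1) - t ^ (c - 1))
    generalize Real.Gamma (a + 1) * Real.Gamma b / Real.Gamma (a + b + 1) = X at *
    generalize Real.Gamma (a + 1) * Real.Gamma c / Real.Gamma (a + c + 1) = Y at *
    field_simp
    linarith
  · intro t ht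
    have h3 : (0:ℝ) < 1 - t := by linarith [ht.2]
    have d1 : HasDerivAt (fun t : ℝ => (1 - t) ^ a) (-1 * a * (1 - t) ^ (a - 1)) t :=
      ((hasDerivAt_id t).const_sub 1).rpow_const (Or.inl h3.ne')
    have d2 := (Real.hasDerivAt_rpow_const (p := b) (Or.inl ht.1.ne')).sub
      (Real.hasDerivAt_rpow_const (p := c) (Or.inl ht.1.ne'))
    refine HasDerivAt.congr_deriv (d1.mul d2) ?_
    have e1 : (1 - t) ^ a = (1 - t) ^ (a - 1) * (1 - t) := by
      rw [← Real.rpow_add_one h3.ne']; ring_nf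
    have e2 : ∀ b : ℝ, t ^ b = t ^ (b - 1) * t := fun b => by
      rw [← Real.rpow_add_one ht.1.ne']; ring_nf
    rw [e1, e2 b, e2 c]
    ring
  · rw [intervalIntegrable_iff_integrableOn_Ioo_of_le zero_le_one]
    exact ig
  · have : ContinuousAt (fun t : ℝ => (1 - t) ^ a * (t ^ b - t ^ c)) 0 := by
      refine ContinuousAt.mul ?_ ?_
      · exact ContinuousAt.rpow_const (by fun_prop) (Or.inl (by norm_num))
      · exact (Real.continuousAt_rpow_const _ _ (Or.inr hb.le)).sub
          (Real.continuousAt_rpow_const _ _ (Or.inr hc.le))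
    have h := this.tendsto
    simp only [Real.zero_rpow hb.ne', Real.zero_rpow hc.ne', sub_self, mul_zero] at h
    exact h.mono_left nhdsWithin_le_nhds
  · have : ContinuousAt (fun t : ℝ => D * ((1 - t) ^ (a + 1) * t ^ b)) 1 := by
      refine ContinuousAt.mul (by fun_prop) (ContinuousAt.mul ?_ ?_)
      · exact ContinuousAt.rpow_const (by fun_prop) (Or.inr (by linarith))
      · exact (Real.continuousAt_rpow_const _ _ (Or.inr hb.le))
    have h := this.tendsto
    simp only [sub_self, Real.zero_rpow (show a + 1 ≠ 0 by linarith), zero_mul, mul_zero] at h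
    refine squeeze_zero_norm' ?_ (h.mono_left nhdsWithin_le_nhds)
    filter_upwards [Ioo_mem_nhdsLT (zero_lt_one (α := ℝ))] with t ht
    have := key t ht a b
    rwa [show b + (c - b) = c by ring] at this

theorem subtracted_beta_representation (a b c : ℝ) (ha1 : -1 < a) (ha0 : a ≠ 0)
    (hb : 0 < b) (hc : 0 < c) :
    MeasureTheory.IntegrableOn
      (fun t : ℝ => (1 - t) ^ (a - 1) * (t ^ (b - 1) - t ^ (c - 1))) (Set.Ioo 0 1) ∧
    ∫ t in Set.Ioo (0 : ℝ) 1, (1 - t) ^ (a - 1) * (t ^ (b - 1) - t ^ (c - 1))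
      = Real.Gamma a * Real.Gamma b / Real.Gamma (a + b) -
        Real.Gamma a * Real.Gamma c / Real.Gamma (a + c) := by
  rcases le_total b c with h | h
  · exact sbr_aux a b c ha1 ha0 hb hc h
  · obtain ⟨h1, h2⟩ := sbr_aux a c b ha1 ha0 hc hb h
    have e : (fun t : ℝ => (1 - t) ^ (a - 1) * (t ^ (b - 1) - t ^ (c - 1)))
        = fun t : ℝ => -((1 - t) ^ (a - 1) * (t ^ (c - 1) - t ^ (b - 1))) := by
      funext t; ring
    rw [e]
    refine ⟨h1.neg, ?_⟩
    rw [integral_neg, h2]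
    ring
end

section
/- Let d and ζ be real numbers with d < 0 and d/2 + ζ > 0. Then the function u ↦ u^{d/2 + ζ − 1}·((1−u)^{−d−1}(1+u) − 1) is Lebesgue integrable on (0,1) and ∫₀¹ u^{d/2 + ζ − 1}((1−u)^{−d−1}(1+u) − 1) du = 2ζ·Γ(d/2 + ζ)·Γ(−d)/Γ(ζ − d/2 + 1) − 1/(ζ + d/2). -/
open Real MeasureTheory

lemma beta_aux (a b : ℝ) (ha : 0 < a) (hb : 0 < b) :
    IntegrableOn (fun u : ℝ => u ^ (a - 1) * (1 - u) ^ (b - 1)) (Set.Ioo 0 1) ∧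
    ∫ u in Set.Ioo (0 : ℝ) 1, u ^ (a - 1) * (1 - u) ^ (b - 1)
      = Real.Gamma a * Real.Gamma b / Real.Gamma (a + b) := by
  have hint := Complex.betaIntegral_convergent (u := (a : ℂ)) (v := (b : ℂ)) (by simpa) (by simpa)
  rw [intervalIntegrable_iff_integrableOn_Ioo_of_le zero_le_one] at hint
  have heq : Set.EqOn (fun x : ℝ => (x : ℂ) ^ ((a : ℂ) - 1) * (1 - (x : ℂ)) ^ ((b : ℂ) - 1))
      (fun u : ℝ => ((u ^ (a - 1) * (1 - u) ^ (b - 1) : ℝ) : ℂ)) (Set.Ioo 0 1) := by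
    intro x hx
    have h1 : 0 ≤ x := hx.1.le
    have h2 : 0 ≤ 1 - x := by linarith [hx.2]
    simp only
    push_cast [Complex.ofReal_cpow h1, Complex.ofReal_cpow h2]
    rfl
  have hint2 := hint.congr_fun heq measurableSet_Ioo
  have hB := Complex.betaIntegral_eq_Gamma_mul_div (a : ℂ) (b : ℂ) (by simpa) (by simpa)
  rw [Complex.betaIntegral, intervalIntegral.integral_of_le zero_le_one,
    integral_Ioc_eq_integral_Ioo, setIntegral_congr_fun measurableSet_Ioo heq,
    integral_complex_ofReal, ← Complex.ofReal_add, Complex.Gamma_ofReal, Complex.Gamma_ofReal,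
    Complex.Gamma_ofReal] at hB
  refine ⟨?_, by exact_mod_cast hB⟩
  have := hint2.re
  simpa [IntegrableOn] using this

theorem subtracted_beta_integral (d ζ : ℝ) (hd : d < 0) (hdζ : 0 < d / 2 + ζ) :
    MeasureTheory.IntegrableOn
      (fun u : ℝ => u ^ (d / 2 + ζ - 1) * ((1 - u) ^ (-d - 1) * (1 + u) - 1))
      (Set.Ioo 0 1) ∧
    ∫ u in Set.Ioo (0 : ℝ) 1, u ^ (d / 2 + ζ - 1) * ((1 - u) ^ (-d - 1) * (1 + u) - 1)
      = 2 * ζ * Real.Gamma (d / 2 + ζ) * Real.Gamma (-d) / Real.Gamma (ζ - d / 2 + 1)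
        - 1 / (ζ + d / 2) := by
  have hb : 0 < -d := by linarith
  have hs : 0 < ζ - d / 2 := by linarith
  obtain ⟨i1, e1⟩ := beta_aux (d / 2 + ζ) (-d) hdζ hb
  obtain ⟨i2, e2⟩ := beta_aux (d / 2 + ζ + 1) (-d) (by linarith) hb
  obtain ⟨i3, e3⟩ := beta_aux (d / 2 + ζ) 1 hdζ one_pos
  have heq : Set.EqOn (fun u : ℝ => u ^ (d / 2 + ζ - 1) * (1 - u) ^ (-d - 1)
        + u ^ (d / 2 + ζ + 1 - 1) * (1 - u) ^ (-d - 1)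
        - u ^ (d / 2 + ζ - 1) * (1 - u) ^ ((1 : ℝ) - 1))
      (fun u : ℝ => u ^ (d / 2 + ζ - 1) * ((1 - u) ^ (-d - 1) * (1 + u) - 1))
      (Set.Ioo 0 1) := by
    intro u hu
    have h : u ^ (d / 2 + ζ + 1 - 1) = u ^ (d / 2 + ζ - 1) * u := by
      rw [← Real.rpow_add_one hu.1.ne']
      congr 1
      ring
    simp only [h, sub_self, Real.rpow_zero]
    ring
  have i12 : IntegrableOn (fun u : ℝ => u ^ (d / 2 + ζ - 1) * (1 - u) ^ (-d - 1)
        + u ^ (d / 2 + ζ + 1 - 1) * (1 - u) ^ (-d - 1)) (Set.Ioo 0 1) := i1.add i2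
  refine ⟨((i1.add i2).sub i3).congr_fun heq measurableSet_Ioo, ?_⟩
  rw [← setIntegral_congr_fun measurableSet_Ioo heq, integral_sub i12 i3,
    integral_add i1 i2, e1, e2, e3, Real.Gamma_one, Real.Gamma_add_one hdζ.ne']
  have a1 : d / 2 + ζ + -d = ζ - d / 2 := by ring
  have a2 : d / 2 + ζ + 1 + -d = ζ - d / 2 + 1 := by ring
  have g1 := (Real.Gamma_pos_of_pos hdζ).ne'
  have g2 := (Real.Gamma_pos_of_pos hs).ne'
  have a3 : ζ + d / 2 = d / 2 + ζ := by ring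
  rw [a1, a2, a3, Real.Gamma_add_one hs.ne']
  have k1 : Real.Gamma (d / 2 + ζ) * 1 / ((d / 2 + ζ) * Real.Gamma (d / 2 + ζ))
      = 1 / (d / 2 + ζ) := by
    rw [mul_one, div_mul_cancel_right₀ g1, one_div]
  rw [k1]
  congr 1
  have hs' := hs.ne'
  generalize Real.Gamma (ζ - d / 2) = G at *
  generalize Real.Gamma (d / 2 + ζ) = A at *
  have hz : ζ = (ζ - d / 2) + d / 2 := by ring
  generalize ζ - d / 2 = s at *
  subst hz
  field_simp
  ring
end

section
/- The series ∑_{n≥0} A_n·(27/256)ⁿ converges and its sum equals 4/3. (At the critical coupling of the melonic Schwinger–Dyson equation, the wave-function resummation factor takes the value 𝒵 = 4/3.) -/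
/-- The Fuss–Catalan numbers of order 4. -/
noncomputable def fussCatalan4 (n : ℕ) : ℝ :=
  (1 / (4 * (n : ℝ) + 1)) * (Nat.choose (4 * n + 1) n : ℝ)

open PowerSeries in
lemma fc4_coeff_one_sub_X_pow (k j : ℕ) :
    coeff j ((1 - X : ℝ⟦X⟧) ^ k) = (-1) ^ j * (k.choose j : ℝ) := by
  induction k generalizing j with
  | zero => cases j <;> simp [coeff_one]
  | succ k ih =>
    rw [pow_succ, mul_sub, mul_one, map_sub]
    cases j with
    | zero => simp
    | succ j =>
      rw [coeff_succ_mul_X, ih, ih, Nat.choose_succ_succ]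
      push_cast
      ring

lemma fc4_diff (m : ℕ) :
    ∑ n ∈ Finset.range (m + 2),
      ((-1 : ℝ) ^ (m + 1 - n) * ((m + 1).choose n : ℝ)) * ((4 * n).choose m : ℝ) = 0 := by
  have h := Polynomial.fwdDiff_iter_eq_zero_of_degree_lt
    (P := (descPochhammer ℝ m).comp (Polynomial.C 4 * Polynomial.X)) (n := m + 1) (by
      rw [Polynomial.natDegree_comp, descPochhammer_natDegree,
        Polynomial.natDegree_C_mul_X _ (by norm_num)]
      omega)
  have h2 := congrFun h 0
  rw [fwdDiff_iter_eq_sum_shift] at h2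
  have hm : (m.factorial : ℝ) ≠ 0 := by positivity
  apply mul_left_cancel₀ hm
  rw [mul_zero, Finset.mul_sum]
  refine Eq.trans (Finset.sum_congr rfl fun n _ => ?_) h2
  have e : (descPochhammer ℝ m).eval (4 * (n : ℝ)) = (m.factorial : ℝ) * ((4 * n).choose m : ℝ) := by
    have := descPochhammer_eval_eq_descFactorial ℝ (4 * n) m
    rw [Nat.descFactorial_eq_factorial_mul_choose] at this
    push_cast at this
    exact this
  simp [e]
  ring

lemma fc4_term (m n : ℕ) (h : n ≤ m + 1) :
    fussCatalan4 n * ((3 * n + 1).choose (m + 1 - n) : ℝ)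
      = ((m + 1).choose n : ℝ) * ((4 * n).choose m : ℝ) / (m + 1) := by
  unfold fussCatalan4
  have h1 : (4 * n + 1) * (4 * n).choose m = (4 * n + 1).choose (m + 1) * (m + 1) :=
    Nat.add_one_mul_choose_eq (4 * n) m
  have h2 : (4 * n + 1).choose (m + 1) * (m + 1).choose n
      = (4 * n + 1).choose n * (4 * n + 1 - n).choose (m + 1 - n) := Nat.choose_mul h
  rw [show 4 * n + 1 - n = 3 * n + 1 by omega] at h2
  have h1' : (4 * (n : ℝ) + 1) * ((4 * n).choose m : ℝ)
    = ((4 * n + 1).choose (m + 1) : ℝ) * (m + 1) := by exact_mod_cast h1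
  have h2' : ((4 * n + 1).choose (m + 1) : ℝ) * ((m + 1).choose n : ℝ)
      = ((4 * n + 1).choose n : ℝ) * ((3 * n + 1).choose (m + 1 - n) : ℝ) := by exact_mod_cast h2
  have p1 : (4 * (n : ℝ) + 1) ≠ 0 := by positivity
  have p2 : ((m : ℝ) + 1) ≠ 0 := by positivity
  field_simp
  linear_combination (-(m + 1 : ℝ)) * h2' - ((m + 1).choose n : ℝ) * h1'

lemma fc4_finite (m : ℕ) :
    ∑ n ∈ Finset.range (m + 2),
      fussCatalan4 n * ((-1 : ℝ) ^ (m + 1 - n) * ((3 * n + 1).choose (m + 1 - n) : ℝ)) = 0 := by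
  have := fc4_diff m
  rw [← zero_div ((m : ℝ) + 1), ← this, Finset.sum_div]
  refine Finset.sum_congr rfl fun n hn => ?_
  have := fc4_term m n (by simp at hn; omega)
  rw [mul_left_comm, this]
  ring

open PowerSeries in
lemma fc4_subst :
    (1 - X : ℝ⟦X⟧) * (PowerSeries.mk fussCatalan4).subst (X * (1 - X) ^ 3 : ℝ⟦X⟧) = 1 := by
  have hs : HasSubst (X * (1 - X) ^ 3 : ℝ⟦X⟧) := HasSubst.of_constantCoeff_zero' (by simp)
  ext m
  have hF := eq_X_pow_mul_shift_add_trunc (m + 1) (PowerSeries.mk fussCatalan4)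
  have h2 : (PowerSeries.mk fussCatalan4).subst (X * (1 - X) ^ 3 : ℝ⟦X⟧) =
      (X * (1 - X) ^ 3 : ℝ⟦X⟧) ^ (m + 1) *
        (PowerSeries.mk fun i ↦ coeff (i + (m + 1)) (PowerSeries.mk fussCatalan4)).subst
          (X * (1 - X) ^ 3 : ℝ⟦X⟧)
      + ∑ n ∈ Finset.range (m + 1), C (fussCatalan4 n) * (X * (1 - X) ^ 3 : ℝ⟦X⟧) ^ n := by
    conv_lhs => rw [hF]
    rw [subst_add hs, subst_mul hs, subst_pow hs, subst_X hs, subst_coe hs]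
    congr 1
    rw [trunc_apply]
    simp [Polynomial.aeval_monomial, ← Nat.Iio_eq_range]
  rw [h2, mul_add, map_add, mul_pow, mul_left_comm, mul_assoc, coeff_X_pow_mul',
    if_neg (by omega), zero_add, Finset.mul_sum, map_sum]
  have h3 : ∀ n ∈ Finset.range (m + 1),
      coeff m ((1 - X : ℝ⟦X⟧) * (C (fussCatalan4 n) * (X * (1 - X) ^ 3 : ℝ⟦X⟧) ^ n)) =
      fussCatalan4 n * ((-1 : ℝ) ^ (m - n) * ((3 * n + 1).choose (m - n) : ℝ)) := by
    intro n hn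
    have : (1 - X : ℝ⟦X⟧) * (C (fussCatalan4 n) * (X * (1 - X) ^ 3 : ℝ⟦X⟧) ^ n) =
      C (fussCatalan4 n) * (X ^ n * (1 - X) ^ (3 * n + 1)) := by
      rw [mul_pow, ← pow_mul, pow_succ]; ring
    rw [this, coeff_C_mul, coeff_X_pow_mul', if_pos (by simp at hn; omega),
      fc4_coeff_one_sub_X_pow]
  rw [Finset.sum_congr rfl h3]
  cases m with
  | zero => simp [fussCatalan4]
  | succ m => rw [fc4_finite]; simp [coeff_one]

open PowerSeries in
lemma fc4_functional :
    (PowerSeries.mk fussCatalan4) = 1 + X * ((PowerSeries.mk fussCatalan4) ^ 2) ^ 2 := by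
  set F := PowerSeries.mk fussCatalan4 with hFdef
  set φ : ℝ⟦X⟧ := X * (1 - X) ^ 3 with hφ
  have h0 : constantCoeff φ = 0 := by simp [hφ]
  have h1 : IsUnit (coeff 1 φ) := by
    have : coeff 1 φ = 1 := by
      rw [hφ, show (1 : ℕ) = 0 + 1 from rfl, coeff_succ_X_mul]; simp
    rw [this]; exact isUnit_one
  have hs : HasSubst φ := HasSubst.of_constantCoeff_zero' h0
  obtain ⟨ψ, hψs, hψ⟩ : ∃ ψ : ℝ⟦X⟧, HasSubst ψ ∧ φ.subst ψ = X :=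
    ⟨φ.substInvOfIsUnit h1, HasSubst.substInvOfIsUnit _ _, subst_substInvOfIsUnit_right _ h0 h1⟩
  have one : (1 : ℝ⟦X⟧).subst ψ = (1 : ℝ⟦X⟧) := by
    rw [← coe_substAlgHom hψs, map_one]
  have hu : (1 - X : ℝ⟦X⟧).subst ψ = 1 - ψ := by
    rw [subst_sub hψs, subst_X hψs, one]
  have a : (1 - ψ) * F = 1 := by
    have := congrArg (fun f : ℝ⟦X⟧ => (f.subst ψ : ℝ⟦X⟧)) fc4_subst
    rw [subst_mul hψs, hu, one, subst_comp_subst_apply hs hψs, hψ, X_subst] at this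
    exact this
  have b : ψ * (1 - ψ) ^ 3 = X := by
    rw [hφ, subst_mul hψs, subst_pow hψs, subst_X hψs, hu] at hψ
    exact hψ
  rw [← b]
  have c : ψ * (1 - ψ) ^ 3 * (F ^ 2) ^ 2 = ψ * F * ((1 - ψ) * F) ^ 3 := by ring
  rw [c, a]
  linear_combination a

lemma fc4_conv_le (f : ℕ → ℝ) (hf : ∀ n, 0 ≤ f n) (N : ℕ) :
    ∑ n ∈ Finset.range N, ∑ p ∈ Finset.HasAntidiagonal.antidiagonal n, f p.1 * f p.2
      ≤ (∑ n ∈ Finset.range N, f n) ^ 2 := by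
  rw [sq, Finset.sum_mul_sum, ← Finset.sum_product', ← Finset.sum_biUnion]
  · refine Finset.sum_le_sum_of_subset_of_nonneg ?_ fun p _ _ => mul_nonneg (hf _) (hf _)
    intro p hp
    simp only [Finset.mem_biUnion, Finset.mem_range, Finset.HasAntidiagonal.mem_antidiagonal] at hp
    simp only [Finset.mem_product, Finset.mem_range]
    omega
  · intro i _ j _ hij
    refine Finset.disjoint_left.mpr fun p hp hq => hij ?_
    rw [Finset.HasAntidiagonal.mem_antidiagonal] at hp hq
    omega

theorem fussCatalan4_critical_value :
    Summable (fun n : ℕ => fussCatalan4 n * (27 / 256 : ℝ) ^ n) ∧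
    ∑' n : ℕ, fussCatalan4 n * (27 / 256 : ℝ) ^ n = 4 / 3 := by
  set u : ℕ → ℝ := fun n : ℕ => fussCatalan4 n * (27 / 256 : ℝ) ^ n with hu
  set v : ℕ → ℝ := fun n => ∑ p ∈ Finset.HasAntidiagonal.antidiagonal n, u p.1 * u p.2 with hv
  set w : ℕ → ℝ := fun n => ∑ p ∈ Finset.HasAntidiagonal.antidiagonal n, v p.1 * v p.2 with hw
  have u0 : ∀ n, 0 ≤ u n := fun n => by simp only [hu, fussCatalan4]; positivity
  have v0 : ∀ n, 0 ≤ v n := fun n => Finset.sum_nonneg fun p _ => mul_nonneg (u0 _) (u0 _)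
  have uz : u 0 = 1 := by simp [hu, fussCatalan4]
  have key : ∀ n, ∀ f : PowerSeries ℝ, PowerSeries.coeff n (f ^ 2) * (27 / 256 : ℝ) ^ n =
      ∑ p ∈ Finset.HasAntidiagonal.antidiagonal n, (PowerSeries.coeff p.1 f * (27 / 256 : ℝ) ^ p.1) *
        (PowerSeries.coeff p.2 f * (27 / 256 : ℝ) ^ p.2) := by
    intro n f
    rw [sq, PowerSeries.coeff_mul, Finset.sum_mul]
    refine Finset.sum_congr rfl fun p hp => ?_
    rw [← Finset.HasAntidiagonal.mem_antidiagonal.mp hp, pow_add]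
    ring
  have us : ∀ n, u (n + 1) = 27 / 256 * w n := by
    intro n
    have h := congrArg (PowerSeries.coeff (n + 1)) fc4_functional
    rw [map_add, PowerSeries.coeff_succ_X_mul, PowerSeries.coeff_mk, PowerSeries.coeff_one,
      if_neg (by omega), zero_add] at h
    simp only [hw, hv, hu]
    rw [h, pow_succ (27 / 256 : ℝ), ← mul_assoc, key, mul_comm]
    simp only [key, PowerSeries.coeff_mk]
  have bound : ∀ N, ∑ n ∈ Finset.range N, u n ≤ 4 / 3 := by
    intro N
    induction N with
    | zero => norm_num
    | succ N ih =>
      rw [Finset.sum_range_succ', uz]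
      simp only [us]
      rw [← Finset.mul_sum]
      have a1 := fc4_conv_le v v0 N
      have a2 := fc4_conv_le u u0 N
      have n1 : 0 ≤ ∑ n ∈ Finset.range N, u n := Finset.sum_nonneg fun _ _ => u0 _
      have n2 : 0 ≤ ∑ n ∈ Finset.range N, v n := Finset.sum_nonneg fun _ _ => v0 _
      have a3 : (∑ n ∈ Finset.range N, u n) ^ 2 ≤ (4 / 3) ^ 2 := by gcongr
      have a4 : (∑ n ∈ Finset.range N, v n) ^ 2 ≤ ((4 / 3) ^ 2) ^ 2 := by
        gcongr; exact a2.trans a3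
      have a5 := a1.trans a4
      change 27 / 256 * ∑ n ∈ Finset.range N, w n + 1 ≤ 4 / 3
      change ∑ n ∈ Finset.range N, w n ≤ _ at a5
      linarith
  have hsu : Summable u := summable_of_sum_range_le u0 bound
  have hsun : Summable fun n => ‖u n‖ := hsu.norm
  have hsvn : Summable fun n => ‖v n‖ :=
    summable_norm_sum_mul_antidiagonal_of_summable_norm hsun hsun
  refine ⟨hsu, ?_⟩
  have e1 : (∑' n, u n) * (∑' n, u n) = ∑' n, v n :=
    tsum_mul_tsum_eq_tsum_sum_antidiagonal_of_summable_norm hsun hsun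
  have e2 : (∑' n, v n) * (∑' n, v n) = ∑' n, w n :=
    tsum_mul_tsum_eq_tsum_sum_antidiagonal_of_summable_norm hsvn hsvn
  have e3 : ∑' n, u n = 1 + 27 / 256 * ∑' n, w n := by
    rw [hsu.tsum_eq_zero_add, uz]
    simp only [us]
    rw [tsum_mul_left]
  rw [← e2, ← e1] at e3
  set s := ∑' n, u n
  have : (s - 4 / 3) ^ 2 * ((s + 4 / 3) ^ 2 + 32 / 9) = 0 := by
    linear_combination (-256 / 27) * e3
  have h2 : (s - 4 / 3) ^ 2 = 0 := by
    rcases mul_eq_zero.mp this with h | h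
    · exact h
    · nlinarith [sq_nonneg (s + 4 / 3)]
  have := pow_eq_zero_iff (two_ne_zero) |>.mp h2
  linarith
end

section
/- The power series ∑_{n≥0} A_n·xⁿ has radius of convergence exactly 27/256: it converges for every real x with |x| < 27/256 and diverges for every real x with |x| > 27/256. (The radius of convergence of the melonic resummation determines the maximal tetrahedral coupling λ_c for which the large-N model is defined.) -/
/-- The closed factorial form. -/
theorem fc4_closed (n : ℕ) :
    fussCatalan4 n = ((4 * n).factorial : ℝ) / ((n.factorial : ℝ) * ((3 * n + 1).factorial : ℝ)) := by
  have h := Nat.choose_mul_factorial_mul_factorial (show n ≤ 4 * n + 1 by omega)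
  rw [show 4 * n + 1 - n = 3 * n + 1 by omega, Nat.factorial_succ (4 * n)] at h
  have h' : ((4 * n + 1).choose n : ℝ) * (n.factorial : ℝ) * ((3 * n + 1).factorial : ℝ)
      = (4 * (n : ℝ) + 1) * ((4 * n).factorial : ℝ) := by exact_mod_cast h
  have h1 : (n.factorial : ℝ) ≠ 0 := by positivity
  have h2 : ((3 * n + 1).factorial : ℝ) ≠ 0 := by positivity
  have h3 : (4 * (n : ℝ) + 1) ≠ 0 := by positivity
  unfold fussCatalan4
  rw [eq_div_iff (mul_ne_zero h1 h2), one_div, mul_assoc, inv_mul_eq_iff_eq_mul₀ h3, ← h']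
  ring

theorem fc4_pos (n : ℕ) : 0 < fussCatalan4 n := by
  rw [fc4_closed]; positivity

theorem fc4_ratio (n : ℕ) :
    fussCatalan4 (n + 1) / fussCatalan4 n =
      ((4 * (n : ℝ) + 1) * (4 * n + 2) * (4 * n + 3) * (4 * n + 4)) /
        (((n : ℝ) + 1) * (3 * n + 2) * (3 * n + 3) * (3 * n + 4)) := by
  have e1 : ((4 * (n + 1)).factorial : ℝ) =
      (4 * (n : ℝ) + 4) * ((4 * n + 3) * ((4 * n + 2) * ((4 * n + 1) * ((4 * n).factorial : ℝ)))) := by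
    rw [show 4 * (n + 1) = 4 * n + 1 + 1 + 1 + 1 by ring]
    simp only [Nat.factorial_succ]
    push_cast
    ring
  have e2 : ((3 * (n + 1) + 1).factorial : ℝ) =
      (3 * (n : ℝ) + 4) * ((3 * n + 3) * ((3 * n + 2) * ((3 * n + 1).factorial : ℝ))) := by
    rw [show 3 * (n + 1) + 1 = (3 * n + 1) + 1 + 1 + 1 by ring,
      Nat.factorial_succ (3 * n + 1 + 1 + 1), Nat.factorial_succ (3 * n + 1 + 1),
      Nat.factorial_succ (3 * n + 1)]
    push_cast
    ring
  have e3 : ((n + 1).factorial : ℝ) = ((n : ℝ) + 1) * (n.factorial : ℝ) := by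
    rw [Nat.factorial_succ]; push_cast; ring
  rw [fc4_closed, fc4_closed, e1, e2, e3]
  have h1 : (n.factorial : ℝ) ≠ 0 := by positivity
  have h2 : ((3 * n + 1).factorial : ℝ) ≠ 0 := by positivity
  have h3 : ((4 * n).factorial : ℝ) ≠ 0 := by positivity
  field_simp

theorem fc4_tendsto :
    Filter.Tendsto (fun n : ℕ => fussCatalan4 (n + 1) / fussCatalan4 n) Filter.atTop
      (nhds (256 / 27)) := by
  have hu : Filter.Tendsto (fun n : ℕ => ((n : ℝ))⁻¹) Filter.atTop (nhds 0) :=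
    tendsto_inv_atTop_nhds_zero_nat
  have hc : ContinuousAt (fun u : ℝ => ((4 + u) * (4 + 2 * u) * (4 + 3 * u) * (4 + 4 * u)) /
      ((1 + u) * (3 + 2 * u) * (3 + 3 * u) * (3 + 4 * u))) 0 := by
    apply ContinuousAt.div
    · fun_prop
    · fun_prop
    · norm_num
  have h := hc.tendsto.comp hu
  have e : (256 / 27 : ℝ) = ((4 + (0:ℝ)) * (4 + 2 * 0) * (4 + 3 * 0) * (4 + 4 * 0)) /
      ((1 + 0) * (3 + 2 * 0) * (3 + 3 * 0) * (3 + 4 * 0)) := by norm_num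
  rw [e]
  refine h.congr' ?_
  filter_upwards [Filter.eventually_gt_atTop 0] with n hn
  have hn' : (0 : ℝ) < n := by exact_mod_cast hn
  rw [fc4_ratio]
  simp only [Function.comp]
  field_simp

theorem fc4_term_tendsto (x : ℝ) (hx : x ≠ 0) :
    Filter.Tendsto (fun n : ℕ => ‖fussCatalan4 (n + 1) * x ^ (n + 1)‖ / ‖fussCatalan4 n * x ^ n‖)
      Filter.atTop (nhds (256 / 27 * |x|)) := by
  refine (fc4_tendsto.mul_const |x|).congr fun n => ?_
  have h1 := fc4_pos n
  have h2 := fc4_pos (n + 1)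
  have h3 : 0 < |x| := abs_pos.mpr hx
  rw [Real.norm_eq_abs, Real.norm_eq_abs, abs_mul, abs_mul, abs_pow, abs_pow, abs_of_pos h1,
    abs_of_pos h2, pow_succ]
  field_simp

theorem fussCatalan4_radius_of_convergence :
    (∀ x : ℝ, |x| < 27 / 256 → Summable (fun n : ℕ => fussCatalan4 n * x ^ n)) ∧
    (∀ x : ℝ, 27 / 256 < |x| → ¬ Summable (fun n : ℕ => fussCatalan4 n * x ^ n)) := by
  constructor
  · intro x hx
    by_cases h0 : x = 0
    · subst h0
      refine summable_of_ne_finset_zero (s := {0}) fun n hn => ?_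
      have : n ≠ 0 := by simpa using hn
      simp [this]
    · refine summable_of_ratio_test_tendsto_lt_one (l := 256 / 27 * |x|) (by linarith) ?_
        (fc4_term_tendsto x h0)
      exact Filter.Eventually.of_forall fun n => mul_ne_zero (fc4_pos n).ne' (pow_ne_zero n h0)
  · intro x hx
    have h0 : x ≠ 0 := by
      rintro rfl
      norm_num at hx
    exact not_summable_of_ratio_test_tendsto_gt_one (l := 256 / 27 * |x|) (by linarith)
      (fc4_term_tendsto x h0)
end

section
/- Let d ≥ 1 be a natural number and let ε be a real number with d/2 < ε < d. Then the function (x,y) ↦ (1+‖x‖²)^{−ε}·(1+‖y‖²)^{−ε}·(‖x‖·‖y‖·‖x−y‖)^{ε−d} is Lebesgue integrable on ℝ^d × ℝ^d and ∫_{ℝ^d}∫_{ℝ^d} (1+‖x‖²)^{−ε}(1+‖y‖²)^{−ε}(‖x‖·‖y‖·‖x−y‖)^{ε−d} dx dy = π^d·Γ(ε/2)³·Γ((3ε−d)/2)/(Γ(d/2)·Γ(ε)³). (This is the regularized trace of the spin-zero conformal partial wave, i.e. the integral of a product of three two-point structures over the sphere, written in stereographic coordinates.) -/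
open Real MeasureTheory

lemma aux_of_integral {α : Type*} [MeasurableSpace α] {μ : Measure α} {f : α → ℝ} {c : ℝ}
    (hf : 0 ≤ᵐ[μ] f) (h : ∫ x, f x ∂μ = c) (hc : 0 < c) :
    ∫⁻ x, ENNReal.ofReal (f x) ∂μ = ENNReal.ofReal c := by
  have hi : Integrable f μ := by
    by_contra hn
    rw [integral_undef hn] at h
    exact hc.ne h
  rw [← ofReal_integral_eq_lintegral_ofReal hi hf, h]

/-- Gamma kernel. -/
noncomputable def gk (a r s : ℝ) : ENNReal := ENNReal.ofReal (s ^ (a - 1) * Real.exp (-(r * s)))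

/-- Lebesgue measure on the half line. -/
noncomputable def hl : Measure ℝ := volume.restrict (Set.Ioi 0)

instance : SFinite hl := by unfold hl; infer_instance

lemma hl_congr {f g : ℝ → ENNReal} (h : ∀ s, 0 < s → f s = g s) :
    ∫⁻ s, f s ∂hl = ∫⁻ s, g s ∂hl :=
  setLIntegral_congr_fun measurableSet_Ioi (fun s hs => h s hs)

lemma lint_gk {a r : ℝ} (ha : 0 < a) (hr : 0 < r) :
    ∫⁻ s, gk a r s ∂hl = ENNReal.ofReal (r ^ (-a) * Real.Gamma a) := by
  unfold gk hl
  apply aux_of_integral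
  · filter_upwards [ae_restrict_mem measurableSet_Ioi] with s hs
    have : (0:ℝ) < s := hs
    simp only [Pi.zero_apply]; positivity
  · rw [Real.integral_rpow_mul_exp_neg_mul_Ioi ha hr, one_div, Real.inv_rpow hr.le,
      Real.rpow_neg hr.le]
  · have := Real.Gamma_pos_of_pos ha
    positivity

@[fun_prop]
lemma meas_gk {α : Type*} [MeasurableSpace α] {a : ℝ} {r s : α → ℝ} (hr : Measurable r)
    (hs : Measurable s) : Measurable (fun x => gk a (r x) (s x)) := by
  unfold gk
  fun_prop

lemma lint_beta {a b c k : ℝ} (ha : 0 < a) (hab : a < b) (hc : 0 < c) (hk : 0 < k) :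
    ∫⁻ u, ENNReal.ofReal (u ^ (a - 1) * (c + u * k) ^ (-b)) ∂hl =
      ENNReal.ofReal (Real.Gamma a * Real.Gamma (b - a) / Real.Gamma b * c ^ (a - b) * k ^ (-a)) := by
  have hb : 0 < b := ha.trans hab
  have h1 := Real.Gamma_pos_of_pos ha
  have h2 := Real.Gamma_pos_of_pos hb
  have h3 := Real.Gamma_pos_of_pos (sub_pos.2 hab)
  calc _ = ∫⁻ u, ∫⁻ v, ENNReal.ofReal (Real.Gamma b)⁻¹ *
        (gk a (k * v) u * gk b c v) ∂hl ∂hl := by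
        apply hl_congr
        intro u hu
        have hp : 0 < c + u * k := by positivity
        calc _ = ENNReal.ofReal ((Real.Gamma b)⁻¹ * u ^ (a - 1)) *
              ∫⁻ v, gk b (c + u * k) v ∂hl := by
              rw [lint_gk hb hp, ← ENNReal.ofReal_mul (by positivity)]
              congr 1
              field_simp
          _ = _ := by
              rw [← lintegral_const_mul _ (by fun_prop)]
              apply hl_congr
              intro v hv
              unfold gk
              rw [← ENNReal.ofReal_mul (by positivity), ← ENNReal.ofReal_mul (by positivity),
                ← ENNReal.ofReal_mul (by positivity)]
              congr 1
              rw [show -((c + u * k) * v) = -(k * v * u) + -(c * v) by ring, Real.exp_add]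
              ring
    _ = ∫⁻ v, ∫⁻ u, ENNReal.ofReal (Real.Gamma b)⁻¹ *
        (gk a (k * v) u * gk b c v) ∂hl ∂hl := by
        apply lintegral_lintegral_swap
        fun_prop
    _ = ∫⁻ v, ENNReal.ofReal (Real.Gamma a / Real.Gamma b * k ^ (-a)) * gk (b - a) c v ∂hl := by
        apply hl_congr
        intro v hv
        have hkv : 0 < k * v := by positivity
        rw [lintegral_const_mul _ (by fun_prop), lintegral_mul_const _ (by fun_prop),
          lint_gk ha hkv]
        unfold gk
        rw [← ENNReal.ofReal_mul (by positivity), ← ENNReal.ofReal_mul (by positivity),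
                ← ENNReal.ofReal_mul (by positivity)]
        congr 1
        rw [show b - a - 1 = (-a) + (b - 1) by ring, Real.rpow_add hv, Real.mul_rpow hk.le hv.le]
        field_simp
    _ = _ := by
        rw [lintegral_const_mul _ (by fun_prop), lint_gk (sub_pos.2 hab) hc,
          ← ENNReal.ofReal_mul (by positivity)]
        congr 1
        rw [neg_sub]
        ring

lemma lint_final {p q : ℝ} (hp : 0 < p) (hq : 0 < q) (hpq : q < 2 * p) :
    ∫⁻ s, ∫⁻ t, ENNReal.ofReal (s ^ (p - 1) * t ^ (p - 1) * (s + t) ^ (-q) * Real.exp (-s - t))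
      ∂hl ∂hl =
    ENNReal.ofReal (Real.Gamma p ^ 2 * Real.Gamma (2 * p - q) / Real.Gamma (2 * p)) := by
  have h1 := Real.Gamma_pos_of_pos hp
  have h2 := Real.Gamma_pos_of_pos hq
  have h3 := Real.Gamma_pos_of_pos (sub_pos.2 hpq)
  have h4 : 0 < Real.Gamma (2 * p) := Real.Gamma_pos_of_pos (by positivity)
  let F : ℝ → ℝ → ℝ → ENNReal := fun s t u =>
    ENNReal.ofReal ((Real.Gamma q)⁻¹ * u ^ (q - 1)) * (gk p (1 + u) s * gk p (1 + u) t)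
  calc _ = ∫⁻ s, ∫⁻ t, ∫⁻ u, F s t u ∂hl ∂hl ∂hl := by
        apply hl_congr
        intro s hs
        apply hl_congr
        intro t ht
        have hst : 0 < s + t := by positivity
        calc _ = ENNReal.ofReal ((Real.Gamma q)⁻¹ * s ^ (p - 1) * t ^ (p - 1) * Real.exp (-s - t)) *
              ∫⁻ u, gk q (s + t) u ∂hl := by
              rw [lint_gk hq hst, ← ENNReal.ofReal_mul (by positivity)]
              congr 1
              field_simp
          _ = _ := by
              rw [← lintegral_const_mul _ (by fun_prop)]
              apply hl_congr
              intro u hu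
              simp only [F]
              unfold gk
              rw [← ENNReal.ofReal_mul (by positivity), ← ENNReal.ofReal_mul (by positivity),
                ← ENNReal.ofReal_mul (by positivity)]
              congr 1
              rw [show -((s + t) * u) = -(s * u) + -(t * u) by ring,
                show -((1 + u) * s) = -s + -(s * u) by ring,
                show -((1 + u) * t) = -t + -(t * u) by ring, sub_eq_add_neg (-s) t,
                Real.exp_add, Real.exp_add, Real.exp_add, Real.exp_add]
              ring
    _ = ∫⁻ u, ∫⁻ z, F z.1 z.2 u ∂(hl.prod hl) ∂hl := by
        refine Eq.trans ?_ (lintegral_lintegral_swap (f := fun z u => F z.1 z.2 u)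
          (μ := hl.prod hl) (ν := hl) (by simp only [F]; fun_prop))
        rw [lintegral_prod]
        simp only [F]
        refine AEMeasurable.lintegral_prod_right' (f := fun w : (ℝ × ℝ) × ℝ =>
          ENNReal.ofReal ((Real.Gamma q)⁻¹ * w.2 ^ (q - 1)) *
            (gk p (1 + w.2) w.1.1 * gk p (1 + w.2) w.1.2)) ?_
        fun_prop
    _ = ∫⁻ u, ENNReal.ofReal (Real.Gamma p ^ 2 / Real.Gamma q) *
        ENNReal.ofReal (u ^ (q - 1) * (1 + u * 1) ^ (-(2 * p))) ∂hl := by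
        apply hl_congr
        intro u hu
        simp only [F]
        rw [lintegral_const_mul _ (by fun_prop),
          lintegral_prod_mul (f := fun s => gk p (1 + u) s) (g := fun s => gk p (1 + u) s)
            (by fun_prop) (by fun_prop), lint_gk hp (by positivity)]
        rw [← ENNReal.ofReal_mul (by positivity), ← ENNReal.ofReal_mul (by positivity),
                ← ENNReal.ofReal_mul (by positivity)]
        congr 1
        rw [show -(2 * p) = -p + -p by ring, Real.rpow_add (by positivity), mul_one]
        field_simp
    _ = _ := by
        rw [lintegral_const_mul _ (by fun_prop), lint_beta hq hpq one_pos one_pos,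
          ← ENNReal.ofReal_mul (by positivity)]
        congr 1
        simp only [Real.one_rpow]
        field_simp

lemma lint_inv (d : ℕ) (hd : 1 ≤ d) (f : EuclideanSpace ℝ (Fin d) → ENNReal) :
    ∫⁻ x, f x = ∫⁻ x, ENNReal.ofReal (‖x‖ ^ (-(2 * d : ℝ))) *
      f (EuclideanGeometry.inversion 0 1 x) := by
  have : Nonempty (Fin d) := ⟨⟨0, hd⟩⟩
  let s : Set (EuclideanSpace ℝ (Fin d)) := {0}ᶜ
  have hs : MeasurableSet s := (measurableSet_singleton 0).compl
  have hr : (volume : Measure (EuclideanSpace ℝ (Fin d))).restrict s = volume :=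
    Measure.restrict_eq_self_of_ae_mem (by
      rw [ae_iff]; simp [s])
  have himg : EuclideanGeometry.inversion (0 : EuclideanSpace ℝ (Fin d)) 1 '' s = s := by
    ext y
    constructor
    · rintro ⟨x, hx, rfl⟩
      intro h
      exact hx ((EuclideanGeometry.inversion_eq_center one_ne_zero).1 h)
    · intro hy
      refine ⟨EuclideanGeometry.inversion 0 1 y, ?_,
        EuclideanGeometry.inversion_inversion _ one_ne_zero _⟩
      intro h
      exact hy ((EuclideanGeometry.inversion_eq_center one_ne_zero).1 h)
  have key := lintegral_image_eq_lintegral_abs_det_fderiv_mul volume hs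
    (fun x hx => (EuclideanGeometry.hasFDerivAt_inversion (c := 0) (R := 1) hx).hasFDerivWithinAt)
    (EuclideanGeometry.inversion_injective (0 : EuclideanSpace ℝ (Fin d)) one_ne_zero).injOn f
  rw [himg, hr] at key
  rw [key]
  have h0 : ∀ᵐ x : EuclideanSpace ℝ (Fin d), x ≠ 0 := by
    rw [ae_iff]; simp
  apply lintegral_congr_ae
  filter_upwards [h0] with x hx
  congr 2
  have hx' : 0 < ‖x‖ := norm_pos_iff.2 hx
  have hdet : ∀ K : Submodule ℝ (EuclideanSpace ℝ (Fin d)),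
      |(K.reflection : EuclideanSpace ℝ (Fin d) →L[ℝ] EuclideanSpace ℝ (Fin d)).det| = 1 := by
    intro K
    have := K.det_reflection
    rw [ContinuousLinearMap.det]
    erw [this]
    simp
  rw [ContinuousLinearMap.det] at *
  rw [ContinuousLinearMap.toLinearMap_smul, LinearMap.det_smul, abs_mul]
  have := hdet (ℝ ∙ (x - 0))ᗮ
  rw [ContinuousLinearMap.det] at this
  rw [this, mul_one, finrank_euclideanSpace_fin, dist_zero_right, abs_of_nonneg (by positivity),
    ← pow_mul, Real.rpow_neg hx'.le, one_div, inv_pow]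
  congr 1
  rw [← Real.rpow_natCast]
  push_cast
  rfl

lemma lint_gauss (d : ℕ) {b : ℝ} (hb : 0 < b) :
    ∫⁻ x : EuclideanSpace ℝ (Fin d), ENNReal.ofReal (Real.exp (-b * ‖x‖ ^ 2)) =
      ENNReal.ofReal ((π / b) ^ ((d : ℝ) / 2)) := by
  apply aux_of_integral
  · exact Filter.Eventually.of_forall fun x => (Real.exp_pos _).le
  · rw [GaussianFourier.integral_rexp_neg_mul_sq_norm hb, finrank_euclideanSpace_fin]
  · positivity

lemma lint_gauss2 (d : ℕ) {t u : ℝ} (ht : 0 < t) (hu : 0 < u) (x : EuclideanSpace ℝ (Fin d)) :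
    ∫⁻ y : EuclideanSpace ℝ (Fin d),
      ENNReal.ofReal (Real.exp (-t * ‖y‖ ^ 2 - u * ‖x - y‖ ^ 2)) =
      ENNReal.ofReal ((π / (t + u)) ^ ((d : ℝ) / 2) *
        Real.exp (-(t * u / (t + u)) * ‖x‖ ^ 2)) := by
  have htu : 0 < t + u := by positivity
  have h : ∀ y : EuclideanSpace ℝ (Fin d),
      -t * ‖y‖ ^ 2 - u * ‖x - y‖ ^ 2 = -(t + u) * ‖y - (u / (t + u)) • x‖ ^ 2
        + -(t * u / (t + u)) * ‖x‖ ^ 2 := by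
    intro y
    rw [@norm_sub_sq_real, @norm_sub_sq_real, norm_smul, inner_smul_right, real_inner_comm,
      Real.norm_of_nonneg (by positivity)]
    field_simp
    ring
  simp_rw [h, Real.exp_add]
  simp_rw [ENNReal.ofReal_mul (Real.exp_pos _).le]
  rw [lintegral_mul_const _ (by fun_prop),
    lintegral_sub_right_eq_self (fun y : EuclideanSpace ℝ (Fin d) =>
      ENNReal.ofReal (Real.exp (-(t + u) * ‖y‖ ^ 2))), lint_gauss d htu,
    ENNReal.ofReal_mul (by positivity)]

lemma lint_gauss3 (d : ℕ) {s t u : ℝ} (hs : 0 < s) (ht : 0 < t) (hu : 0 < u) :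
    ∫⁻ z : EuclideanSpace ℝ (Fin d) × EuclideanSpace ℝ (Fin d),
      ENNReal.ofReal (Real.exp (-s * ‖z.1‖ ^ 2 - t * ‖z.2‖ ^ 2 - u * ‖z.1 - z.2‖ ^ 2)) =
      ENNReal.ofReal (π ^ d * (s * t + u * (s + t)) ^ (-((d : ℝ) / 2))) := by
  have htu : 0 < t + u := by positivity
  rw [Measure.volume_eq_prod, lintegral_prod _ (by fun_prop)]
  have h : ∀ x y : EuclideanSpace ℝ (Fin d),
      -s * ‖x‖ ^ 2 - t * ‖y‖ ^ 2 - u * ‖x - y‖ ^ 2 =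
      -s * ‖x‖ ^ 2 + (-t * ‖y‖ ^ 2 - u * ‖x - y‖ ^ 2) := by intros; ring
  simp_rw [h, Real.exp_add, ENNReal.ofReal_mul (Real.exp_pos _).le]
  have h2 : ∀ x : EuclideanSpace ℝ (Fin d),
      ∫⁻ y : EuclideanSpace ℝ (Fin d), ENNReal.ofReal (Real.exp (-s * ‖x‖ ^ 2)) *
        ENNReal.ofReal (Real.exp (-t * ‖y‖ ^ 2 - u * ‖x - y‖ ^ 2)) =
      ENNReal.ofReal ((π / (t + u)) ^ ((d : ℝ) / 2)) *
        ENNReal.ofReal (Real.exp (-(s + t * u / (t + u)) * ‖x‖ ^ 2)) := by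
    intro x
    rw [lintegral_const_mul _ (by fun_prop), lint_gauss2 d ht hu,
      ← ENNReal.ofReal_mul (by positivity), ← ENNReal.ofReal_mul (by positivity),
      show -(s + t * u / (t + u)) * ‖x‖ ^ 2 = -s * ‖x‖ ^ 2 + -(t * u / (t + u)) * ‖x‖ ^ 2 by ring,
      Real.exp_add]
    congr 1
    ring
  simp_rw [h2]
  rw [lintegral_const_mul _ (by fun_prop), lint_gauss d (by positivity),
    ← ENNReal.ofReal_mul (by positivity), ← Real.mul_rpow (by positivity) (by positivity)]
  congr 1
  have h3 : π / (t + u) * (π / (s + t * u / (t + u))) = π ^ 2 * (s * t + u * (s + t))⁻¹ := by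
    field_simp
    ring
  rw [h3, Real.mul_rpow (by positivity) (by positivity), Real.inv_rpow (by positivity),
    Real.rpow_neg (by positivity), ← Real.rpow_natCast π 2, ← Real.rpow_mul pi_pos.le,
    ← Real.rpow_natCast π d]
  congr 2
  push_cast; ring

lemma tonelli5 {X : Type*} [MeasurableSpace X] {μ : Measure X} [SFinite μ] (C : ENNReal)
    (k : X × X → ℝ × (ℝ × ℝ) → ENNReal) (hk : Measurable (Function.uncurry k)) :
    ∫⁻ x, ∫⁻ y, C * ∫⁻ p, k (x, y) p ∂(hl.prod (hl.prod hl)) ∂μ ∂μ =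
      C * ∫⁻ s, ∫⁻ t, ∫⁻ u, ∫⁻ z, k z (s, (t, u)) ∂(μ.prod μ) ∂hl ∂hl ∂hl := by
  have hK : Measurable (fun z => ∫⁻ p, k z p ∂(hl.prod (hl.prod hl))) :=
    Measurable.lintegral_prod_right' hk
  have hm : Measurable (fun p => ∫⁻ z, k z p ∂(μ.prod μ)) :=
    Measurable.lintegral_prod_left' hk
  calc _ = C * ∫⁻ z, ∫⁻ p, k z p ∂(hl.prod (hl.prod hl)) ∂(μ.prod μ) := by
        rw [← lintegral_const_mul _ hK, lintegral_prod _ (hK.const_mul C).aemeasurable]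
    _ = C * ∫⁻ p, ∫⁻ z, k z p ∂(μ.prod μ) ∂(hl.prod (hl.prod hl)) := by
        rw [lintegral_lintegral_swap hk.aemeasurable]
    _ = _ := by
        congr 1
        rw [lintegral_prod _ hm.aemeasurable]
        apply lintegral_congr
        intro s
        rw [lintegral_prod]
        exact (hm.comp (by fun_prop : Measurable (fun w : ℝ × ℝ => (s, w)))).aemeasurable

set_option maxHeartbeats 1000000 in
lemma lint_J (d : ℕ) (hd : 1 ≤ d) (ε : ℝ) (hε1 : (d : ℝ) / 2 < ε) (hε2 : ε < (d : ℝ)) :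
    ∫⁻ x : EuclideanSpace ℝ (Fin d), ∫⁻ y : EuclideanSpace ℝ (Fin d),
      ENNReal.ofReal ((1 + ‖x‖ ^ 2) ^ (-ε) * (1 + ‖y‖ ^ 2) ^ (-ε) * ‖x - y‖ ^ (ε - (d : ℝ))) =
    ENNReal.ofReal (π ^ d * Real.Gamma (ε / 2) ^ 3 * Real.Gamma ((3 * ε - d) / 2) /
          (Real.Gamma ((d : ℝ) / 2) * Real.Gamma ε ^ 3)) := by
  have : Nonempty (Fin d) := ⟨⟨0, hd⟩⟩
  have hd' : (1 : ℝ) ≤ d := by exact_mod_cast hd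
  have hε : 0 < ε := by linarith
  set q : ℝ := (d - ε) / 2 with hq_def
  have hq : 0 < q := by linarith
  have g1 := Real.Gamma_pos_of_pos hε
  have g2 := Real.Gamma_pos_of_pos hq
  have g3 : 0 < Real.Gamma ((d : ℝ) / 2) := Real.Gamma_pos_of_pos (by linarith)
  have g4 : 0 < Real.Gamma (ε / 2) := Real.Gamma_pos_of_pos (by linarith)
  have g5 : 0 < Real.Gamma ((3 * ε - d) / 2) := Real.Gamma_pos_of_pos (by linarith)
  let C : ENNReal := ENNReal.ofReal ((Real.Gamma ε ^ 2 * Real.Gamma q)⁻¹)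
  let k : EuclideanSpace ℝ (Fin d) × EuclideanSpace ℝ (Fin d) → ℝ × (ℝ × ℝ) → ENNReal :=
    fun z p => gk ε (1 + ‖z.1‖ ^ 2) p.1 * (gk ε (1 + ‖z.2‖ ^ 2) p.2.1 * gk q (‖z.1 - z.2‖ ^ 2) p.2.2)
  have hk : Measurable (Function.uncurry k) := by
    simp only [k, Function.uncurry_def]
    fun_prop
  calc _ = ∫⁻ x : EuclideanSpace ℝ (Fin d), ∫⁻ y : EuclideanSpace ℝ (Fin d),
        C * ∫⁻ p, k (x, y) p ∂(hl.prod (hl.prod hl)) := by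
        apply lintegral_congr
        intro x
        have h0 : ∀ᵐ y : EuclideanSpace ℝ (Fin d), y ≠ x := by
          rw [ae_iff]; simp
        apply lintegral_congr_ae
        filter_upwards [h0] with y hy
        have hxy : 0 < ‖x - y‖ := norm_pos_iff.2 (sub_ne_zero.2 hy.symm)
        simp only [k, C]
        rw [lintegral_prod_mul (f := fun s => gk ε (1 + ‖x‖ ^ 2) s)
            (g := fun p : ℝ × ℝ => gk ε (1 + ‖y‖ ^ 2) p.1 * gk q (‖x - y‖ ^ 2) p.2)
            (by fun_prop) (by fun_prop),
          lintegral_prod_mul (f := fun s => gk ε (1 + ‖y‖ ^ 2) s)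
            (g := fun s => gk q (‖x - y‖ ^ 2) s) (by fun_prop) (by fun_prop),
          lint_gk hε (by positivity), lint_gk hε (by positivity), lint_gk hq (by positivity),
          ← ENNReal.ofReal_mul (by positivity), ← ENNReal.ofReal_mul (by positivity),
          ← ENNReal.ofReal_mul (by positivity)]
        congr 1
        rw [← Real.rpow_natCast ‖x - y‖ 2, ← Real.rpow_mul hxy.le,
          show ((2 : ℕ) : ℝ) * -q = ε - d by rw [hq_def]; push_cast; ring]
        field_simp
    _ = C * ∫⁻ s, ∫⁻ t, ∫⁻ u, ∫⁻ z, k z (s, (t, u)) ∂(volume.prod volume) ∂hl ∂hl ∂hl :=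
        tonelli5 C k hk
    _ = C * ∫⁻ s, ∫⁻ t, ENNReal.ofReal (π ^ d * (Real.Gamma q * Real.Gamma (ε / 2) /
          Real.Gamma ((d : ℝ) / 2))) *
          ENNReal.ofReal (s ^ (ε / 2 - 1) * t ^ (ε / 2 - 1) * (s + t) ^ (-q) * Real.exp (-s - t))
          ∂hl ∂hl := by
        congr 1
        apply hl_congr
        intro s hs
        apply hl_congr
        intro t ht
        calc _ = ∫⁻ u, ENNReal.ofReal (π ^ d * (s ^ (ε - 1) * t ^ (ε - 1) * Real.exp (-s - t))) *
              ENNReal.ofReal (u ^ (q - 1) * (s * t + u * (s + t)) ^ (-((d : ℝ) / 2))) ∂hl := by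
              apply hl_congr
              intro u hu
              have hkz : ∀ z, k z (s, (t, u)) =
                ENNReal.ofReal (s ^ (ε - 1) * t ^ (ε - 1) * Real.exp (-s - t) * u ^ (q - 1)) *
                ENNReal.ofReal (Real.exp
                  (-s * ‖z.1‖ ^ 2 - t * ‖z.2‖ ^ 2 - u * ‖z.1 - z.2‖ ^ 2)) := by
                intro z
                simp only [k]
                unfold gk
                rw [← ENNReal.ofReal_mul (by positivity), ← ENNReal.ofReal_mul (by positivity),
                  ← ENNReal.ofReal_mul (by positivity)]
                congr 1
                have : Real.exp (-s - t) * Real.exp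
                    (-s * ‖z.1‖ ^ 2 - t * ‖z.2‖ ^ 2 - u * ‖z.1 - z.2‖ ^ 2) =
                    Real.exp (-((1 + ‖z.1‖ ^ 2) * s)) * (Real.exp (-((1 + ‖z.2‖ ^ 2) * t)) *
                      Real.exp (-(‖z.1 - z.2‖ ^ 2 * u))) := by
                  rw [← Real.exp_add, ← Real.exp_add, ← Real.exp_add]
                  congr 1
                  ring
                linear_combination (-(s ^ (ε - 1) * t ^ (ε - 1) * u ^ (q - 1))) * this
              simp_rw [hkz]
              rw [lintegral_const_mul _ (by fun_prop), ← Measure.volume_eq_prod,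
                lint_gauss3 d hs ht hu, ← ENNReal.ofReal_mul (by positivity),
                ← ENNReal.ofReal_mul (by positivity)]
              congr 1
              ring
          _ = _ := by
              have hqd : q < (d : ℝ) / 2 := by rw [hq_def]; linarith
              rw [lintegral_const_mul _ (by fun_prop),
                lint_beta hq hqd (by positivity) (by positivity),
                show (d : ℝ) / 2 - q = ε / 2 by rw [hq_def]; ring,
                show q - (d : ℝ) / 2 = -(ε / 2) by rw [hq_def]; ring,
                ← ENNReal.ofReal_mul (by positivity), ← ENNReal.ofReal_mul (by positivity)]
              congr 1
              rw [Real.mul_rpow hs.le ht.le, show ε - 1 = (ε / 2 - 1) + ε / 2 by ring,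
                Real.rpow_add hs, Real.rpow_add ht, Real.rpow_neg hs.le, Real.rpow_neg ht.le]
              field_simp
    _ = C * (ENNReal.ofReal (π ^ d * (Real.Gamma q * Real.Gamma (ε / 2) /
          Real.Gamma ((d : ℝ) / 2))) *
          ENNReal.ofReal (Real.Gamma (ε / 2) ^ 2 * Real.Gamma ((3 * ε - d) / 2) /
            Real.Gamma ε)) := by
        congr 1
        have := lint_final (p := ε / 2) (q := q) (by positivity) hq (by rw [hq_def]; linarith)
        rw [show 2 * (ε / 2) - q = (3 * ε - d) / 2 by rw [hq_def]; ring,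
          show 2 * (ε / 2) = ε by ring] at this
        rw [← this, ← lintegral_const_mul]
        · apply lintegral_congr
          intro s
          rw [lintegral_const_mul _ (by fun_prop)]
        · apply Measurable.lintegral_prod_right' (f := fun w : ℝ × ℝ => ENNReal.ofReal
            (w.1 ^ (ε / 2 - 1) * w.2 ^ (ε / 2 - 1) * (w.1 + w.2) ^ (-q) * Real.exp (-w.1 - w.2)))
          fun_prop
    _ = _ := by
        simp only [C]
        rw [← ENNReal.ofReal_mul (by positivity), ← ENNReal.ofReal_mul (by positivity)]
        congr 1
        field_simp

lemma lint_main (d : ℕ) (hd : 1 ≤ d) (ε : ℝ) :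
    ∫⁻ x : EuclideanSpace ℝ (Fin d), ∫⁻ y : EuclideanSpace ℝ (Fin d),
      ENNReal.ofReal ((1 + ‖x‖ ^ 2) ^ (-ε) * (1 + ‖y‖ ^ 2) ^ (-ε) *
          (‖x‖ * ‖y‖ * ‖x - y‖) ^ (ε - (d : ℝ))) =
    ∫⁻ x : EuclideanSpace ℝ (Fin d), ∫⁻ y : EuclideanSpace ℝ (Fin d),
      ENNReal.ofReal ((1 + ‖x‖ ^ 2) ^ (-ε) * (1 + ‖y‖ ^ 2) ^ (-ε) * ‖x - y‖ ^ (ε - (d : ℝ))) := by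
  have : Nonempty (Fin d) := ⟨⟨0, hd⟩⟩
  have h0 : ∀ᵐ x : EuclideanSpace ℝ (Fin d), x ≠ 0 := by
    rw [ae_iff]; simp
  rw [lint_inv d hd]
  apply lintegral_congr_ae
  filter_upwards [h0] with x hx
  rw [lint_inv d hd, ← lintegral_const_mul' _ _ ENNReal.ofReal_ne_top]
  apply lintegral_congr_ae
  filter_upwards [h0] with y hy
  have hx' : 0 < ‖x‖ := norm_pos_iff.2 hx
  have hy' : 0 < ‖y‖ := norm_pos_iff.2 hy
  have e1 : ∀ z : EuclideanSpace ℝ (Fin d), ‖EuclideanGeometry.inversion 0 1 z‖ = ‖z‖⁻¹ := by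
    intro z
    have := EuclideanGeometry.dist_inversion_center (0 : EuclideanSpace ℝ (Fin d)) z 1
    simpa [dist_zero_right] using this
  have e2 := EuclideanGeometry.dist_inversion_inversion hx hy 1
  rw [dist_zero_right, dist_zero_right, dist_eq_norm, dist_eq_norm] at e2
  rw [← ENNReal.ofReal_mul (by positivity), ← ENNReal.ofReal_mul (by positivity), e1, e1, e2]
  congr 1
  have e3 : ∀ r : ℝ, 0 < r → (1 + r⁻¹ ^ 2) ^ (-ε) = (1 + r ^ 2) ^ (-ε) * r ^ (2 * ε) := by
    intro r hr
    rw [show 1 + r⁻¹ ^ 2 = (1 + r ^ 2) * (r ^ (-2 : ℝ)) by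
      rw [Real.rpow_neg hr.le, Real.rpow_two]; field_simp; ring,
      Real.mul_rpow (by positivity) (by positivity), ← Real.rpow_mul hr.le]
    congr 2; ring
  rw [e3 _ hx', e3 _ hy',
    show ‖x‖⁻¹ * ‖y‖⁻¹ * (1 ^ 2 / (‖x‖ * ‖y‖) * ‖x - y‖) =
      ‖x‖ ^ (-2 : ℝ) * (‖y‖ ^ (-2 : ℝ) * ‖x - y‖) by
      rw [Real.rpow_neg hx'.le, Real.rpow_neg hy'.le, Real.rpow_two, Real.rpow_two]; field_simp,
    Real.mul_rpow (by positivity) (by positivity), Real.mul_rpow (by positivity) (by positivity),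
    ← Real.rpow_mul hx'.le, ← Real.rpow_mul hy'.le]
  have e4 : ∀ r : ℝ, 0 < r → r ^ (-(2 * d : ℝ)) * r ^ (2 * ε) * r ^ (-2 * (ε - (d : ℝ))) = 1 := by
    intro r hr
    rw [← Real.rpow_add hr, ← Real.rpow_add hr,
      show -(2 * d : ℝ) + 2 * ε + -2 * (ε - (d : ℝ)) = 0 by ring, Real.rpow_zero]
  calc _ = (‖x‖ ^ (-(2 * d : ℝ)) * ‖x‖ ^ (2 * ε) * ‖x‖ ^ (-2 * (ε - (d : ℝ)))) *
      (‖y‖ ^ (-(2 * d : ℝ)) * ‖y‖ ^ (2 * ε) * ‖y‖ ^ (-2 * (ε - (d : ℝ)))) *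
      ((1 + ‖x‖ ^ 2) ^ (-ε) * (1 + ‖y‖ ^ 2) ^ (-ε) * ‖x - y‖ ^ (ε - (d : ℝ))) := by ring
    _ = _ := by rw [e4 _ hx', e4 _ hy', one_mul, one_mul]

theorem regularized_CPW_trace (d : ℕ) (hd : 1 ≤ d) (ε : ℝ)
    (hε1 : (d : ℝ) / 2 < ε) (hε2 : ε < (d : ℝ)) :
    MeasureTheory.Integrable
      (fun p : EuclideanSpace ℝ (Fin d) × EuclideanSpace ℝ (Fin d) =>
        (1 + ‖p.1‖ ^ 2) ^ (-ε) * (1 + ‖p.2‖ ^ 2) ^ (-ε) *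
          (‖p.1‖ * ‖p.2‖ * ‖p.1 - p.2‖) ^ (ε - (d : ℝ))) ∧
    ∫ x : EuclideanSpace ℝ (Fin d), ∫ y : EuclideanSpace ℝ (Fin d),
        (1 + ‖x‖ ^ 2) ^ (-ε) * (1 + ‖y‖ ^ 2) ^ (-ε) *
          (‖x‖ * ‖y‖ * ‖x - y‖) ^ (ε - (d : ℝ))
      = π ^ d * Real.Gamma (ε / 2) ^ 3 * Real.Gamma ((3 * ε - d) / 2) /
          (Real.Gamma ((d : ℝ) / 2) * Real.Gamma ε ^ 3) := by
  have hd' : (1 : ℝ) ≤ d := by exact_mod_cast hd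
  have g1 : 0 < Real.Gamma ε := Real.Gamma_pos_of_pos (by linarith)
  have g3 : 0 < Real.Gamma ((d : ℝ) / 2) := Real.Gamma_pos_of_pos (by linarith)
  have g4 : 0 < Real.Gamma (ε / 2) := Real.Gamma_pos_of_pos (by linarith)
  have g5 : 0 < Real.Gamma ((3 * ε - d) / 2) := Real.Gamma_pos_of_pos (by linarith)
  have hl := (lint_main d hd ε).trans (lint_J d hd ε hε1 hε2)
  set f := (fun p : EuclideanSpace ℝ (Fin d) × EuclideanSpace ℝ (Fin d) =>
        (1 + ‖p.1‖ ^ 2) ^ (-ε) * (1 + ‖p.2‖ ^ 2) ^ (-ε) *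
          (‖p.1‖ * ‖p.2‖ * ‖p.1 - p.2‖) ^ (ε - (d : ℝ))) with hf
  have hm : Measurable f := by rw [hf]; fun_prop
  have h0 : ∀ p, 0 ≤ f p := by intro p; simp only [hf]; positivity
  have hp : ∫⁻ p, ENNReal.ofReal (f p) =
      ENNReal.ofReal (π ^ d * Real.Gamma (ε / 2) ^ 3 * Real.Gamma ((3 * ε - d) / 2) /
          (Real.Gamma ((d : ℝ) / 2) * Real.Gamma ε ^ 3)) := by
    rw [Measure.volume_eq_prod, lintegral_prod _ (by fun_prop)]
    exact hl
  have hi : Integrable f := by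
    refine ⟨hm.aestronglyMeasurable, ?_⟩
    rw [hasFiniteIntegral_iff_ofReal (Filter.Eventually.of_forall h0), hp]
    exact ENNReal.ofReal_lt_top
  refine ⟨hi, ?_⟩
  have h2 := integral_prod (μ := volume) (ν := volume) f hi
  refine h2.symm.trans ?_
  rw [← Measure.volume_eq_prod, integral_eq_lintegral_of_nonneg_ae (Filter.Eventually.of_forall h0)
    hm.aestronglyMeasurable, hp, ENNReal.toReal_ofReal (by positivity)]
end

section
/- Let d ≥ 1 be a natural number and let ε be a real number with d/2 < ε < d. Then the function (x,y) ↦ (1+‖x‖²)^{−ε}·(1+‖y‖²)^{−ε}·‖x−y‖^{ε−d} is Lebesgue integrable on ℝ^d × ℝ^d and ∫_{ℝ^d}∫_{ℝ^d} (1+‖x‖²)^{−ε}(1+‖y‖²)^{−ε}‖x−y‖^{ε−d} dx dy = π^d·Γ(ε/2)³·Γ((3ε−d)/2)/(Γ(d/2)·Γ(ε)³). (This is the inversion-reduced form of the regularized trace of the spin-zero conformal partial wave, obtained from the three-propagator form via the inversion x ↦ x/‖x‖².) -/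
open Real MeasureTheory

open Set

lemma aux_G {a r : ℝ} (ha : 0 < a) (hr : 0 < r) {c : ℝ} (hc : 0 ≤ c) :
    ∫⁻ t in Ioi (0:ℝ), ENNReal.ofReal (c * (t ^ (a - 1) * Real.exp (-(r * t))))
      = ENNReal.ofReal (c * (Real.Gamma a * r ^ (-a))) := by
  have hne : Real.Gamma a * r ^ (-a) ≠ 0 :=
    (mul_pos (Real.Gamma_pos_of_pos ha) (rpow_pos_of_pos hr _)).ne'
  have hval := Real.integral_rpow_mul_exp_neg_mul_Ioi ha hr
  have hval' : ∫ t in Ioi (0:ℝ), t ^ (a - 1) * Real.exp (-(r * t)) = Real.Gamma a * r ^ (-a) := by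
    rw [hval, one_div, Real.inv_rpow hr.le, ← Real.rpow_neg hr.le, mul_comm]
  have hint : Integrable (fun t : ℝ => t ^ (a - 1) * Real.exp (-(r * t)))
      (volume.restrict (Ioi 0)) := by
    by_contra h
    exact hne (hval'.symm.trans (integral_undef h))
  rw [← ofReal_integral_eq_lintegral_ofReal (hint.const_mul c), integral_const_mul, hval']
  filter_upwards [ae_restrict_mem measurableSet_Ioi] with t ht
  have ht : 0 < t := ht
  simp only [Pi.zero_apply]
  positivity

lemma aux_B {a c A B : ℝ} (ha : 0 < a) (hac : a < c) (hA : 0 < A) (hB : 0 < B)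
    {k : ℝ} (hk : 0 ≤ k) :
    ∫⁻ u in Ioi (0:ℝ), ENNReal.ofReal (k * (u ^ (a - 1) * (A + u * B) ^ (-c)))
      = ENNReal.ofReal (k * (Real.Gamma a * Real.Gamma (c - a) / Real.Gamma c
          * B ^ (-a) * A ^ (-(c - a)))) := by
  have hc : 0 < c := ha.trans hac
  have hΓc := Real.Gamma_pos_of_pos hc
  have hΓa := Real.Gamma_pos_of_pos ha
  have h1 : ∀ u ∈ Ioi (0:ℝ), ENNReal.ofReal (k * (u ^ (a - 1) * (A + u * B) ^ (-c)))
      = ∫⁻ w in Ioi (0:ℝ), ENNReal.ofReal ((k * u ^ (a - 1) / Real.Gamma c) *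
          (w ^ (c - 1) * Real.exp (-((A + u * B) * w)))) := by
    intro u hu
    have hu : 0 < u := hu
    rw [aux_G hc (by positivity) (by positivity)]
    congr 1
    field_simp
  rw [setLIntegral_congr_fun measurableSet_Ioi h1, lintegral_lintegral_swap
    (Measurable.aemeasurable (by fun_prop))]
  have h2 : ∀ w ∈ Ioi (0:ℝ), ∫⁻ u in Ioi (0:ℝ), ENNReal.ofReal ((k * u ^ (a - 1) / Real.Gamma c) *
          (w ^ (c - 1) * Real.exp (-((A + u * B) * w))))
      = ENNReal.ofReal ((k * (Real.Gamma a * B ^ (-a) / Real.Gamma c)) *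
          (w ^ (c - a - 1) * Real.exp (-(A * w)))) := by
    intro w hw
    have hw : 0 < w := hw
    have e : ∀ u : ℝ, (k * u ^ (a - 1) / Real.Gamma c) *
          (w ^ (c - 1) * Real.exp (-((A + u * B) * w)))
        = (k * w ^ (c - 1) * Real.exp (-(A * w)) / Real.Gamma c) *
          (u ^ (a - 1) * Real.exp (-((B * w) * u))) := by
      intro u
      rw [show -((A + u * B) * w) = -(A * w) + -((B * w) * u) by ring, Real.exp_add]
      ring
    simp_rw [e]
    rw [aux_G ha (by positivity) (by positivity)]
    congr 1
    rw [Real.mul_rpow hB.le hw.le, show c - a - 1 = (c - 1) + (-a) by ring, Real.rpow_add hw]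
    ring
  rw [setLIntegral_congr_fun measurableSet_Ioi h2, aux_G (sub_pos.2 hac) hA (by positivity)]
  congr 1
  ring

lemma aux_C {α a : ℝ} (hα : 0 < α) (ha : 0 < a) (haα : a < 2 * α) {k : ℝ} (hk : 0 ≤ k) :
    ∫⁻ s in Ioi (0:ℝ), ∫⁻ t in Ioi (0:ℝ), ENNReal.ofReal
      (k * (s ^ (α - 1) * t ^ (α - 1) * (s + t) ^ (-a) * Real.exp (-(s + t))))
      = ENNReal.ofReal (k * (Real.Gamma α ^ 2 * Real.Gamma (2 * α - a) / Real.Gamma (2 * α))) := by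
  have hΓa := Real.Gamma_pos_of_pos ha
  have hΓα := Real.Gamma_pos_of_pos hα
  have h1 : ∀ s ∈ Ioi (0:ℝ), ∫⁻ t in Ioi (0:ℝ), ENNReal.ofReal
      (k * (s ^ (α - 1) * t ^ (α - 1) * (s + t) ^ (-a) * Real.exp (-(s + t))))
      = ∫⁻ v in Ioi (0:ℝ), ENNReal.ofReal
        ((k * v ^ (a - 1) / Real.Gamma a * Real.Gamma α * (1 + v) ^ (-α)) *
          (s ^ (α - 1) * Real.exp (-((1 + v) * s)))) := by
    intro s hs
    have hs : 0 < s := hs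
    have h2 : ∀ t ∈ Ioi (0:ℝ), ENNReal.ofReal
        (k * (s ^ (α - 1) * t ^ (α - 1) * (s + t) ^ (-a) * Real.exp (-(s + t))))
        = ∫⁻ v in Ioi (0:ℝ), ENNReal.ofReal
          ((k * s ^ (α - 1) * t ^ (α - 1) * Real.exp (-(s + t)) / Real.Gamma a) *
            (v ^ (a - 1) * Real.exp (-((s + t) * v)))) := by
      intro t ht
      have ht : 0 < t := ht
      rw [aux_G ha (by positivity) (by positivity)]
      congr 1
      field_simp
    rw [setLIntegral_congr_fun measurableSet_Ioi h2, lintegral_lintegral_swap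
      (Measurable.aemeasurable (by fun_prop))]
    refine setLIntegral_congr_fun measurableSet_Ioi ?_
    intro v hv
    have hv : 0 < v := hv
    have e : ∀ t : ℝ, (k * s ^ (α - 1) * t ^ (α - 1) * Real.exp (-(s + t)) / Real.Gamma a) *
            (v ^ (a - 1) * Real.exp (-((s + t) * v)))
          = (k * s ^ (α - 1) * Real.exp (-((1 + v) * s)) / Real.Gamma a * v ^ (a - 1)) *
            (t ^ (α - 1) * Real.exp (-((1 + v) * t))) := by
      intro t
      have : Real.exp (-(s + t)) * Real.exp (-((s + t) * v))
          = Real.exp (-((1 + v) * s)) * Real.exp (-((1 + v) * t)) := by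
        rw [← Real.exp_add, ← Real.exp_add]; congr 1; ring
      linear_combination (k * s ^ (α - 1) * t ^ (α - 1) / Real.Gamma a * v ^ (a - 1)) * this
    simp only [e]
    rw [aux_G hα (by positivity) (by positivity)]
    congr 1
    ring
  rw [setLIntegral_congr_fun measurableSet_Ioi h1, lintegral_lintegral_swap
      (Measurable.aemeasurable (by fun_prop))]
  have h3 : ∀ v ∈ Ioi (0:ℝ), ∫⁻ s in Ioi (0:ℝ), ENNReal.ofReal
        ((k * v ^ (a - 1) / Real.Gamma a * Real.Gamma α * (1 + v) ^ (-α)) *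
          (s ^ (α - 1) * Real.exp (-((1 + v) * s))))
      = ENNReal.ofReal ((k * Real.Gamma α ^ 2 / Real.Gamma a) *
          (v ^ (a - 1) * (1 + v * 1) ^ (-(2 * α)))) := by
    intro v hv
    have hv : 0 < v := hv
    rw [aux_G hα (by positivity) (by positivity)]
    congr 1
    rw [mul_one, show -(2 * α) = -α + -α by ring, Real.rpow_add (by positivity)]
    ring
  rw [setLIntegral_congr_fun measurableSet_Ioi h3, aux_B ha haα one_pos one_pos (by positivity)]
  congr 1
  simp only [Real.one_rpow]
  field_simp

lemma aux_gauss {d : ℕ} {b : ℝ} (hb : 0 < b) {k : ℝ} (hk : 0 ≤ k) :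
    ∫⁻ x : EuclideanSpace ℝ (Fin d), ENNReal.ofReal (k * Real.exp (-b * ‖x‖ ^ 2))
      = ENNReal.ofReal (k * (π / b) ^ ((d:ℝ) / 2)) := by
  have h := GaussianFourier.integral_rexp_neg_mul_sq_norm (V := EuclideanSpace ℝ (Fin d)) hb
  rw [finrank_euclideanSpace_fin] at h
  have hint : Integrable (fun x : EuclideanSpace ℝ (Fin d) => Real.exp (-b * ‖x‖ ^ 2)) := by
    by_contra h'
    rw [integral_undef h'] at h
    have : 0 < (π / b) ^ ((d:ℝ) / 2) := by positivity
    exact this.ne h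
  rw [← ofReal_integral_eq_lintegral_ofReal (hint.const_mul k), integral_const_mul, h]
  exact Filter.Eventually.of_forall fun x => by simp only [Pi.zero_apply]; positivity

lemma aux_gauss2 {d : ℕ} {s t u : ℝ} (hs : 0 < s) (ht : 0 < t) (hu : 0 < u) :
    ∫⁻ z : EuclideanSpace ℝ (Fin d) × EuclideanSpace ℝ (Fin d),
      ENNReal.ofReal (Real.exp (-(s * ‖z.1‖ ^ 2 + t * ‖z.2‖ ^ 2 + u * ‖z.1 - z.2‖ ^ 2)))
      = ENNReal.ofReal (π ^ d * (s * t + u * (s + t)) ^ (-((d:ℝ) / 2))) := by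
  rw [Measure.volume_eq_prod, lintegral_prod _ (Measurable.aemeasurable (by fun_prop))]
  have htu : 0 < t + u := by positivity
  have e : ∀ x y : EuclideanSpace ℝ (Fin d),
      Real.exp (-(s * ‖x‖ ^ 2 + t * ‖y‖ ^ 2 + u * ‖x - y‖ ^ 2))
      = Real.exp (-(s + t * u / (t + u)) * ‖x‖ ^ 2) *
        Real.exp (-(t + u) * ‖y - (u / (t + u)) • x‖ ^ 2) := by
    intro x y
    rw [← Real.exp_add]
    congr 1
    rw [norm_sub_sq_real, norm_sub_sq_real, norm_smul, inner_smul_right, real_inner_comm,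
      mul_pow, Real.norm_eq_abs, sq_abs]
    field_simp
    ring
  simp_rw [e]
  have h1 : ∀ x : EuclideanSpace ℝ (Fin d), ∫⁻ y : EuclideanSpace ℝ (Fin d),
      ENNReal.ofReal (Real.exp (-(s + t * u / (t + u)) * ‖x‖ ^ 2) *
        Real.exp (-(t + u) * ‖y - (u / (t + u)) • x‖ ^ 2))
      = ENNReal.ofReal ((π / (t + u)) ^ ((d:ℝ) / 2) *
          Real.exp (-(s + t * u / (t + u)) * ‖x‖ ^ 2)) := by
    intro x
    rw [lintegral_sub_right_eq_self (fun y : EuclideanSpace ℝ (Fin d) =>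
      ENNReal.ofReal (Real.exp (-(s + t * u / (t + u)) * ‖x‖ ^ 2) *
        Real.exp (-(t + u) * ‖y‖ ^ 2))), aux_gauss htu (by positivity), mul_comm]
  simp_rw [h1]
  rw [aux_gauss (by positivity) (by positivity)]
  congr 1
  rw [← Real.mul_rpow (by positivity) (by positivity)]
  have : π / (t + u) * (π / (s + t * u / (t + u))) = π ^ 2 * (s * t + u * (s + t))⁻¹ := by
    have : s * t + u * (s + t) ≠ 0 := by positivity
    have : s * (t + u) + t * u ≠ 0 := by positivity
    field_simp
    ring
  rw [this, Real.mul_rpow (by positivity) (by positivity), Real.inv_rpow (by positivity),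
    ← Real.rpow_neg (by positivity), ← Real.rpow_natCast π 2, ← Real.rpow_mul pi_pos.le]
  congr 1
  rw [← Real.rpow_natCast π d]
  congr 1
  push_cast
  ring

lemma aux_main_s15 (d : ℕ) (hd : 1 ≤ d) (ε : ℝ)
    (hε1 : (d : ℝ) / 2 < ε) (hε2 : ε < (d : ℝ)) :
    ∫⁻ z : EuclideanSpace ℝ (Fin d) × EuclideanSpace ℝ (Fin d),
      ENNReal.ofReal ((1 + ‖z.1‖ ^ 2) ^ (-ε) * (1 + ‖z.2‖ ^ 2) ^ (-ε)
        * ‖z.1 - z.2‖ ^ (ε - (d : ℝ)))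
      = ENNReal.ofReal (π ^ d * Real.Gamma (ε / 2) ^ 3 * Real.Gamma ((3 * ε - d) / 2) /
          (Real.Gamma ((d : ℝ) / 2) * Real.Gamma ε ^ 3)) := by
  have hd0 : (0:ℝ) < d := by exact_mod_cast hd
  have hε : 0 < ε := by linarith
  set a : ℝ := (d - ε) / 2 with ha_def
  have ha : 0 < a := by rw [ha_def]; linarith
  have hΓa := Real.Gamma_pos_of_pos ha
  have hΓε := Real.Gamma_pos_of_pos hε
  have hΓd := Real.Gamma_pos_of_pos (half_pos hd0)
  have : Nonempty (Fin d) := ⟨⟨0, hd⟩⟩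
  let μ : Measure ℝ := volume.restrict (Ioi 0)
  let H : (EuclideanSpace ℝ (Fin d) × EuclideanSpace ℝ (Fin d)) → (ℝ × ℝ × ℝ) → ENNReal :=
    fun z q =>
      ENNReal.ofReal (1 / Real.Gamma ε * (q.1 ^ (ε - 1) * Real.exp (-((1 + ‖z.1‖ ^ 2) * q.1)))) *
      (ENNReal.ofReal (1 / Real.Gamma ε *
        (q.2.1 ^ (ε - 1) * Real.exp (-((1 + ‖z.2‖ ^ 2) * q.2.1)))) *
      ENNReal.ofReal (1 / Real.Gamma a *
        (q.2.2 ^ (a - 1) * Real.exp (-((‖z.1 - z.2‖ ^ 2) * q.2.2)))))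
  have hH : Measurable (Function.uncurry H) := by
    simp only [H, Function.uncurry_def]
    fun_prop
  have hdiag : ∀ᵐ z : EuclideanSpace ℝ (Fin d) × EuclideanSpace ℝ (Fin d), z.1 ≠ z.2 := by
    rw [Measure.volume_eq_prod]
    refine Measure.ae_prod_iff_ae_ae ?_ |>.2 ?_
    · exact (measurableSet_eq_fun measurable_fst measurable_snd).compl
    · refine Filter.Eventually.of_forall fun x => ?_
      filter_upwards [Measure.ae_ne volume x] with y hy
      exact hy.symm
  have step1 : ∫⁻ z : EuclideanSpace ℝ (Fin d) × EuclideanSpace ℝ (Fin d),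
      ENNReal.ofReal ((1 + ‖z.1‖ ^ 2) ^ (-ε) * (1 + ‖z.2‖ ^ 2) ^ (-ε)
        * ‖z.1 - z.2‖ ^ (ε - (d : ℝ))) = ∫⁻ z, ∫⁻ q, H z q ∂(μ.prod (μ.prod μ)) := by
    refine lintegral_congr_ae ?_
    filter_upwards [hdiag] with z hz
    have hz' : 0 < ‖z.1 - z.2‖ := norm_pos_iff.2 (sub_ne_zero.2 hz)
    simp only [H]
    rw [lintegral_prod_mul
      (f := fun s : ℝ => ENNReal.ofReal (1 / Real.Gamma ε *
        (s ^ (ε - 1) * Real.exp (-((1 + ‖z.1‖ ^ 2) * s)))))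
      (g := fun q : ℝ × ℝ => ENNReal.ofReal (1 / Real.Gamma ε *
        (q.1 ^ (ε - 1) * Real.exp (-((1 + ‖z.2‖ ^ 2) * q.1)))) *
      ENNReal.ofReal (1 / Real.Gamma a *
        (q.2 ^ (a - 1) * Real.exp (-((‖z.1 - z.2‖ ^ 2) * q.2)))))
      (Measurable.aemeasurable (by fun_prop)) (Measurable.aemeasurable (by fun_prop)),
      lintegral_prod_mul
      (f := fun s : ℝ => ENNReal.ofReal (1 / Real.Gamma ε *
        (s ^ (ε - 1) * Real.exp (-((1 + ‖z.2‖ ^ 2) * s)))))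
      (g := fun s : ℝ => ENNReal.ofReal (1 / Real.Gamma a *
        (s ^ (a - 1) * Real.exp (-((‖z.1 - z.2‖ ^ 2) * s)))))
      (Measurable.aemeasurable (by fun_prop)) (Measurable.aemeasurable (by fun_prop))]
    simp only [μ]
    rw [aux_G hε (by positivity) (by positivity), aux_G hε (by positivity) (by positivity),
      aux_G ha (by positivity) (by positivity), ← ENNReal.ofReal_mul (by positivity),
      ← ENNReal.ofReal_mul (by positivity)]
    congr 1
    rw [← Real.rpow_natCast (‖z.1 - z.2‖) 2, ← Real.rpow_mul hz'.le,
      show ((2:ℕ):ℝ) * -a = ε - d by rw [ha_def]; push_cast; ring]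
    field_simp
  have hK : Measurable (fun q => ∫⁻ z, H z q) := hH.lintegral_prod_left'
  rw [step1, lintegral_lintegral_swap hH.aemeasurable, lintegral_prod _ hK.aemeasurable]
  have step2 : ∀ s ∈ Ioi (0:ℝ), ∫⁻ q : ℝ × ℝ, (∫⁻ z, H z (s, q)) ∂(μ.prod μ)
      = ∫⁻ t in Ioi (0:ℝ), ENNReal.ofReal
        ((π ^ d / Real.Gamma ε ^ 2 * (Real.Gamma (ε / 2) / Real.Gamma ((d:ℝ) / 2))) *
        (s ^ (ε / 2 - 1) * t ^ (ε / 2 - 1) * (s + t) ^ (-a) * Real.exp (-(s + t)))) := by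
    intro s hs
    have hs : 0 < s := hs
    have hK2 : Measurable (fun q : ℝ × ℝ => ∫⁻ z, H z (s, q)) :=
      hK.comp (measurable_const.prodMk measurable_id)
    rw [lintegral_prod _ hK2.aemeasurable]
    refine setLIntegral_congr_fun measurableSet_Ioi ?_
    intro t ht
    have ht : 0 < t := ht
    have h3 : ∀ u ∈ Ioi (0:ℝ), ∫⁻ z, H z (s, t, u)
        = ENNReal.ofReal ((s ^ (ε - 1) * t ^ (ε - 1) * Real.exp (-(s + t)) * π ^ d /
            (Real.Gamma ε ^ 2 * Real.Gamma a)) *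
            (u ^ (a - 1) * (s * t + u * (s + t)) ^ (-((d:ℝ) / 2)))) := by
      intro u hu
      have hu : 0 < u := hu
      have e : ∀ z, H z (s, t, u) = ENNReal.ofReal (s ^ (ε - 1) * t ^ (ε - 1) *
          Real.exp (-(s + t)) / (Real.Gamma ε ^ 2 * Real.Gamma a) * u ^ (a - 1)) *
          ENNReal.ofReal (Real.exp
            (-(s * ‖z.1‖ ^ 2 + t * ‖z.2‖ ^ 2 + u * ‖z.1 - z.2‖ ^ 2))) := by
        intro z
        simp only [H]
        rw [← ENNReal.ofReal_mul (by positivity), ← ENNReal.ofReal_mul (by positivity),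
          ← ENNReal.ofReal_mul (by positivity)]
        congr 1
        have : Real.exp (-((1 + ‖z.1‖ ^ 2) * s)) * Real.exp (-((1 + ‖z.2‖ ^ 2) * t)) *
            Real.exp (-((‖z.1 - z.2‖ ^ 2) * u)) = Real.exp (-(s + t)) * Real.exp
            (-(s * ‖z.1‖ ^ 2 + t * ‖z.2‖ ^ 2 + u * ‖z.1 - z.2‖ ^ 2)) := by
          rw [← Real.exp_add, ← Real.exp_add, ← Real.exp_add]; congr 1; ring
        linear_combination (s ^ (ε - 1) * t ^ (ε - 1) * u ^ (a - 1) /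
          (Real.Gamma ε ^ 2 * Real.Gamma a)) * this
      simp_rw [e]
      rw [lintegral_const_mul _ (by fun_prop), aux_gauss2 hs ht hu,
        ← ENNReal.ofReal_mul (by positivity)]
      congr 1
      ring
    simp only [μ]
    rw [setLIntegral_congr_fun measurableSet_Ioi h3, aux_B ha (by rw [ha_def]; linarith)
      (by positivity) (by positivity) (by positivity)]
    congr 1
    rw [show (d:ℝ) / 2 - a = ε / 2 by rw [ha_def]; ring,
      Real.mul_rpow hs.le ht.le, show ε - 1 = (ε / 2 - 1) + ε / 2 by ring,
      Real.rpow_add hs, Real.rpow_add ht, Real.rpow_neg hs.le, Real.rpow_neg ht.le]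
    have := rpow_pos_of_pos hs (ε / 2)
    have := rpow_pos_of_pos ht (ε / 2)
    field_simp
  simp only [μ] at step2 ⊢
  rw [setLIntegral_congr_fun measurableSet_Ioi step2, aux_C (half_pos hε) ha (by linarith)
    (by have := Real.Gamma_pos_of_pos (half_pos hε); positivity)]
  congr 1
  rw [show 2 * (ε / 2) - a = (3 * ε - d) / 2 by rw [ha_def]; ring,
    show 2 * (ε / 2) = ε by ring]
  field_simp

theorem regularized_CPW_trace_inverted (d : ℕ) (hd : 1 ≤ d) (ε : ℝ)
    (hε1 : (d : ℝ) / 2 < ε) (hε2 : ε < (d : ℝ)) :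
    MeasureTheory.Integrable
      (fun p : EuclideanSpace ℝ (Fin d) × EuclideanSpace ℝ (Fin d) =>
        (1 + ‖p.1‖ ^ 2) ^ (-ε) * (1 + ‖p.2‖ ^ 2) ^ (-ε) * ‖p.1 - p.2‖ ^ (ε - (d : ℝ))) ∧
    ∫ x : EuclideanSpace ℝ (Fin d), ∫ y : EuclideanSpace ℝ (Fin d),
        (1 + ‖x‖ ^ 2) ^ (-ε) * (1 + ‖y‖ ^ 2) ^ (-ε) * ‖x - y‖ ^ (ε - (d : ℝ))
      = π ^ d * Real.Gamma (ε / 2) ^ 3 * Real.Gamma ((3 * ε - d) / 2) /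
          (Real.Gamma ((d : ℝ) / 2) * Real.Gamma ε ^ 3) := by
  have hd0 : (0:ℝ) < d := by exact_mod_cast hd
  have hε : 0 < ε := by linarith
  have hmain := aux_main_s15 d hd ε hε1 hε2
  have hmeas : Measurable (fun p : EuclideanSpace ℝ (Fin d) × EuclideanSpace ℝ (Fin d) =>
        (1 + ‖p.1‖ ^ 2) ^ (-ε) * (1 + ‖p.2‖ ^ 2) ^ (-ε) * ‖p.1 - p.2‖ ^ (ε - (d : ℝ))) := by
    fun_prop
  have hnn : ∀ p : EuclideanSpace ℝ (Fin d) × EuclideanSpace ℝ (Fin d),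
        0 ≤ (1 + ‖p.1‖ ^ 2) ^ (-ε) * (1 + ‖p.2‖ ^ 2) ^ (-ε) * ‖p.1 - p.2‖ ^ (ε - (d : ℝ)) := by
    intro p; positivity
  have hint : MeasureTheory.Integrable
      (fun p : EuclideanSpace ℝ (Fin d) × EuclideanSpace ℝ (Fin d) =>
        (1 + ‖p.1‖ ^ 2) ^ (-ε) * (1 + ‖p.2‖ ^ 2) ^ (-ε) * ‖p.1 - p.2‖ ^ (ε - (d : ℝ))) := by
    refine ⟨hmeas.aestronglyMeasurable, ?_⟩
    rw [hasFiniteIntegral_iff_ofReal (Filter.Eventually.of_forall hnn), hmain]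
    exact ENNReal.ofReal_lt_top
  refine ⟨hint, ?_⟩
  have h1 := integral_prod _ hint
  refine h1.symm.trans ?_
  rw [← Measure.volume_eq_prod, integral_eq_lintegral_of_nonneg_ae
    (Filter.Eventually.of_forall hnn) hmeas.aestronglyMeasurable, hmain, ENNReal.toReal_ofReal]
  have h2 := Real.Gamma_pos_of_pos (half_pos hε)
  have h3 := Real.Gamma_pos_of_pos hε
  have h4 := Real.Gamma_pos_of_pos (half_pos hd0)
  have h5 : 0 < Real.Gamma ((3 * ε - d) / 2) := Real.Gamma_pos_of_pos (by linarith)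
  positivity
end

section
/- Let E ≥ 1 be a natural number and let a₁, …, a_E be real numbers such that every partial sum S_i := a₁ + ⋯ + a_i is strictly positive (i = 1, …, E). Then the function α ↦ ∏_{i=1}^{E} α_i^{a_i − 1} is Lebesgue integrable on the ordered simplex {α ∈ ℝ^E : 0 ≤ α₁ ≤ α₂ ≤ ⋯ ≤ α_E ≤ 1} and ∫_{0 ≤ α₁ ≤ ⋯ ≤ α_E ≤ 1} ∏_{i=1}^{E} α_i^{a_i − 1} dα = ∏_{i=1}^{E} 1/S_i. (This is the Hepp-sector evaluation of Schwinger-parametric integrals underlying the power counting of Feynman amplitudes.) -/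
open MeasureTheory

def heppSet (n : ℕ) (t : ℝ) : Set (Fin n → ℝ) :=
  {α : Fin n → ℝ | Monotone α ∧ ∀ i, α i ∈ Set.Icc (0 : ℝ) t}

lemma heppSet_measurable (n : ℕ) (t : ℝ) : MeasurableSet (heppSet n t) := by
  apply IsClosed.measurableSet
  have : heppSet n t = (⋂ (i : Fin n) (j : Fin n) (_ : i ≤ j), {α | α i ≤ α j}) ∩
      ⋂ i, {α | α i ∈ Set.Icc (0 : ℝ) t} := by
    ext α
    simp [heppSet, Monotone]
  rw [this]
  refine IsClosed.inter ?_ ?_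
  · refine isClosed_iInter fun i => isClosed_iInter fun j => isClosed_iInter fun _ => ?_
    exact isClosed_le (continuous_apply i) (continuous_apply j)
  · exact isClosed_iInter fun i => isClosed_Icc.preimage (continuous_apply i)

lemma hepp_fun_measurable (n : ℕ) (a : Fin n → ℝ) :
    Measurable (fun α : Fin n → ℝ => ∏ i, α i ^ (a i - 1)) := by
  fun_prop

lemma heppSet_snoc (n : ℕ) (t x : ℝ) (β : Fin n → ℝ) :
    (Fin.snoc β x : Fin (n + 1) → ℝ) ∈ heppSet (n + 1) t ↔
      x ∈ Set.Icc 0 t ∧ β ∈ heppSet n x := by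
  simp only [heppSet, Set.mem_setOf_eq, Set.mem_Icc]
  constructor
  · rintro ⟨hm, hb⟩
    have hl := hb (Fin.last n)
    simp only [Fin.snoc_last] at hl
    refine ⟨hl, fun i j hij => ?_, fun i => ⟨?_, ?_⟩⟩
    · have := hm (Fin.castSucc_le_castSucc_iff.2 hij)
      simpa only [Fin.snoc_castSucc] using this
    · have := (hb i.castSucc).1
      simpa only [Fin.snoc_castSucc] using this
    · have := hm (Fin.le_last i.castSucc)
      simpa only [Fin.snoc_castSucc, Fin.snoc_last] using this
  · rintro ⟨hx, hm, hb⟩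
    constructor
    · intro i j
      refine Fin.lastCases ?_ (fun i => ?_) i <;> refine Fin.lastCases ?_ (fun j => ?_) j
      · simp
      · intro h
        exact absurd h (not_le.2 (Fin.castSucc_lt_last j))
      · intro _
        simpa only [Fin.snoc_castSucc, Fin.snoc_last] using (hb i).2
      · intro h
        simpa only [Fin.snoc_castSucc] using hm (Fin.castSucc_le_castSucc_iff.1 h)
    · intro i
      refine Fin.lastCases ?_ (fun i => ?_) i
      · simpa only [Fin.snoc_last] using hx
      · simpa only [Fin.snoc_castSucc] using ⟨(hb i).1, (hb i).2.trans hx.2⟩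

lemma sum_Iic_castSucc (n : ℕ) (a : Fin (n + 1) → ℝ) (i : Fin n) :
    ∑ j ∈ Finset.Iic i.castSucc, a j = ∑ j ∈ Finset.Iic i, a j.castSucc := by
  rw [← Fin.map_castSuccEmb_Iic, Finset.sum_map]
  rfl

lemma sum_Iic_last (n : ℕ) (a : Fin (n + 1) → ℝ) :
    ∑ j ∈ Finset.Iic (Fin.last n), a j = ∑ j, a j := by
  congr 1
  ext j
  simp [Fin.le_last]

lemma hepp_pow (s t : ℝ) (hs : 0 < s) (ht : 0 < t) :
    ∫⁻ x in Set.Ioc 0 t, ENNReal.ofReal (x ^ (s - 1)) = ENNReal.ofReal (t ^ s / s) := by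
  have hi : IntervalIntegrable (fun x : ℝ => x ^ (s - 1)) volume 0 t :=
    intervalIntegral.intervalIntegrable_rpow' (by linarith)
  rw [intervalIntegrable_iff_integrableOn_Ioc_of_le ht.le] at hi
  rw [← ofReal_integral_eq_lintegral_ofReal hi]
  · rw [← intervalIntegral.integral_of_le ht.le, integral_rpow (Or.inl (by linarith))]
    simp [Real.zero_rpow hs.ne']
  · filter_upwards [ae_restrict_mem measurableSet_Ioc] with x hx
    exact Real.rpow_nonneg hx.1.le _

lemma hepp_lintegral (n : ℕ) : ∀ (a : Fin n → ℝ)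
    (_ : ∀ i : Fin n, 0 < ∑ j ∈ Finset.Iic i, a j) (t : ℝ) (_ : 0 < t),
    ∫⁻ α in heppSet n t, ENNReal.ofReal (∏ i, α i ^ (a i - 1)) =
      ENNReal.ofReal (t ^ (∑ i, a i) * ∏ i, 1 / (∑ j ∈ Finset.Iic i, a j)) := by
  induction n with
  | zero =>
    intro a _ t ht
    have : heppSet 0 t = Set.univ := by
      ext α
      simp [heppSet, Subsingleton.monotone]
    simp [this, Measure.volume_pi_eq_dirac (0 : Fin 0 → ℝ)]
  | succ n ih =>
    intro a hS t ht
    have hS' : ∀ i : Fin n, 0 < ∑ j ∈ Finset.Iic i, a j.castSucc := fun i => by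
      rw [← sum_Iic_castSucc]; exact hS _
    have hT : 0 < ∑ j, a j := by rw [← sum_Iic_last]; exact hS _
    set C : ℝ := ∏ i : Fin n, 1 / (∑ j ∈ Finset.Iic i, a j.castSucc) with hC
    have hC0 : 0 ≤ C := Finset.prod_nonneg fun i _ => (one_div_pos.2 (hS' i)).le
    have mp := (volume_preserving_piFinSuccAbove (fun _ : Fin (n + 1) => ℝ) (Fin.last n)).symm
    have hmeas : Measurable ((heppSet (n + 1) t).indicator
        (fun α : Fin (n + 1) → ℝ => ENNReal.ofReal (∏ i, α i ^ (a i - 1)))) :=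
      (hepp_fun_measurable _ a).ennreal_ofReal.indicator (heppSet_measurable _ _)
    rw [← lintegral_indicator (heppSet_measurable _ _), ← mp.lintegral_comp hmeas]
    have key : ∀ p : ℝ × (Fin n → ℝ), (heppSet (n + 1) t).indicator
        (fun α : Fin (n + 1) → ℝ => ENNReal.ofReal (∏ i, α i ^ (a i - 1)))
        ((MeasurableEquiv.piFinSuccAbove (fun _ : Fin (n + 1) => ℝ) (Fin.last n)).symm p) =
        (Set.Icc 0 t).indicator (fun x => ENNReal.ofReal (x ^ (a (Fin.last n) - 1))) p.1 *
        (heppSet n p.1).indicator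
          (fun β => ENNReal.ofReal (∏ i, β i ^ (a i.castSucc - 1))) p.2 := by
      rintro ⟨x, β⟩
      have e : (MeasurableEquiv.piFinSuccAbove (fun _ : Fin (n + 1) => ℝ) (Fin.last n)).symm (x, β)
          = (Fin.snoc β x : Fin (n + 1) → ℝ) := by
        simp [MeasurableEquiv.piFinSuccAbove]
        rfl
      rw [e]
      by_cases hx : x ∈ Set.Icc 0 t
      · by_cases hβ : β ∈ heppSet n x
        · rw [Set.indicator_of_mem ((heppSet_snoc n t x β).2 ⟨hx, hβ⟩), Set.indicator_of_mem hx,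
            Set.indicator_of_mem hβ, ← ENNReal.ofReal_mul (Real.rpow_nonneg hx.1 _),
            Fin.prod_univ_castSucc]
          simp only [Fin.snoc_castSucc, Fin.snoc_last]
          rw [mul_comm]
        · rw [Set.indicator_of_notMem (fun h => hβ ((heppSet_snoc n t x β).1 h).2),
            Set.indicator_of_notMem (s := heppSet n x) hβ, mul_zero]
      · rw [Set.indicator_of_notMem (fun h => hx ((heppSet_snoc n t x β).1 h).1),
            Set.indicator_of_notMem (s := Set.Icc 0 t) hx, zero_mul]
    have hm2 : Measurable fun p : ℝ × (Fin n → ℝ) => (heppSet (n + 1) t).indicator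
        (fun α : Fin (n + 1) → ℝ => ENNReal.ofReal (∏ i, α i ^ (a i - 1)))
        ((MeasurableEquiv.piFinSuccAbove (fun _ : Fin (n + 1) => ℝ) (Fin.last n)).symm p) :=
      hmeas.comp (MeasurableEquiv.measurable _)
    rw [Measure.volume_eq_prod, lintegral_prod _ hm2.aemeasurable]
    simp_rw [key]
    have inner : ∀ x : ℝ, x ≠ 0 → ∫⁻ β : Fin n → ℝ,
        (Set.Icc 0 t).indicator (fun x => ENNReal.ofReal (x ^ (a (Fin.last n) - 1))) x *
        (heppSet n x).indicator
          (fun β => ENNReal.ofReal (∏ i, β i ^ (a i.castSucc - 1))) β =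
        (Set.Ioc 0 t).indicator (fun x => ENNReal.ofReal C *
          ENNReal.ofReal (x ^ ((∑ i, a i) - 1))) x := by
      intro x hx0
      rw [lintegral_const_mul _ ((hepp_fun_measurable _ _).ennreal_ofReal.indicator
        (heppSet_measurable _ _)), lintegral_indicator (heppSet_measurable _ _)]
      by_cases hx : x ∈ Set.Icc 0 t
      · have hxp : 0 < x := lt_of_le_of_ne hx.1 hx0.symm
        rw [Set.indicator_of_mem hx, Set.indicator_of_mem (show x ∈ Set.Ioc 0 t from ⟨hxp, hx.2⟩),
          ih _ hS' x hxp, ← ENNReal.ofReal_mul (Real.rpow_nonneg hx.1 _),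
          ← ENNReal.ofReal_mul hC0, ← mul_assoc, ← Real.rpow_add hxp, mul_comm,
          Fin.sum_univ_castSucc]
        congr 3
        ring
      · rw [Set.indicator_of_notMem hx, zero_mul,
          Set.indicator_of_notMem (fun h => hx ⟨h.1.le, h.2⟩)]
    rw [lintegral_congr_ae (g := (Set.Ioc 0 t).indicator (fun x => ENNReal.ofReal C *
          ENNReal.ofReal (x ^ ((∑ i, a i) - 1))))]
    · rw [lintegral_indicator measurableSet_Ioc, lintegral_const_mul _ (by fun_prop),
        hepp_pow _ _ hT ht, ← ENNReal.ofReal_mul hC0, Fin.prod_univ_castSucc, sum_Iic_last]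
      simp_rw [sum_Iic_castSucc]
      rw [← hC]
      congr 1
      ring
    · have h0 : ∀ᵐ x : ℝ, x ≠ 0 := by simp [ae_iff]
      filter_upwards [h0] with x hx
      exact inner x hx

theorem hepp_sector_integral (E : ℕ) (hE : 1 ≤ E) (a : Fin E → ℝ)
    (hS : ∀ i : Fin E, 0 < ∑ j ∈ Finset.Iic i, a j) :
    MeasureTheory.IntegrableOn (fun α : Fin E → ℝ => ∏ i, α i ^ (a i - 1))
      {α : Fin E → ℝ | Monotone α ∧ ∀ i, α i ∈ Set.Icc (0 : ℝ) 1} ∧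
    ∫ α in {α : Fin E → ℝ | Monotone α ∧ ∀ i, α i ∈ Set.Icc (0 : ℝ) 1},
        ∏ i, α i ^ (a i - 1)
      = ∏ i, 1 / (∑ j ∈ Finset.Iic i, a j) := by
  change IntegrableOn _ (heppSet E 1) ∧ ∫ α in heppSet E 1, _ = _
  have hl := hepp_lintegral E a hS 1 one_pos
  rw [Real.one_rpow, one_mul] at hl
  have hnn : 0 ≤ᵐ[volume.restrict (heppSet E 1)]
      (fun α : Fin E → ℝ => ∏ i, α i ^ (a i - 1)) := by
    filter_upwards [ae_restrict_mem (heppSet_measurable E 1)] with α hα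
    exact Finset.prod_nonneg fun i _ => Real.rpow_nonneg (hα.2 i).1 _
  have hm := (hepp_fun_measurable E a).aestronglyMeasurable (μ := volume.restrict (heppSet E 1))
  constructor
  · refine ⟨hm, ?_⟩
    rw [hasFiniteIntegral_iff_ofReal hnn, hl]
    exact ENNReal.ofReal_lt_top
  · rw [integral_eq_lintegral_of_nonneg_ae hnn hm, hl, ENNReal.toReal_ofReal]
    exact Finset.prod_nonneg fun i _ => (one_div_pos.2 (hS i)).le
end
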